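/- If the Riemann Hypothesis is true, then for every k ≥ 1 the k-th primorial N_k = p_1 p_2 ⋯ p_k satisfies N_k / φ(N_k) > e^γ · log(log N_k). -/

import Mathlib

/-!
Put `p_k = x`. Since `N / φ(N) = ∏ (1 - 1/p)⁻¹` and `log N = θ(x)`, the claim is, after taking
logarithms, that `-∑_{p ≤ x} log (1 - 1/p) > γ + log log θ(x)`. As in Nicolas' argument, the point
is a bound under the Riemann Hypothesis for the tail `∫_x^∞ (ψ(t) - t) / t² dt` by a small multiple
of `1 / √x`, to be compared with `ψ(x) - θ(x)`, which is about `√x`. Classically the bound comes from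
the explicit formula and the value of `∑ 1 / |ρ|²` over the zeros; here it is obtained without the
Hadamard product and without any sum over zeros, from positivity.

*Positivity.* Under RH the quotient `ξ(s) / ξ(s + 2a)` is holomorphic in `Re s ≥ 1/2 - a`, and by the
functional equation it has modulus one on the boundary line. Lower bounds for `|ξ|` and the
Phragmén–Lindelöf principle give `|ξ(s)| ≤ |ξ(s + 2a)|` (`xi_shift_le`), hence `Re (ξ'/ξ) ≥ 0` to the
right of the critical line (`xi_logDeriv_re_nonneg`).

*The tail.* A holomorphic function with nonnegative real part on a half plane is, up to explicit
factors, the Laplace transform of a function `G` with `|G| ≤ G(0)` (`schwarz_transform`). For `ξ'/ξ`,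
uniqueness of Mellin transforms (`mellin_unique`) identifies `G` with an integral of `ψ(t) - t`, and
`|G| ≤ G(0)` becomes `psiW_bound`. Its limiting case `b → 1` bounds the tail by `2β / √x` up to a term
`log 2π / x`, where `β = (ξ'/ξ)(1) = 1 + (γ - log 4π) / 2` (`tailI_bounds`); numerically `4β < 0.28`.

*Mertens' theorem.* Partial summation turns this into a bound for the error in
`∑_{n ≤ x} Λ(n) / (n log n) = γ + log log x + (ψ(x) - x) / (x log x) + …` (`mertA_lower`). The constant
is `γ` by an Abelian argument with `log ζ(1 + d) + log d → 0` and `Γ'(1) = -γ` (`mertA_limit`).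

*Conclusion.* The sum over `n ≤ x` is at most `-∑_{p ≤ x} log (1 - 1/p)` (`mertA_le`). Split
`ψ(x) - x` as `(ψ - θ) + (θ - x)`: by concavity of the logarithm, `log log x` together with
`(θ(x) - x) / (x log x)` is at least `log log θ(x)` (`loglog_theta_lt`), while
`ψ(x) - θ(x) ≥ ψ(√x) + ψ(x^(1/3))` outweighs the error as soon as `x ≥ 29` (`psi_sub_theta_large`).
The nine primorials with `p_k < 29` are checked numerically (`small_bound`).
-/

/-- `primorialOfFirstPrimes k = p₁ p₂ ⋯ p_k`, the product of the first `k` primes. -/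
noncomputable def primorialOfFirstPrimes (k : ℕ) : ℕ := ∏ i ∈ Finset.range k, Nat.nth Nat.Prime i

open Real Set Filter Topology MeasureTheory

/-! ### Uniqueness for Mellin transforms -/

/-- A continuous function of polynomial growth on `(1, ∞)` whose Mellin transform vanishes at all
large real arguments is zero. The transform is analytic on a half plane, so it vanishes there
identically, and Mellin inversion recovers the function. -/
theorem mellin_unique {D : ℝ → ℝ} (hcont : ContinuousOn D (Ioi 1)) {c K s₀ : ℝ}
    (hb : ∀ x, 1 < x → |D x| ≤ K * x ^ c)
    (h : ∀ s, s₀ < s → ∫ x in Ioi (1:ℝ), D x * x ^ (-s - 1) = 0) :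
    ∀ x, 1 < x → D x = 0 := by
  -- Extended by `0` to `(0, 1]`, the function falls under Mathlib's Mellin inversion on `(0, ∞)`;
  -- the transform `∫ D x * x ^ (-s - 1)` is then `mellin f (-s)`.
  set f : ℝ → ℂ := (Ioi (1:ℝ)).indicator (fun x => (D x : ℂ)) with hf
  have hDmeas : AEStronglyMeasurable (fun x => (D x : ℂ)) (volume.restrict (Ioi 1)) :=
    (Complex.continuous_ofReal.comp_continuousOn hcont).aestronglyMeasurable measurableSet_Ioi
  have hfmeas : AEStronglyMeasurable f volume :=
    (aestronglyMeasurable_indicator_iff measurableSet_Ioi).2 hDmeas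
  have hfb : ∀ x, 0 < x → ‖f x‖ ≤ |K| * x ^ c := by
    intro x hx
    by_cases h1 : 1 < x
    · rw [hf, indicator_of_mem (by exact h1), Complex.norm_real, Real.norm_eq_abs]
      exact (hb x h1).trans (mul_le_mul_of_nonneg_right (le_abs_self K) (by positivity))
    · rw [hf, indicator_of_notMem (by simpa using h1), norm_zero]; positivity
  have hloc : LocallyIntegrableOn f (Ioi 0) volume := by
    have hg : LocallyIntegrableOn (fun x : ℝ => |K| * x ^ c) (Ioi 0) volume := by
      apply ContinuousOn.locallyIntegrableOn _ measurableSet_Ioi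
      intro x hx
      exact ((Real.continuousAt_rpow_const x c (Or.inl (ne_of_gt hx))).const_mul _).continuousWithinAt
    intro x hx
    obtain ⟨s, hs, hi⟩ := hg x hx
    refine ⟨s ∩ Ioi 0, inter_mem hs self_mem_nhdsWithin, ?_⟩
    refine Integrable.mono (hi.mono_set inter_subset_left) hfmeas.restrict ?_
    have : ∀ᵐ y ∂(volume.restrict (s ∩ Ioi 0)), y ∈ Ioi (0:ℝ) := by
      refine ae_mono (Measure.restrict_mono inter_subset_right le_rfl) ?_
      exact ae_restrict_mem measurableSet_Ioi
    filter_upwards [this] with y hy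
    exact (hfb y hy).trans (le_abs_self _)
  have htop : f =O[atTop] fun x : ℝ => x ^ (-(-c)) := by
    refine Asymptotics.IsBigO.of_bound |K| ?_
    filter_upwards [eventually_gt_atTop 0] with x hx
    rw [neg_neg, Real.norm_of_nonneg (by positivity)]
    exact hfb x hx
  have hzero : ∀ b : ℝ, f =O[𝓝[>] 0] fun x : ℝ => x ^ (-b) := by
    intro b
    refine Asymptotics.IsBigO.of_bound 1 ?_
    have : ∀ᶠ x : ℝ in 𝓝[>] 0, x < 1 := nhdsWithin_le_nhds (Iio_mem_nhds one_pos)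
    filter_upwards [this] with x hx
    rw [hf, indicator_of_notMem (by simpa using hx.le), norm_zero]; positivity
  have hdiff : ∀ w : ℂ, w.re < -c → DifferentiableAt ℂ (mellin f) w := fun w hw =>
    mellin_differentiableAt_of_isBigO_rpow hloc htop hw (hzero (w.re - 1)) (by linarith)
  set U : Set ℂ := {w | w.re < -c} with hU
  have hUo : IsOpen U := isOpen_lt Complex.continuous_re continuous_const
  have hmz : ∀ s : ℝ, s₀ < s → mellin f (-(s:ℂ)) = 0 := by
    intro s hs
    rw [mellin]
    have h1 : ∫ t in Ioi (0:ℝ), (t:ℂ) ^ (-(s:ℂ) - 1) • f t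
        = ∫ t in Ioi (0:ℝ), (Ioi (1:ℝ)).indicator (fun t => ((D t * t ^ (-s-1) : ℝ):ℂ)) t := by
      refine setIntegral_congr_fun measurableSet_Ioi fun t ht => ?_
      by_cases h1 : 1 < t
      · have : t ∈ Ioi (1:ℝ) := h1
        simp only [hf, indicator_of_mem this, smul_eq_mul]
        push_cast
        rw [Complex.ofReal_cpow (le_of_lt ht)]
        push_cast; ring
      · have : t ∉ Ioi (1:ℝ) := by simpa using h1
        simp [hf, indicator_of_notMem this]
    rw [h1, setIntegral_indicator measurableSet_Ioi]
    have : Ioi (0:ℝ) ∩ Ioi 1 = Ioi 1 := by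
      rw [Ioi_inter_Ioi]; simp
    rw [this, integral_complex_ofReal, h s hs]; simp
  have hEq : EqOn (mellin f) 0 U := by
    set m : ℝ := max s₀ c + 1 with hm
    have hmU : ((-m : ℝ):ℂ) ∈ U := by
      simp only [hU, mem_ofPred_eq, Complex.ofReal_re]
      have := le_max_right s₀ c; linarith
    refine AnalyticOnNhd.eqOn_of_preconnected_of_frequently_eq (z₀ := ((-m:ℝ):ℂ)) ?_ ?_ ?_ hmU ?_
    · exact DifferentiableOn.analyticOnNhd (fun w hw => (hdiff w hw).differentiableWithinAt) hUo
    · exact analyticOnNhd_const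
    · exact (convex_halfSpace_re_lt _).isPreconnected
    · have ht : Tendsto (fun r : ℝ => ((r:ℝ):ℂ)) (𝓝[<] (-m)) (𝓝[≠] ((-m:ℝ):ℂ)) := by
        refine tendsto_nhdsWithin_iff.2 ⟨?_, ?_⟩
        · exact (Complex.continuous_ofReal.tendsto _).mono_left nhdsWithin_le_nhds
        · filter_upwards [self_mem_nhdsWithin] with r hr
          simp only [mem_compl_iff, mem_singleton_iff, Complex.ofReal_inj]
          exact ne_of_lt hr
      refine ht.frequently (Eventually.frequently ?_)
      filter_upwards [self_mem_nhdsWithin] with r hr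
      have := hmz (-r) (by have := le_max_left s₀ c; have : r < -m := hr; linarith)
      simpa using this
  intro x hx
  set σ : ℝ := -c - 1
  have hvan : ∀ y : ℝ, mellin f (σ + y * Complex.I) = 0 := fun y => by
    have : ((σ : ℂ) + y * Complex.I) ∈ U := by simp [hU, σ]
    exact hEq this
  have hinv := mellinInv_mellin_eq σ f (x := x) (by linarith)
    (mellinConvergent_of_isBigO_rpow hloc htop (by simp [σ]) (hzero (σ - 1)) (by simp))
    (by simp only [Complex.VerticalIntegrable, hvan]; exact integrable_zero _ _ _)
    (by
      have h1 : ContinuousAt (fun x => (D x : ℂ)) x :=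
        (Complex.continuous_ofReal.comp_continuousOn hcont).continuousAt (Ioi_mem_nhds hx)
      refine h1.congr ?_
      filter_upwards [Ioi_mem_nhds hx] with y hy
      rw [hf, indicator_of_mem hy])
  have h0 : mellinInv σ (mellin f) x = 0 := by
    simp [mellinInv, hvan]
  rw [h0, hf, indicator_of_mem (by exact hx)] at hinv
  exact_mod_cast hinv.symm

/-! ### Holomorphic functions with nonnegative real part on a half plane -/

/-- A holomorphic function with nonnegative real part on the right half plane grows at most
quadratically along the half planes `Re w ≥ δ > 0`: transport the Borel–Carathéodory inequality
from the unit disc by the Cayley transform. -/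
theorem herglotz_growth {Q : ℂ → ℂ} (hQ : DifferentiableOn ℂ Q {w | 0 < w.re})
    (hpos : ∀ w : ℂ, 0 < w.re → 0 ≤ (Q w).re) {w : ℂ} (hw : 0 < w.re) :
    ‖Q w‖ ≤ ‖Q 1‖ * (‖w‖ + 1) ^ 2 / w.re := by
  set c : ℂ → ℂ := fun ζ => (1 + ζ) / (1 - ζ) with hc
  have hne : ∀ ζ ∈ Metric.ball (0:ℂ) 1, (1:ℂ) - ζ ≠ 0 := by
    intro ζ hζ h
    have : ζ = 1 := (sub_eq_zero.1 h).symm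
    simp [this] at hζ
  have hcre : ∀ ζ ∈ Metric.ball (0:ℂ) 1, 0 < (c ζ).re := by
    intro ζ hζ
    have h1 := hne ζ hζ
    have h2 : 0 < Complex.normSq (1 - ζ) := Complex.normSq_pos.2 h1
    have h3 : Complex.normSq ζ < 1 := by
      rw [mem_ball_zero_iff] at hζ
      rw [Complex.normSq_eq_norm_sq]; nlinarith [norm_nonneg ζ]
    rw [hc]; simp only
    rw [Complex.div_re, ← add_div]
    apply div_pos _ h2
    simp [Complex.normSq_apply] at h3 ⊢
    nlinarith
  set ζ : ℂ := (w - 1) / (w + 1) with hζ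
  have hw1 : w + 1 ≠ 0 := by
    intro h
    have := congrArg Complex.re h
    simp at this; linarith
  have hA : 0 < ‖w + 1‖ := norm_pos_iff.2 hw1
  have hAB : ‖w + 1‖ ^ 2 - ‖w - 1‖ ^ 2 = 4 * w.re := by
    rw [← Complex.normSq_eq_norm_sq, ← Complex.normSq_eq_norm_sq]
    simp [Complex.normSq_apply]; ring
  have hlt : ‖w - 1‖ < ‖w + 1‖ := by
    nlinarith [norm_nonneg (w - 1)]
  have hζn : ‖ζ‖ = ‖w - 1‖ / ‖w + 1‖ := norm_div _ _
  have hζ1 : ‖ζ‖ < 1 := by rw [hζn, div_lt_one hA]; exact hlt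
  have hcw : c ζ = w := by
    simp only [hc, hζ]; field_simp; ring
  -- `-Q ∘ c` has real part at most `0`, hence less than every `M > 0`; afterwards `M → 0`.
  have key : ∀ M : ℝ, 0 < M → ‖Q w‖ ≤ 2 * M * ‖ζ‖ / (1 - ‖ζ‖) + ‖Q 1‖ * (1 + ‖ζ‖) / (1 - ‖ζ‖) := by
    intro M hM
    have := Complex.borelCaratheodory (f := fun ζ => - Q (c ζ)) (M := M) (R := 1) (z := ζ) hM ?_ ?_
      one_pos (by simpa using hζ1)
    · have hc0 : c 0 = 1 := by simp [hc]
      simpa only [norm_neg, hcw, hc0] using this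
    · refine (hQ.comp ?_ hcre).neg
      intro x hx
      exact (((differentiableAt_const _).add differentiableAt_id).div
        ((differentiableAt_const _).sub differentiableAt_id) (hne x hx)).differentiableWithinAt
    · intro x hx
      have := hpos _ (hcre x hx)
      simp only [mem_ofPred_eq, Complex.neg_re]; linarith
  have key2 : ‖Q w‖ ≤ ‖Q 1‖ * (1 + ‖ζ‖) / (1 - ‖ζ‖) := by
    have ht : Tendsto (fun M : ℝ => 2 * M * ‖ζ‖ / (1 - ‖ζ‖) + ‖Q 1‖ * (1 + ‖ζ‖) / (1 - ‖ζ‖))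
        (𝓝[>] 0) (𝓝 (2 * 0 * ‖ζ‖ / (1 - ‖ζ‖) + ‖Q 1‖ * (1 + ‖ζ‖) / (1 - ‖ζ‖))) := by
      apply Tendsto.mono_left _ nhdsWithin_le_nhds
      exact Continuous.tendsto (by fun_prop) 0
    have := ge_of_tendsto ht (by filter_upwards [self_mem_nhdsWithin] with M hM using key M hM)
    simpa using this
  refine key2.trans ?_
  rw [mul_div_assoc, mul_div_assoc]
  apply mul_le_mul_of_nonneg_left _ (norm_nonneg _)
  have e : (1 + ‖ζ‖) / (1 - ‖ζ‖) = (‖w + 1‖ + ‖w - 1‖) ^ 2 / (4 * w.re) := by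
    rw [← hAB, hζn]
    have : ‖w + 1‖ - ‖w - 1‖ ≠ 0 := by linarith
    have : ‖w + 1‖ + ‖w - 1‖ ≠ 0 := by positivity
    have h5 : ‖w + 1‖ ^ 2 - ‖w - 1‖ ^ 2 = (‖w + 1‖ - ‖w - 1‖) * (‖w + 1‖ + ‖w - 1‖) := by ring
    rw [h5]
    field_simp
  rw [e, div_le_div_iff₀ (by positivity) hw]
  have h1 : ‖w + 1‖ ≤ ‖w‖ + 1 := by simpa using norm_add_le w 1
  have h2 : ‖w - 1‖ ≤ ‖w‖ + 1 := by simpa using norm_sub_le w 1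
  have h3 : (‖w + 1‖ + ‖w - 1‖) ^ 2 ≤ (2 * (‖w‖ + 1)) ^ 2 := by
    apply pow_le_pow_left₀ (by positivity); linarith
  nlinarith

theorem integrable_inv_add_sq {a : ℝ} (ha : 0 < a) : Integrable fun t : ℝ => (a ^ 2 + t ^ 2)⁻¹ := by
  have h := (integrable_inv_one_add_sq.comp_mul_left' (R := a⁻¹) (by positivity)).const_mul (a ^ 2)⁻¹
  refine h.congr (ae_of_all _ fun t => ?_)
  simp only
  rw [← mul_inv]; congr 1; field_simp

theorem integral_inv_add_sq {a : ℝ} (ha : 0 < a) : ∫ t : ℝ, (a ^ 2 + t ^ 2)⁻¹ = π / a := by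
  have h := Measure.integral_comp_mul_left (fun t : ℝ => (1 + t ^ 2)⁻¹) a⁻¹
  rw [integral_univ_inv_one_add_sq, inv_inv, abs_of_pos ha] at h
  have : ∀ t : ℝ, (a ^ 2 + t ^ 2)⁻¹ = (a ^ 2)⁻¹ * (1 + (a⁻¹ * t) ^ 2)⁻¹ := by
    intro t
    rw [← mul_inv]; congr 1; field_simp
  simp_rw [this, integral_const_mul, h, smul_eq_mul]
  field_simp

theorem integrable_inv_add_sq_mul {z a : ℝ} (hz : 0 < z) (ha : 0 < a) (hza : z ≠ a) :
    Integrable (fun t : ℝ => ((z ^ 2 + t ^ 2) * (a ^ 2 + t ^ 2))⁻¹) ∧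
    ∫ t : ℝ, ((z ^ 2 + t ^ 2) * (a ^ 2 + t ^ 2))⁻¹ = π / (z * a * (z + a)) := by
  have hne : a ^ 2 - z ^ 2 ≠ 0 := by
    intro h
    have : (a - z) * (a + z) = 0 := by linarith
    rcases mul_eq_zero.1 this with h | h
    · exact hza (by linarith)
    · linarith
  have e : ∀ t : ℝ, ((z ^ 2 + t ^ 2) * (a ^ 2 + t ^ 2))⁻¹
      = (a ^ 2 - z ^ 2)⁻¹ * ((z ^ 2 + t ^ 2)⁻¹ - (a ^ 2 + t ^ 2)⁻¹) := by
    intro t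
    have h1 : z ^ 2 + t ^ 2 ≠ 0 := by positivity
    have h2 : a ^ 2 + t ^ 2 ≠ 0 := by positivity
    field_simp
    ring
  simp_rw [e]
  refine ⟨((integrable_inv_add_sq hz).sub (integrable_inv_add_sq ha)).const_mul _, ?_⟩
  rw [integral_const_mul, integral_sub (integrable_inv_add_sq hz) (integrable_inv_add_sq ha),
    integral_inv_add_sq hz, integral_inv_add_sq ha]
  have h3 : a ^ 2 - z ^ 2 = (a - z) * (a + z) := by ring
  have h4 : a - z ≠ 0 := sub_ne_zero.2 (Ne.symm hza)
  rw [h3]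
  field_simp
  ring

/-- Cauchy's theorem for the right half plane: a function holomorphic up to the imaginary axis and
`O(‖w‖⁻²)` at infinity has integral `0` along that axis. -/
theorem halfplane_cauchy {K : ℂ → ℂ} (hK : DifferentiableOn ℂ K {w | 0 ≤ w.re}) {C R₀ : ℝ}
    (hb : ∀ w : ℂ, 0 ≤ w.re → R₀ ≤ ‖w‖ → ‖K w‖ ≤ C / ‖w‖ ^ 2)
    (hi : Integrable fun t : ℝ => K (t * Complex.I)) :
    ∫ t : ℝ, K (t * Complex.I) = 0 := by
  have ht := intervalIntegral_tendsto_integral hi tendsto_neg_atTop_atBot tendsto_id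
  refine tendsto_nhds_unique ht ?_
  rw [tendsto_zero_iff_norm_tendsto_zero]
  have hlim : Tendsto (fun R : ℝ => 4 * |C| / R) atTop (𝓝 0) := tendsto_const_nhds.div_atTop tendsto_id
  refine squeeze_zero' (Eventually.of_forall fun _ => norm_nonneg _) ?_ hlim
  filter_upwards [eventually_ge_atTop (max R₀ 1)] with R hR
  have hR0 : R₀ ≤ R := (le_max_left _ _).trans hR
  have hR1 : 0 < R := lt_of_lt_of_le one_pos ((le_max_right _ _).trans hR)
  have hbd : ∀ w : ℂ, 0 ≤ w.re → R ≤ ‖w‖ → ‖K w‖ ≤ |C| / R ^ 2 := by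
    intro w h1 h2
    refine (hb w h1 (hR0.trans h2)).trans ?_
    calc C / ‖w‖ ^ 2 ≤ |C| / ‖w‖ ^ 2 := by gcongr; exact le_abs_self C
      _ ≤ |C| / R ^ 2 := by gcongr
  have hrect := Complex.integral_boundary_rect_eq_zero_of_differentiableOn K
    (⟨0, -R⟩ : ℂ) (⟨R, R⟩ : ℂ) (hK.mono (by
      intro w hw
      rw [Complex.mem_reProdIm] at hw
      have := hw.1
      simp only [uIcc_of_le hR1.le] at this
      exact this.1))
  simp only [Complex.ofReal_zero, zero_add, smul_eq_mul] at hrect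
  have e1 : ‖∫ x : ℝ in (0:ℝ)..R, K (x + ((-R : ℝ):ℂ) * Complex.I)‖ ≤ |C| / R ^ 2 * |R - 0| := by
    apply intervalIntegral.norm_integral_le_of_norm_le_const
    intro x hx
    rw [uIoc_of_le hR1.le] at hx
    apply hbd
    · simp; exact hx.1.le
    · refine le_trans ?_ (Complex.abs_im_le_norm _)
      simp [abs_of_pos hR1]
  have e2 : ‖∫ x : ℝ in (0:ℝ)..R, K (x + (R:ℂ) * Complex.I)‖ ≤ |C| / R ^ 2 * |R - 0| := by
    apply intervalIntegral.norm_integral_le_of_norm_le_const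
    intro x hx
    rw [uIoc_of_le hR1.le] at hx
    apply hbd
    · simp; exact hx.1.le
    · refine le_trans ?_ (Complex.abs_im_le_norm _)
      simp [abs_of_pos hR1]
  have e3 : ‖∫ y : ℝ in (-R)..R, K (R + y * Complex.I)‖ ≤ |C| / R ^ 2 * |R - -R| := by
    apply intervalIntegral.norm_integral_le_of_norm_le_const
    intro x hx
    apply hbd
    · simp; exact hR1.le
    · refine le_trans ?_ (Complex.abs_re_le_norm _)
      simp [abs_of_pos hR1]
  rw [sub_zero, abs_of_pos hR1] at e1 e2
  rw [sub_neg_eq_add, abs_of_pos (show (0:ℝ) < R + R by linarith)] at e3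
  have e4 : ‖Complex.I * ∫ y : ℝ in (-R)..R, K (y * Complex.I)‖ ≤ 4 * |C| / R := by
    have : Complex.I * ∫ y : ℝ in (-R)..R, K (y * Complex.I) =
       ((∫ x : ℝ in (0:ℝ)..R, K (x + ((-R : ℝ):ℂ) * Complex.I)) - ∫ x : ℝ in (0:ℝ)..R, K (x + (R:ℂ) * Complex.I))
        + Complex.I * ∫ y : ℝ in (-R)..R, K (R + y * Complex.I) := by
      linear_combination (-1 : ℂ) * hrect
    rw [this]
    refine (norm_add_le _ _).trans ?_
    rw [norm_mul, Complex.norm_I, one_mul]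
    refine (add_le_add (norm_sub_le _ _) le_rfl).trans ?_
    have : 4 * |C| / R = |C| / R ^ 2 * R + |C| / R ^ 2 * R + |C| / R ^ 2 * (R + R) := by
      field_simp; ring
    linarith
  rw [norm_mul, Complex.norm_I, one_mul] at e4
  exact e4

/-- A Schwarz formula for the half plane, with the kernel `((z² + t²) (a² + t²))⁻¹` in place of the
Poisson kernel, so that it tolerates quadratic growth of `q`. Subtract from `q` the affine function
`α + β w` that agrees with it at `z` and at `a`, divide by `(w - z) (w - a) (w + z) (w + a)`, and
apply Cauchy's theorem: on the imaginary axis the divisor is `(z² + t²) (a² + t²)`. -/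
theorem schwarz_pair {q : ℂ → ℂ} {ε C : ℝ} (hε : 0 < ε)
    (hq : DifferentiableOn ℂ q {w | -ε < w.re}) (hC : 0 ≤ C)
    (hb : ∀ w : ℂ, 0 ≤ w.re → ‖q w‖ ≤ C * (1 + ‖w‖) ^ 2)
    (hreal : ∀ x : ℝ, 0 < x → (q x).im = 0)
    {z a : ℝ} (hz : 0 < z) (ha : 0 < a) (hza : z ≠ a) :
    Integrable (fun t : ℝ => (q (t * Complex.I)).re * ((z ^ 2 + t ^ 2) * (a ^ 2 + t ^ 2))⁻¹) ∧
    ∫ t : ℝ, (q (t * Complex.I)).re * ((z ^ 2 + t ^ 2) * (a ^ 2 + t ^ 2))⁻¹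
      = (z * (q a).re - a * (q z).re) / (z - a) * (π / (z * a * (z + a))) := by
  have hne : z - a ≠ 0 := sub_ne_zero.2 hza
  have hnec : (z : ℂ) - a ≠ 0 := by exact_mod_cast hne
  set α : ℝ := (z * (q a).re - a * (q z).re) / (z - a) with hα
  set β : ℝ := ((q z).re - (q a).re) / (z - a) with hβ
  have hqz : q z = ((q z).re : ℂ) := Complex.ext (by simp) (by simp [hreal z hz])
  have hqa : q a = ((q a).re : ℂ) := Complex.ext (by simp) (by simp [hreal a ha])
  set g : ℂ → ℂ := fun w => q w - (α + β * w) with hg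
  have hgz : g z = 0 := by
    have : α + β * z = (q z).re := by rw [hα, hβ]; field_simp; ring
    simp only [hg]; rw [hqz]
    rw [← this]; push_cast; ring
  have hga : g a = 0 := by
    have : α + β * a = (q a).re := by rw [hα, hβ]; field_simp; ring
    simp only [hg]; rw [hqa]
    rw [← this]; push_cast; ring
  have hU : IsOpen {w : ℂ | -ε < w.re} := isOpen_lt continuous_const Complex.continuous_re
  have hgd : DifferentiableOn ℂ g {w | -ε < w.re} := by
    refine hq.sub (Differentiable.differentiableOn ?_)
    fun_prop
  have nz : {w : ℂ | -ε < w.re} ∈ 𝓝 (z : ℂ) := hU.mem_nhds (by simp; linarith)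
  have na : {w : ℂ | -ε < w.re} ∈ 𝓝 (a : ℂ) := hU.mem_nhds (by simp; linarith)
  have hd2 : DifferentiableOn ℂ (dslope (dslope g z) a) {w | -ε < w.re} :=
    (Complex.differentiableOn_dslope na).2 ((Complex.differentiableOn_dslope nz).2 hgd)
  -- `dslope` removes the singularities of `g w / ((w - z) * (w - a))` at `z` and `a`.
  set K : ℂ → ℂ := fun w => dslope (dslope g z) a w / ((w + z) * (w + a)) with hK
  have hpne : ∀ (b : ℝ), 0 < b → ∀ w : ℂ, 0 ≤ w.re → w + b ≠ 0 := by
    intro b hb w hw h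
    have := congrArg Complex.re h
    simp at this; linarith
  have hKd : DifferentiableOn ℂ K {w | 0 ≤ w.re} := by
    refine DifferentiableOn.div (hd2.mono fun w hw => ?_) (Differentiable.differentiableOn (by fun_prop)) ?_
    · have : (0:ℝ) ≤ w.re := hw
      show -ε < w.re
      linarith
    · intro w hw
      exact mul_ne_zero (hpne z hz w hw) (hpne a ha w hw)
  have hKe : ∀ w : ℂ, w ≠ z → w ≠ a → K w = g w / ((w - z) * (w - a) * ((w + z) * (w + a))) := by
    intro w h1 h2
    have h1' := sub_ne_zero.2 h1
    have h2' := sub_ne_zero.2 h2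
    have hza' : (a : ℂ) ≠ z := fun h => hza (by exact_mod_cast h.symm)
    simp only [hK]
    rw [dslope_of_ne _ h2, slope_def_field, dslope_of_ne _ h1, dslope_of_ne _ hza', slope_def_field,
      slope_def_field, hgz, hga]
    simp only [sub_zero, zero_div]
    rw [div_div, div_div]; congr 1; ring
  set C' : ℝ := C + |α| + |β| with hC'
  have hC'0 : 0 ≤ C' := by positivity
  have hgb : ∀ w : ℂ, 0 ≤ w.re → ‖g w‖ ≤ C' * (1 + ‖w‖) ^ 2 := by
    intro w hw
    have h1 : ‖g w‖ ≤ ‖q w‖ + (|α| + |β| * ‖w‖) := by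
      refine (norm_sub_le _ _).trans (add_le_add le_rfl ((norm_add_le _ _).trans ?_))
      rw [norm_mul, Complex.norm_real, Complex.norm_real]; rfl
    have h2 := hb w hw
    have h3 := norm_nonneg w
    have h4 := abs_nonneg α
    have h5 := abs_nonneg β
    have h6 : |α| ≤ |α| * (1 + ‖w‖) ^ 2 := by
      apply le_mul_of_one_le_right h4; nlinarith
    have h7 : |β| * ‖w‖ ≤ |β| * (1 + ‖w‖) ^ 2 := by
      apply mul_le_mul_of_nonneg_left _ h5; nlinarith
    rw [hC']; nlinarith
  have hax : ∀ t : ℝ, K (t * Complex.I) = g (t * Complex.I) * ((((z ^ 2 + t ^ 2) * (a ^ 2 + t ^ 2))⁻¹ : ℝ) : ℂ) := by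
    intro t
    rw [hKe]
    · have : ((t * Complex.I - z) * (t * Complex.I - a) * ((t * Complex.I + z) * (t * Complex.I + a)) : ℂ)
        = (((z ^ 2 + t ^ 2) * (a ^ 2 + t ^ 2) : ℝ) : ℂ) := by
        push_cast
        ring_nf
        simp only [Complex.I_sq, show Complex.I ^ 4 = 1 from Complex.I_pow_four]
        ring
      rw [this, Complex.ofReal_inv, div_eq_mul_inv]
    · intro h; have := congrArg Complex.re h; simp at this; linarith
    · intro h; have := congrArg Complex.re h; simp at this; linarith
  have hcontax : Continuous fun t : ℝ => g (t * Complex.I) := by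
    have : ContinuousOn g {w | -ε < w.re} := hgd.continuousOn
    exact this.comp_continuous (by fun_prop) (fun t => by simp [hε])
  have hint : Integrable fun t : ℝ => K (t * Complex.I) := by
    have h0 := (integrable_inv_add_sq hz).const_mul (2 * C' * (1 + 1 / a ^ 2))
    refine h0.mono' ?_ (ae_of_all _ fun t => ?_)
    · simp_rw [hax]
      refine Continuous.aestronglyMeasurable (hcontax.mul (Complex.continuous_ofReal.comp ?_))
      refine Continuous.inv₀ (by fun_prop) fun t => ?_
      positivity
    · rw [hax, norm_mul, Complex.norm_real, norm_of_nonneg (by positivity)]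
      have h1 := hgb (t * Complex.I) (by simp)
      have h2 : ‖(t * Complex.I : ℂ)‖ = |t| := by simp
      rw [h2] at h1
      have h3 : (1 + |t|) ^ 2 ≤ 2 * (1 + t ^ 2) := by nlinarith [sq_abs t, sq_nonneg (1 - |t|)]
      have h4 : (1 + t ^ 2) ≤ (1 + 1 / a ^ 2) * (a ^ 2 + t ^ 2) := by
        have : (1 + 1 / a ^ 2) * (a ^ 2 + t ^ 2) = a ^ 2 + t ^ 2 + 1 + t ^ 2 / a ^ 2 := by
          field_simp
          ring
        rw [this]; have : 0 ≤ t ^ 2 / a ^ 2 := by positivity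
        nlinarith
      rw [mul_inv]
      have h5 : (0:ℝ) < a ^ 2 + t ^ 2 := by positivity
      have h6 : ‖g (t * Complex.I)‖ * (a ^ 2 + t ^ 2)⁻¹ ≤ 2 * C' * (1 + 1 / a ^ 2) := by
        rw [← div_eq_mul_inv, div_le_iff₀ h5]
        nlinarith
      calc _ = (‖g (t * Complex.I)‖ * (a ^ 2 + t ^ 2)⁻¹) * (z ^ 2 + t ^ 2)⁻¹ := by ring
        _ ≤ _ := mul_le_mul_of_nonneg_right h6 (by positivity)
  have hmain := halfplane_cauchy (K := K) hKd (C := 64 * C') (R₀ := 2 * z + 2 * a + 1) (by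
    intro w hw hR
    have hwp : 1 ≤ ‖w‖ := by linarith
    have hsub : ∀ b : ℝ, 0 < b → 2 * b ≤ ‖w‖ → ‖w‖ / 2 ≤ ‖w - b‖ ∧ ‖w‖ / 2 ≤ ‖w + b‖ := by
      intro b hb hbw
      have e : ‖(b:ℂ)‖ = b := by rw [Complex.norm_real, norm_of_nonneg hb.le]
      have h1 := norm_sub_norm_le w (b:ℂ)
      have h2 := norm_sub_norm_le w (-(b:ℂ))
      rw [norm_neg, sub_neg_eq_add] at h2
      constructor <;> linarith
    obtain ⟨z1, z2⟩ := hsub z hz (by linarith)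
    obtain ⟨a1, a2⟩ := hsub a ha (by linarith)
    have hwz : w ≠ z := by
      rintro rfl; rw [sub_self, norm_zero] at z1; linarith
    have hwa : w ≠ a := by
      rintro rfl; rw [sub_self, norm_zero] at a1; linarith
    rw [hKe w hwz hwa, norm_div, norm_mul, norm_mul, norm_mul]
    have hg1 := hgb w hw
    have hden : (‖w‖ / 2) * (‖w‖ / 2) * ((‖w‖ / 2) * (‖w‖ / 2)) ≤ ‖w - z‖ * ‖w - a‖ * (‖w + z‖ * ‖w + a‖) := by
      gcongr
    have hnum : ‖g w‖ ≤ 4 * C' * ‖w‖ ^ 2 := by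
      refine hg1.trans ?_
      have : (1 + ‖w‖) ^ 2 ≤ 4 * ‖w‖ ^ 2 := by nlinarith
      nlinarith
    calc ‖g w‖ / (‖w - z‖ * ‖w - a‖ * (‖w + z‖ * ‖w + a‖))
        ≤ (4 * C' * ‖w‖ ^ 2) / ((‖w‖ / 2) * (‖w‖ / 2) * ((‖w‖ / 2) * (‖w‖ / 2))) := by
          gcongr
      _ = 64 * C' / ‖w‖ ^ 2 := by
          have : ‖w‖ ≠ 0 := by linarith
          field_simp
          ring) hint
  have hre : ∀ t : ℝ, (K (t * Complex.I)).re
      = (q (t * Complex.I)).re * ((z ^ 2 + t ^ 2) * (a ^ 2 + t ^ 2))⁻¹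
        - α * ((z ^ 2 + t ^ 2) * (a ^ 2 + t ^ 2))⁻¹ := by
    intro t
    rw [hax, Complex.re_mul_ofReal]
    simp [hg]
    ring
  obtain ⟨i1, i2⟩ := integrable_inv_add_sq_mul hz ha hza
  have hir : Integrable fun t : ℝ => (K (t * Complex.I)).re := hint.re
  have hI : Integrable (fun t : ℝ => (q (t * Complex.I)).re * ((z ^ 2 + t ^ 2) * (a ^ 2 + t ^ 2))⁻¹) := by
    refine (hir.add (i1.const_mul α)).congr (ae_of_all _ fun t => ?_)
    simp only [Pi.add_apply]
    rw [hre]; ring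
  refine ⟨hI, ?_⟩
  have h1 : ∫ t : ℝ, (K (t * Complex.I)).re = 0 := by
    have := integral_re hint
    simp only [RCLike.re_eq_complex_re] at this
    rw [this, hmain]; simp
  simp_rw [hre] at h1
  rw [integral_sub hI (i1.const_mul α), integral_const_mul, i2] at h1
  linarith

/-- When `Re q ≥ 0`, the density `Re q(it) / (a² + t²)` is integrable: `schwarz_pair` with `z = n`
bounds its integral over `[-n, n]` uniformly in `n`, because `n² / (n² + t²) ≥ 1 / 2` there. -/
theorem schwarz_integrable {q : ℂ → ℂ} {ε C : ℝ} (hε : 0 < ε)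
    (hq : DifferentiableOn ℂ q {w | -ε < w.re}) (hC : 0 ≤ C)
    (hb : ∀ w : ℂ, 0 ≤ w.re → ‖q w‖ ≤ C * (1 + ‖w‖) ^ 2)
    (hreal : ∀ x : ℝ, 0 < x → (q x).im = 0)
    (hpos : ∀ w : ℂ, 0 ≤ w.re → 0 ≤ (q w).re)
    {a : ℝ} (ha : 0 < a) :
    Integrable (fun t : ℝ => (q (t * Complex.I)).re * (a ^ 2 + t ^ 2)⁻¹) := by
  have hcontax : Continuous fun t : ℝ => (q (t * Complex.I)).re * (a ^ 2 + t ^ 2)⁻¹ := by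
    have : ContinuousOn q {w | -ε < w.re} := hq.continuousOn
    refine Continuous.mul (Complex.continuous_re.comp
      (this.comp_continuous (by fun_prop) (fun t => by simp [hε]))) ?_
    refine Continuous.inv₀ (by fun_prop) fun t => ?_
    positivity
  have hP : ∀ t : ℝ, 0 ≤ (q (t * Complex.I)).re := fun t => hpos _ (by simp)
  have hqa : 0 ≤ (q a).re := hpos _ (by simp [ha.le])
  refine integrable_of_intervalIntegral_norm_bounded (ι := ℕ) (l := atTop) (a := fun n => -(n:ℝ)) (b := fun n => (n:ℝ))
    (4 * π * (q a).re / a)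
    (fun n => (hcontax.integrableOn_Icc).mono_set Ioc_subset_Icc_self)
    (tendsto_neg_atTop_atBot.comp tendsto_natCast_atTop_atTop) tendsto_natCast_atTop_atTop ?_
  filter_upwards [eventually_ge_atTop (⌈2 * a⌉₊ + 1)] with n hn
  have hn1 : 2 * a < n := by
    have := Nat.le_ceil (2 * a)
    have h2 : ((⌈2 * a⌉₊ + 1 : ℕ) : ℝ) ≤ n := by exact_mod_cast hn
    push_cast at h2; linarith
  have hn0 : (0:ℝ) < n := by linarith
  obtain ⟨h1, h2⟩ := schwarz_pair hε hq hC hb hreal hn0 ha (by linarith : (n:ℝ) ≠ a)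
  have hqn : 0 ≤ (q (n:ℝ)).re := hpos _ (by simp)
  have e1 : ∫ t in (-(n:ℝ))..n, ‖(q (t * Complex.I)).re * (a ^ 2 + t ^ 2)⁻¹‖
      ≤ ∫ t in (-(n:ℝ))..n, 2 * (n:ℝ)^2 * ((q (t * Complex.I)).re * (((n:ℝ) ^ 2 + t ^ 2) * (a ^ 2 + t ^ 2))⁻¹) := by
    refine intervalIntegral.integral_mono_on (by linarith) (hcontax.norm.intervalIntegrable _ _)
      ((h1.const_mul _).intervalIntegrable) fun t ht => ?_
    have hp := hP t
    rw [norm_of_nonneg (by positivity)]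
    have ht2 : t ^ 2 ≤ (n:ℝ) ^ 2 := sq_le_sq' ht.1 ht.2
    have : 1 ≤ 2 * (n:ℝ)^2 * ((n:ℝ) ^ 2 + t ^ 2)⁻¹ := by
      rw [← div_eq_mul_inv, le_div_iff₀ (by positivity)]; linarith
    rw [mul_inv]
    calc _ = ((q (t * Complex.I)).re * (a ^ 2 + t ^ 2)⁻¹) * 1 := by ring
      _ ≤ ((q (t * Complex.I)).re * (a ^ 2 + t ^ 2)⁻¹) * (2 * (n:ℝ)^2 * ((n:ℝ) ^ 2 + t ^ 2)⁻¹) := by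
        gcongr
      _ = _ := by ring
  refine e1.trans ?_
  rw [intervalIntegral.integral_const_mul, intervalIntegral.integral_of_le (by linarith)]
  have e2 : ∫ t in Ioc (-(n:ℝ)) n, ((q (t * Complex.I)).re * (((n:ℝ) ^ 2 + t ^ 2) * (a ^ 2 + t ^ 2))⁻¹)
      ≤ _ := setIntegral_le_integral h1 (ae_of_all _ fun t => mul_nonneg (hP t) (by positivity))
  rw [h2] at e2
  refine (mul_le_mul_of_nonneg_left e2 (by positivity)).trans ?_
  have e3 : ((n:ℝ) * (q a).re - a * (q (n:ℝ)).re) / (n - a) ≤ 2 * (q a).re := by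
    rw [div_le_iff₀ (by linarith)]
    nlinarith [mul_nonneg ha.le hqn]
  calc 2 * (n:ℝ)^2 * (((n:ℝ) * (q a).re - a * (q (n:ℝ)).re) / (n - a) * (π / (n * a * (n + a))))
      ≤ 2 * (n:ℝ)^2 * (2 * (q a).re * (π / (n * a * (n + a)))) := by gcongr
    _ = 4 * π * (q a).re / a * (n / (n + a)) := by field_simp; ring
    _ ≤ 4 * π * (q a).re / a * 1 := by
      gcongr
      rw [div_le_one (by positivity)]; linarith
    _ = _ := mul_one _

/-- The Laplace transform of `cos (t u)`. -/
theorem laplace_cos {z : ℝ} (hz : 0 < z) (t : ℝ) :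
    ∫ u in Ioi (0:ℝ), Real.cos (t * u) * Real.exp (-z * u) = z / (z ^ 2 + t ^ 2) := by
  have hc : (-(z:ℂ) + t * Complex.I).re < 0 := by simp [hz]
  have h := integral_exp_mul_complex_Ioi hc 0
  have hi := integrableOn_exp_mul_complex_Ioi hc 0
  have h2 := integral_re hi
  simp only [RCLike.re_eq_complex_re] at h2
  have e : ∀ u : ℝ, (Complex.exp ((-(z:ℂ) + t * Complex.I) * u)).re = Real.cos (t * u) * Real.exp (-z * u) := by
    intro u
    rw [Complex.exp_re]; simp [mul_comm]
  simp_rw [e] at h2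
  rw [h2, h]
  simp only [Complex.ofReal_zero, mul_zero, Complex.exp_zero]
  rw [Complex.div_re]
  simp [Complex.normSq_apply]
  rw [div_eq_mul_inv]
  ring

/-- If `Re q ≥ 0`, a suitable normalisation of `q` is on `(0, ∞)` the Laplace transform of a
continuous function `G` with `|G u| ≤ G 0`, namely of the Fourier cosine transform of the positive
density `Re q(it) / (π (a² + t²))`. For `q = ξ'/ξ` the bound `|G u| ≤ G 0` is what becomes the error
term of the prime number theorem. -/
theorem schwarz_transform {q : ℂ → ℂ} {ε C : ℝ} (hε : 0 < ε)
    (hq : DifferentiableOn ℂ q {w | -ε < w.re}) (hC : 0 ≤ C)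
    (hb : ∀ w : ℂ, 0 ≤ w.re → ‖q w‖ ≤ C * (1 + ‖w‖) ^ 2)
    (hreal : ∀ x : ℝ, 0 < x → (q x).im = 0)
    (hpos : ∀ w : ℂ, 0 ≤ w.re → 0 ≤ (q w).re)
    {a : ℝ} (ha : 0 < a) :
    ∃ G : ℝ → ℝ, Continuous G ∧ (∀ u, |G u| ≤ G 0) ∧
      ∀ z : ℝ, 0 < z → z ≠ a → ∫ u in Ioi (0:ℝ), G u * Real.exp (-z * u)
        = ((q z).re - z / a * (q a).re) / (a ^ 2 - z ^ 2) := by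
  have hI := schwarz_integrable hε hq hC hb hreal hpos ha
  set P : ℝ → ℝ := fun t => (q (t * Complex.I)).re * (a ^ 2 + t ^ 2)⁻¹ with hPdef
  have hP : ∀ t, 0 ≤ P t := fun t => mul_nonneg (hpos _ (by simp)) (by positivity)
  refine ⟨fun u => π⁻¹ * ∫ t, P t * Real.cos (t * u), ?_, ?_, ?_⟩
  · refine Continuous.mul continuous_const ?_
    refine continuous_of_dominated (bound := P) (fun u => ?_) (fun u => ae_of_all _ fun t => ?_) hI
      (ae_of_all _ fun t => by fun_prop)
    · exact hI.aestronglyMeasurable.mul (Continuous.aestronglyMeasurable (by fun_prop))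
    · rw [norm_mul, norm_of_nonneg (hP t)]
      exact mul_le_of_le_one_right (hP t) (abs_cos_le_one _)
  · intro u
    simp only [mul_zero, Real.cos_zero, mul_one]
    rw [abs_mul, abs_of_pos (inv_pos.2 pi_pos)]
    refine mul_le_mul_of_nonneg_left ?_ (inv_pos.2 pi_pos).le
    rw [← Real.norm_eq_abs]
    refine norm_integral_le_of_norm_le hI (ae_of_all _ fun t => ?_)
    rw [norm_mul, norm_of_nonneg (hP t)]
    exact mul_le_of_le_one_right (hP t) (abs_cos_le_one _)
  · intro z hz hza
    have hexp : IntegrableOn (fun u : ℝ => Real.exp (-z * u)) (Ioi 0) := integrableOn_exp_mul_Ioi (by linarith) 0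
    simp_rw [mul_assoc, integral_const_mul, ← integral_mul_const]
    rw [integral_integral_swap]
    · have e : ∀ t : ℝ, ∫ u in Ioi (0:ℝ), P t * Real.cos (t * u) * Real.exp (-z * u)
          = z * ((q (t * Complex.I)).re * ((z ^ 2 + t ^ 2) * (a ^ 2 + t ^ 2))⁻¹) := by
        intro t
        simp_rw [mul_assoc (P t), integral_const_mul, laplace_cos hz t, hPdef]
        rw [mul_inv]; ring
      simp_rw [e, integral_const_mul]
      rw [(schwarz_pair hε hq hC hb hreal hz ha hza).2]
      have h1 : z - a ≠ 0 := sub_ne_zero.2 hza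
      have h2 : a ^ 2 - z ^ 2 ≠ 0 := by
        rw [show a ^ 2 - z ^ 2 = -((z - a) * (z + a)) by ring]
        exact neg_ne_zero.2 (mul_ne_zero h1 (by positivity))
      field_simp
      ring
    · have := Integrable.mul_prod (hexp) hI
      refine this.mono' ?_ (ae_of_all _ fun x => ?_)
      · simp only [Function.uncurry_def]
        have h1 : AEStronglyMeasurable (fun x : ℝ × ℝ => P x.2) ((volume.restrict (Ioi 0)).prod volume) :=
          hI.aestronglyMeasurable.comp_snd
        refine (h1.mul (Continuous.aestronglyMeasurable (by fun_prop))).mul (Continuous.aestronglyMeasurable (by fun_prop))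
      · simp only [Function.uncurry_def]
        rw [norm_mul, norm_mul, norm_of_nonneg (hP _), norm_of_nonneg (exp_pos _).le, mul_comm]
        gcongr
        exact mul_le_of_le_one_right (hP _) (abs_cos_le_one _)

/-! ### The function ξ on the half plane Re s > 1/2 -/

/-- The Riemann xi function `s (s - 1) π^(-s/2) Γ(s/2) ζ(s)`, with value `1` at `0` and `1`. It is
twice the classical `ξ`. Writing it through `completedRiemannZeta₀`, the completed zeta function with
its two poles removed, makes it entire by construction. -/
noncomputable def xi (s : ℂ) : ℂ := s * (s - 1) * completedRiemannZeta₀ s + 1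

theorem differentiable_xi : Differentiable ℂ xi := by
  have := differentiable_completedZeta₀
  unfold xi
  fun_prop

theorem xi_one_sub (s : ℂ) : xi (1 - s) = xi s := by
  simp only [xi, completedRiemannZeta₀_one_sub]; ring

theorem xi_one : xi 1 = 1 := by simp [xi]

theorem xi_eq {s : ℂ} (h0 : 0 < s.re) (h1 : s ≠ 1) :
    xi s = s * (s - 1) * (Complex.Gammaℝ s * riemannZeta s) := by
  have hs : s ≠ 0 := by rintro rfl; simp at h0
  have hG := Complex.Gammaℝ_ne_zero_of_re_pos h0
  rw [riemannZeta_def_of_ne_zero hs, mul_div_cancel₀ _ hG, completedRiemannZeta_eq, xi]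
  have h1' : s - 1 ≠ 0 := sub_ne_zero.2 h1
  have h2 : 1 - s ≠ 0 := sub_ne_zero.2 (Ne.symm h1)
  field_simp
  ring

theorem Gammaℝ_conj (s : ℂ) : Complex.Gammaℝ (starRingEnd ℂ s) = starRingEnd ℂ (Complex.Gammaℝ s) := by
  have h := Complex.cpow_conj (π : ℂ) (-s / 2)
    (by rw [Complex.arg_ofReal_of_nonneg pi_pos.le]; exact pi_pos.ne)
  rw [Complex.conj_ofReal] at h
  rw [Complex.Gammaℝ_def, Complex.Gammaℝ_def, map_mul, ← Complex.Gamma_conj, ← h]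
  have h2 : (starRingEnd ℂ) 2 = 2 := map_ofNat _ 2
  simp [h2]

theorem xi_conj (s : ℂ) : xi (starRingEnd ℂ s) = starRingEnd ℂ (xi s) := by
  have key : ∀ s : ℂ, 0 < s.re → xi (starRingEnd ℂ s) = starRingEnd ℂ (xi s) := by
    intro s hs
    by_cases h1 : s = 1
    · simp [h1, xi_one]
    rw [xi_eq hs h1, xi_eq (by simpa using hs), Gammaℝ_conj, riemannZeta_conj]
    · simp
    · intro h
      apply h1
      have := congrArg (starRingEnd ℂ) h
      simpa using this
  by_cases h : 0 < s.re
  · exact key s h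
  · have := key (1 - s) (by simp; linarith)
    rw [xi_one_sub] at this
    rw [← this, ← xi_one_sub]
    simp

/-- For `Re s > 0` the zeros of `xi` are nontrivial zeros of `ζ`. -/
theorem xi_ne_zero (hRH : RiemannHypothesis) {s : ℂ} (hs : 1 / 2 < s.re) : xi s ≠ 0 := by
  by_cases h1 : s = 1
  · simp [h1, xi_one]
  have h0 : 0 < s.re := by linarith
  rw [xi_eq h0 h1]
  have hs0 : s ≠ 0 := by rintro rfl; simp at h0
  refine mul_ne_zero (mul_ne_zero hs0 (sub_ne_zero.2 h1)) (mul_ne_zero (Complex.Gammaℝ_ne_zero_of_re_pos h0) ?_)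
  intro hz
  have := hRH s hz (by
    rintro ⟨n, hn⟩
    have := congrArg Complex.re hn
    simp at this
    have hn0 : (0:ℝ) ≤ n := Nat.cast_nonneg n
    nlinarith) h1
  linarith

/-- `completedRiemannZeta₀` is bounded on vertical strips: it is a Mellin transform that converges
absolutely everywhere. -/
theorem completedZeta₀_bound (M : ℝ) : ∃ C : ℝ, 0 ≤ C ∧ ∀ s : ℂ, |s.re| ≤ M → ‖completedRiemannZeta₀ s‖ ≤ C := by
  set P := HurwitzZeta.hurwitzEvenFEPair 0 with hP
  have hconv : ∀ s : ℂ, MellinConvergent P.f_modif s := fun s => (P.isStrongFEPair_toStrongFEPair.hasMellin s).1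
  have hnorm : ∀ s : ℂ, IntegrableOn (fun t : ℝ => t ^ (s.re - 1) * ‖P.f_modif t‖) (Ioi 0) := by
    intro s
    refine (hconv s).norm.congr ((ae_restrict_iff' measurableSet_Ioi).2 (ae_of_all _ fun t ht => ?_))
    simp only [norm_smul]
    rw [Complex.norm_cpow_eq_rpow_re_of_pos ht]; simp
  have hb : ∀ s : ℂ, ‖P.Λ₀ s‖ ≤ ∫ t in Ioi (0:ℝ), t ^ (s.re - 1) * ‖P.f_modif t‖ := by
    intro s
    refine norm_integral_le_of_norm_le (hnorm s) ((ae_restrict_iff' measurableSet_Ioi).2 (ae_of_all _ fun t ht => ?_))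
    rw [norm_smul, Complex.norm_cpow_eq_rpow_re_of_pos ht]; simp
  have h1 := hnorm ((M / 2 : ℝ) : ℂ)
  have h2 := hnorm ((-(M / 2) : ℝ) : ℂ)
  simp only [Complex.ofReal_re] at h1 h2
  have key : ∀ s : ℂ, |s.re| ≤ M → ‖completedRiemannZeta₀ s‖ ≤
    (∫ t in Ioi (0:ℝ), (t ^ (M / 2 - 1) * ‖P.f_modif t‖ + t ^ (-(M/2) - 1) * ‖P.f_modif t‖)) / 2 := by
    intro s hs
    have e : completedRiemannZeta₀ s = P.Λ₀ (s / 2) / 2 := rfl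
    rw [e, norm_div]
    simp only [Complex.norm_ofNat]
    gcongr
    refine (hb _).trans (setIntegral_mono_on (hnorm _) (h1.add h2) measurableSet_Ioi fun t ht => ?_)
    have ht0 : (0:ℝ) < t := ht
    have hre : (s / 2).re = s.re / 2 := by simp
    rw [hre, ← add_mul]
    refine mul_le_mul_of_nonneg_right ?_ (norm_nonneg _)
    have := abs_le.1 hs
    rcases le_total 1 t with h | h
    · have : t ^ (s.re / 2 - 1) ≤ t ^ (M / 2 - 1) := rpow_le_rpow_of_exponent_le h (by linarith)
      have : 0 ≤ t ^ (-(M / 2) - 1) := by positivity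
      linarith
    · have : t ^ (s.re / 2 - 1) ≤ t ^ (-(M / 2) - 1) := rpow_le_rpow_of_exponent_ge ht0 h (by linarith)
      have : 0 ≤ t ^ (M / 2 - 1) := by positivity
      linarith
  refine ⟨max 0 _, le_max_left _ _, fun s hs => (key s hs).trans (le_max_right _ _)⟩

theorem xi_bound (M : ℝ) : ∃ C : ℝ, 0 < C ∧ ∀ s : ℂ, |s.re| ≤ M → ‖xi s‖ ≤ C * (1 + |s.im|) ^ 2 := by
  obtain ⟨C, hC, h⟩ := completedZeta₀_bound M
  refine ⟨(1 + |M|) ^ 2 * C + 1, by positivity, fun s hs => ?_⟩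
  have h1 := h s hs
  have h2 : ‖s‖ ≤ |M| + |s.im| := (Complex.norm_le_abs_re_add_abs_im s).trans (add_le_add (hs.trans (le_abs_self M)) le_rfl)
  have h3 : ‖s - 1‖ ≤ |M| + 1 + |s.im| := (norm_sub_le _ _).trans (by simp; linarith)
  have hi := abs_nonneg s.im
  have hM := abs_nonneg M
  calc ‖xi s‖ ≤ ‖s‖ * ‖s - 1‖ * ‖completedRiemannZeta₀ s‖ + 1 := by
        refine (norm_add_le _ _).trans ?_
        rw [norm_mul, norm_mul]; simp
    _ ≤ ((1 + |M|) * (1 + |s.im|)) * ((1 + |M|) * (1 + |s.im|)) * C + 1 * (1 + |s.im|) ^ 2 := by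
        gcongr
        · nlinarith [mul_nonneg hM hi]
        · nlinarith [mul_nonneg hM hi]
        · nlinarith
    _ = _ := by ring

/-! ### Lower bounds for the Gamma factor and for ξ -/

/-- A Dirichlet series absolutely convergent at `2` is bounded on `Re s ≥ 2`. -/
theorem LSeries_norm_le_two {f : ℕ → ℂ} (hf : LSeriesSummable f 2) {s : ℂ} (hs : 2 ≤ s.re) :
    ‖LSeries f s‖ ≤ ∑' n, ‖LSeries.term f 2 n‖ := by
  have h1 : Summable fun n => ‖LSeries.term f 2 n‖ := Summable.norm hf
  have h2 : ∀ n, ‖LSeries.term f s n‖ ≤ ‖LSeries.term f 2 n‖ :=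
    fun n => LSeries.norm_term_le_of_re_le_re f (by simpa using hs) n
  have h3 : Summable fun n => ‖LSeries.term f s n‖ := h1.of_nonneg_of_le (fun _ => norm_nonneg _) h2
  exact (norm_tsum_le_tsum_norm h3).trans (h3.tsum_le_tsum h2 h1)

/-- On `Re s ≥ 2` both `ζ` and its inverse `∑ μ(n) n⁻ˢ` are bounded. -/
theorem zeta_bounds : ∃ C : ℝ, 0 < C ∧ ∀ s : ℂ, 2 ≤ s.re → ‖riemannZeta s‖ ≤ C ∧ 1 ≤ C * ‖riemannZeta s‖ := by
  have h1 : LSeriesSummable 1 2 := LSeriesSummable_one_iff.2 (by norm_num)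
  have h2 : LSeriesSummable (fun n => ((ArithmeticFunction.moebius n : ℤ) : ℂ)) 2 :=
    ArithmeticFunction.LSeriesSummable_moebius_iff.2 (by norm_num)
  refine ⟨1 + (∑' n, ‖LSeries.term 1 2 n‖) +
    ∑' n, ‖LSeries.term (fun n => ((ArithmeticFunction.moebius n : ℤ) : ℂ)) 2 n‖, ?_, fun s hs => ?_⟩
  · have : 0 ≤ ∑' n, ‖LSeries.term 1 2 n‖ := tsum_nonneg fun _ => norm_nonneg _
    have : 0 ≤ ∑' n, ‖LSeries.term (fun n => ((ArithmeticFunction.moebius n : ℤ) : ℂ)) 2 n‖ :=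
      tsum_nonneg fun _ => norm_nonneg _
    linarith
  · have p1 : 0 ≤ ∑' n, ‖LSeries.term 1 2 n‖ := tsum_nonneg fun _ => norm_nonneg _
    have p2 : 0 ≤ ∑' n, ‖LSeries.term (fun n => ((ArithmeticFunction.moebius n : ℤ) : ℂ)) 2 n‖ :=
      tsum_nonneg fun _ => norm_nonneg _
    have q1 := LSeries_norm_le_two h1 hs
    have q2 := LSeries_norm_le_two h2 hs
    rw [LSeries_one_eq_riemannZeta (by linarith)] at q1
    constructor
    · linarith
    · have h := ArithmeticFunction.LSeries_zeta_mul_Lseries_moebius (s := s) (by linarith)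
      rw [ArithmeticFunction.LSeries_zeta_eq_riemannZeta (by linarith)] at h
      have h' := congrArg norm h
      rw [norm_mul, norm_one] at h'
      rw [← h', mul_comm]
      gcongr
      linarith

/-- On the line `Re z = 1/2` the reflection formula gives `|Γ(z)|² = π / |sin πz|`. -/
theorem norm_Gamma_half (y : ℝ) : Real.exp (-(2 * |y|)) ≤ ‖Complex.Gamma (1 / 2 + y * Complex.I)‖ := by
  set z : ℂ := 1 / 2 + y * Complex.I with hz
  have h := Complex.Gamma_mul_Gamma_one_sub z
  have hc : 1 - z = starRingEnd ℂ z := by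
    apply Complex.ext <;> simp [hz]
    norm_num
  rw [hc, Complex.Gamma_conj] at h
  have h' := congrArg norm h
  rw [norm_mul, RCLike.norm_conj, norm_div, Complex.norm_real, norm_of_nonneg pi_pos.le] at h'
  have hsin : ‖Complex.sin (π * z)‖ ≤ Real.exp (π * |y|) := by
    rw [Complex.sin, norm_div, norm_mul, Complex.norm_I, mul_one]
    simp only [Complex.norm_ofNat]
    rw [div_le_iff₀ (by norm_num)]
    refine (norm_sub_le _ _).trans ?_
    rw [Complex.norm_exp, Complex.norm_exp]
    have e1 : (-(π * z) * Complex.I).re = π * y := by simp [hz]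
    have e2 : ((π * z) * Complex.I).re = -(π * y) := by simp [hz]
    rw [e1, e2]
    have g1 : Real.exp (π * y) ≤ Real.exp (π * |y|) := by
      gcongr; exact le_abs_self y
    have g2 : Real.exp (-(π * y)) ≤ Real.exp (π * |y|) := by
      rw [← mul_neg]; gcongr; exact neg_le_abs y
    linarith
  have hpos : 0 < ‖Complex.sin (π * z)‖ := by
    rcases (norm_nonneg (Complex.sin (π * z))).lt_or_eq with h0 | h0
    · exact h0
    · exfalso
      rw [← h0, div_zero] at h'
      have hne := Complex.Gamma_ne_zero_of_re_pos (s := z) (by simp [hz])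
      have := norm_pos_iff.2 hne
      nlinarith
  have hlow : Real.exp (-(2 * |y|)) ^ 2 ≤ ‖Complex.Gamma z‖ ^ 2 := by
    rw [sq ‖Complex.Gamma z‖, h', le_div_iff₀ hpos]
    calc Real.exp (-(2 * |y|)) ^ 2 * ‖Complex.sin (π * z)‖
        ≤ Real.exp (-(2 * |y|)) ^ 2 * Real.exp (π * |y|) := by gcongr
      _ = Real.exp ((π - 4) * |y|) := by
        rw [← Real.exp_nat_mul, ← Real.exp_add]; congr 1; push_cast; ring
      _ ≤ 1 := by
        rw [Real.exp_le_one_iff]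
        exact mul_nonpos_of_nonpos_of_nonneg (by linarith [pi_le_four]) (abs_nonneg y)
      _ ≤ π := by linarith [pi_gt_three]
  exact (pow_le_pow_iff_left₀ (exp_pos _).le (norm_nonneg _) two_ne_zero).1 hlow

theorem norm_Gamma_lower (m : ℕ) : ∃ c : ℝ, 0 < c ∧ ∀ y : ℝ,
    c * Real.exp (-(2 * |y|)) ≤ ‖Complex.Gamma (m + 1 / 2 + y * Complex.I)‖ := by
  induction m with
  | zero => exact ⟨1, one_pos, fun y => by simpa using norm_Gamma_half y⟩
  | succ m ih =>
    obtain ⟨c, hc, h⟩ := ih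
    refine ⟨1 / 2 * c, by positivity, fun y => ?_⟩
    have e : ((m + 1 : ℕ) : ℂ) + 1 / 2 + y * Complex.I = (m + 1 / 2 + y * Complex.I) + 1 := by
      push_cast; ring
    have hre : (m + 1 / 2 + y * Complex.I : ℂ).re = m + 1 / 2 := by simp
    have hne : (m + 1 / 2 + y * Complex.I : ℂ) ≠ 0 := by
      intro h0
      rw [h0] at hre
      simp at hre
      have : (0:ℝ) ≤ m := Nat.cast_nonneg m
      linarith
    rw [e, Complex.Gamma_add_one _ hne, norm_mul, mul_assoc]
    gcongr
    · have := (Complex.abs_re_le_norm (m + 1 / 2 + y * Complex.I : ℂ))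
      rw [hre] at this
      have h2 := le_abs_self ((m:ℝ) + 1 / 2)
      have : (0:ℝ) ≤ m := Nat.cast_nonneg m
      linarith
    · exact h y

/-- An exponential lower bound for `ξ` on the line `Re s = 2 m + 1`, far to the right. -/
theorem xi_lower (m : ℕ) (hm : 1 ≤ m) : ∃ c : ℝ, 0 < c ∧ ∀ t : ℝ,
    c * Real.exp (-|t|) ≤ ‖xi (((2 * m + 1 : ℝ) : ℂ) + t * Complex.I)‖ := by
  obtain ⟨c, hc, h⟩ := norm_Gamma_lower m
  obtain ⟨C, hC, hz⟩ := zeta_bounds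
  have hm' : (1:ℝ) ≤ m := by exact_mod_cast hm
  refine ⟨π ^ (-(2 * m + 1 : ℝ) / 2) * c * C⁻¹, by positivity, fun t => ?_⟩
  set s : ℂ := ((2 * m + 1 : ℝ) : ℂ) + t * Complex.I with hs
  have hre : s.re = 2 * m + 1 := by simp [hs]
  have hs1 : s ≠ 1 := by
    intro h1; rw [h1] at hre; simp at hre; linarith
  rw [xi_eq (by linarith) hs1, norm_mul, norm_mul, norm_mul, Complex.Gammaℝ_def, norm_mul]
  have n1 : 1 ≤ ‖s‖ := by
    refine le_trans ?_ ((le_abs_self _).trans (Complex.abs_re_le_norm s)); linarith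
  have n2 : 1 ≤ ‖s - 1‖ := by
    refine le_trans ?_ ((le_abs_self _).trans (Complex.abs_re_le_norm (s - 1)))
    rw [Complex.sub_re, hre, Complex.one_re]; linarith
  have n3 : ‖(π:ℂ) ^ (-s / 2)‖ = π ^ (-(2 * m + 1 : ℝ) / 2) := by
    rw [Complex.norm_cpow_eq_rpow_re_of_pos pi_pos]; congr 1; simp [hre]
  have n4 : c * Real.exp (-|t|) ≤ ‖Complex.Gamma (s / 2)‖ := by
    have := h (t / 2)
    have e : (m + 1 / 2 + ((t / 2 : ℝ) : ℂ) * Complex.I : ℂ) = s / 2 := by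
      rw [hs]; push_cast; ring
    rw [e] at this
    convert this using 3
    rw [abs_div, abs_two]; ring
  have n5 : C⁻¹ ≤ ‖riemannZeta s‖ := by
    rw [inv_le_iff_one_le_mul₀ hC]
    linarith [(hz s (by linarith)).2]
  rw [n3]
  calc π ^ (-(2 * m + 1 : ℝ) / 2) * c * C⁻¹ * Real.exp (-|t|)
      = 1 * 1 * (π ^ (-(2 * m + 1 : ℝ) / 2) * (c * Real.exp (-|t|)) * C⁻¹) := by ring
    _ ≤ _ := by gcongr

/-- `|Γ(p) / Γ(p + a)| ≤ Γ(Re p) / Γ(Re p + a)`: the quotient is `B(p, a) / Γ(a)`, and the beta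
integral is bounded by its absolute value. -/
theorem norm_Gamma_ratio {p : ℂ} {a : ℝ} (hp : 0 < p.re) (ha : 0 < a) :
    ‖Complex.Gamma p‖ * Real.Gamma (p.re + a) ≤ ‖Complex.Gamma (p + a)‖ * Real.Gamma p.re := by
  have h1 := Complex.Gamma_mul_Gamma_eq_betaIntegral (s := p) (t := a) hp (by simpa using ha)
  have h2 := Complex.Gamma_mul_Gamma_eq_betaIntegral (s := (p.re : ℂ)) (t := a) (by simpa using hp) (by simpa using ha)
  have hb : ‖Complex.betaIntegral p a‖ ≤ ‖Complex.betaIntegral p.re a‖ := by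
    have hR : Complex.betaIntegral p.re a = ((∫ x in (0:ℝ)..1, x ^ (p.re - 1) * (1 - x) ^ (a - 1) : ℝ) : ℂ) := by
      rw [Complex.betaIntegral, ← intervalIntegral.integral_ofReal]
      refine intervalIntegral.integral_congr fun x hx => ?_
      rw [uIcc_of_le zero_le_one] at hx
      have : (0:ℝ) ≤ 1 - x := by linarith [hx.2]
      rw [Complex.ofReal_mul, Complex.ofReal_cpow hx.1, Complex.ofReal_cpow this]; push_cast; rfl
    have hint := Complex.betaIntegral_convergent (u := (p.re:ℂ)) (v := a) (by simpa using hp) (by simpa using ha)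
    rw [hR, Complex.norm_real]
    refine le_trans ?_ (le_abs_self _)
    rw [Complex.betaIntegral]
    refine intervalIntegral.norm_integral_le_of_norm_le zero_le_one (ae_of_all _ fun x hx => ?_) ?_
    · have hx1 : 0 ≤ 1 - x := by linarith [hx.2]
      rw [norm_mul, Complex.norm_cpow_eq_rpow_re_of_pos hx.1]
      have e : ‖(1 - x : ℂ) ^ ((a:ℂ) - 1)‖ = (1 - x) ^ (a - 1) := by
        have : (1 - x : ℂ) ^ ((a:ℂ) - 1) = (((1 - x) ^ (a - 1) : ℝ) : ℂ) := by
          rw [Complex.ofReal_cpow hx1]; push_cast; rfl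
        rw [this, Complex.norm_real, norm_of_nonneg (rpow_nonneg hx1 _)]
      rw [e]; simp
    · have := hint.norm
      refine this.congr fun x hx => ?_
      rw [uIoc_of_le zero_le_one] at hx
      have hx1 : 0 ≤ 1 - x := by linarith [hx.2]
      rw [norm_mul, Complex.norm_cpow_eq_rpow_re_of_pos hx.1]
      have e : ‖(1 - x : ℂ) ^ ((a:ℂ) - 1)‖ = (1 - x) ^ (a - 1) := by
        have : (1 - x : ℂ) ^ ((a:ℂ) - 1) = (((1 - x) ^ (a - 1) : ℝ) : ℂ) := by
          rw [Complex.ofReal_cpow hx1]; push_cast; rfl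
        rw [this, Complex.norm_real, norm_of_nonneg (rpow_nonneg hx1 _)]
      rw [e]; simp
  have g1 := congrArg norm h1
  have g2 := congrArg norm h2
  rw [norm_mul, norm_mul] at g1 g2
  rw [← Complex.ofReal_add, Complex.Gamma_ofReal, Complex.Gamma_ofReal, Complex.Gamma_ofReal, Complex.norm_real, Complex.norm_real, Complex.norm_real,
    norm_of_nonneg (Real.Gamma_pos_of_pos hp).le, norm_of_nonneg (Real.Gamma_pos_of_pos ha).le,
    norm_of_nonneg (Real.Gamma_pos_of_pos (by positivity)).le] at g2
  rw [Complex.Gamma_ofReal, Complex.norm_real, norm_of_nonneg (Real.Gamma_pos_of_pos ha).le] at g1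
  have ga := Real.Gamma_pos_of_pos ha
  have gp : 0 < Real.Gamma (p.re + a) := Real.Gamma_pos_of_pos (by positivity)
  refine le_of_mul_le_mul_right ?_ ga
  calc ‖Complex.Gamma p‖ * Real.Gamma (p.re + a) * Real.Gamma a
      = ‖Complex.Gamma (p + a)‖ * ‖Complex.betaIntegral p a‖ * Real.Gamma (p.re + a) := by rw [← g1]; ring
    _ ≤ ‖Complex.Gamma (p + a)‖ * ‖Complex.betaIntegral p.re a‖ * Real.Gamma (p.re + a) := by gcongr
    _ = ‖Complex.Gamma (p + a)‖ * (Real.Gamma (p.re + a) * ‖Complex.betaIntegral p.re a‖) := by ring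
    _ = _ := by rw [← g2]; ring

/-- Log-convexity of `Γ` compares its slope on `[x, x + a]` with that on `[x - 1, x]`, which is
`log (x - 1)`. -/
theorem Gamma_growth {x a : ℝ} (hx : 1 < x) (ha : 0 < a) :
    (x - 1) ^ a * Real.Gamma x ≤ Real.Gamma (x + a) := by
  have h := Real.convexOn_log_Gamma.slope_mono_adjacent (x := x - 1) (y := x) (z := x + a)
    (by simpa using hx) (by simp; linarith) (by linarith) (by linarith)
  have g0 : 0 < Real.Gamma (x - 1) := Real.Gamma_pos_of_pos (by linarith)
  have g1 : 0 < Real.Gamma x := Real.Gamma_pos_of_pos (by linarith)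
  have g2 : 0 < Real.Gamma (x + a) := Real.Gamma_pos_of_pos (by linarith)
  have hrec : Real.Gamma x = (x - 1) * Real.Gamma (x - 1) := by
    rw [← Real.Gamma_add_one (by linarith)]; congr 1; ring
  simp only [Function.comp] at h
  rw [sub_sub_cancel, div_one, add_sub_cancel_left, le_div_iff₀ ha] at h
  have hl : Real.log (Real.Gamma x) = Real.log (x - 1) + Real.log (Real.Gamma (x - 1)) := by
    rw [hrec, Real.log_mul (by linarith) g0.ne']
  rw [← Real.log_le_log_iff (mul_pos (rpow_pos_of_pos (by linarith) _) g1) g2,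
    Real.log_mul (rpow_pos_of_pos (by linarith) _).ne' g1.ne', Real.log_rpow (by linarith)]
  rw [hl] at h ⊢
  nlinarith

/-! ### Monotonicity of |ξ| to the right of the critical line -/

/-- Far to the right, `|ξ|` increases under a shift by `2 a`, since the Gamma factor grows like
`(Re s / 2) ^ a` while `ζ` stays bounded above and below. -/
theorem xi_right {a : ℝ} (ha : 0 < a) : ∃ σ₁ : ℝ, 3 ≤ σ₁ ∧ ∀ s : ℂ, σ₁ ≤ s.re → ‖xi s‖ ≤ ‖xi (s + 2 * a)‖ := by
  obtain ⟨C, hC, hz⟩ := zeta_bounds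
  obtain ⟨x₀, hx₀⟩ := ((tendsto_rpow_atTop ha).eventually_ge_atTop (C ^ 2 * π ^ a)).exists_forall_of_atTop
  refine ⟨max 3 (2 * x₀ + 2), le_max_left _ _, fun s hs => ?_⟩
  have hs3 : 3 ≤ s.re := (le_max_left _ _).trans hs
  have hsx : 2 * x₀ + 2 ≤ s.re := (le_max_right _ _).trans hs
  have hre2 : (s + 2 * a).re = s.re + 2 * a := by simp
  have hs1 : s ≠ 1 := by rintro rfl; norm_num at hs3
  have hs1' : s + 2 * a ≠ 1 := by
    intro h; rw [h, Complex.one_re] at hre2; linarith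
  rw [xi_eq (by linarith) hs1, xi_eq (by rw [hre2]; linarith) hs1']
  simp only [norm_mul, Complex.Gammaℝ_def]
  have n1 : ‖s‖ ≤ ‖s + 2 * a‖ := by
    rw [Complex.norm_def, Complex.norm_def, Complex.normSq_apply, Complex.normSq_apply, hre2]
    have : (s + 2 * a).im = s.im := by simp
    rw [this]
    apply Real.sqrt_le_sqrt
    nlinarith
  have n2 : ‖s - 1‖ ≤ ‖s + 2 * a - 1‖ := by
    rw [Complex.norm_def, Complex.norm_def, Complex.normSq_apply, Complex.normSq_apply, Complex.sub_re, Complex.sub_re, hre2]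
    have : (s + 2 * a - 1).im = (s - 1).im := by simp
    rw [this, Complex.one_re]
    apply Real.sqrt_le_sqrt
    nlinarith
  have n3 : ‖(π:ℂ) ^ (-s / 2)‖ = π ^ a * ‖(π:ℂ) ^ (-(s + 2 * a) / 2)‖ := by
    rw [Complex.norm_cpow_eq_rpow_re_of_pos pi_pos, Complex.norm_cpow_eq_rpow_re_of_pos pi_pos, ← Real.rpow_add pi_pos]
    congr 1; simp; ring
  have e4 : (s + 2 * a) / 2 = s / 2 + a := by ring
  have hre3 : (s / 2).re = s.re / 2 := by simp
  have g1 := norm_Gamma_ratio (p := s / 2) (a := a) (by rw [hre3]; linarith) ha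
  rw [hre3] at g1
  have g2 := Gamma_growth (x := s.re / 2) (a := a) (by linarith) ha
  have g0 : 0 < Real.Gamma (s.re / 2) := Real.Gamma_pos_of_pos (by linarith)
  have g3 : ‖Complex.Gamma (s / 2)‖ * (s.re / 2 - 1) ^ a ≤ ‖Complex.Gamma (s / 2 + a)‖ := by
    refine le_of_mul_le_mul_right (le_trans ?_ g1) g0
    rw [mul_assoc]; gcongr
  have g4 := hx₀ (s.re / 2 - 1) (by linarith)
  have z1 := (hz s (by linarith)).1
  have z2 := (hz (s + 2 * a) (by rw [hre2]; linarith)).2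
  rw [n3, e4]
  have key : π ^ a * ‖Complex.Gamma (s / 2)‖ * ‖riemannZeta s‖ ≤ ‖Complex.Gamma (s / 2 + a)‖ * ‖riemannZeta (s + 2 * a)‖ := by
    calc π ^ a * ‖Complex.Gamma (s / 2)‖ * ‖riemannZeta s‖
        ≤ π ^ a * ‖Complex.Gamma (s / 2)‖ * (C * 1) := by rw [mul_one]; gcongr
      _ ≤ π ^ a * ‖Complex.Gamma (s / 2)‖ * (C * (C * ‖riemannZeta (s + 2 * a)‖)) := by gcongr
      _ = ‖Complex.Gamma (s / 2)‖ * (C ^ 2 * π ^ a) * ‖riemannZeta (s + 2 * a)‖ := by ring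
      _ ≤ ‖Complex.Gamma (s / 2)‖ * (s.re / 2 - 1) ^ a * ‖riemannZeta (s + 2 * a)‖ := by gcongr
      _ ≤ _ := by gcongr
  calc ‖s‖ * ‖s - 1‖ * (π ^ a * ‖(π:ℂ) ^ (-(s + 2 * a) / 2)‖ * ‖Complex.Gamma (s / 2)‖ * ‖riemannZeta s‖)
      = ‖s‖ * ‖s - 1‖ * (‖(π:ℂ) ^ (-(s + 2 * a) / 2)‖ * (π ^ a * ‖Complex.Gamma (s / 2)‖ * ‖riemannZeta s‖)) := by ring
    _ ≤ ‖s + 2 * a‖ * ‖s + 2 * a - 1‖ * (‖(π:ℂ) ^ (-(s + 2 * a) / 2)‖ * (‖Complex.Gamma (s / 2 + a)‖ * ‖riemannZeta (s + 2 * a)‖)) := by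
        gcongr
    _ = _ := by ring

/-- Under the Riemann Hypothesis `1 / ξ` is at most exponential in `Im s` on
`1/2 + δ ≤ Re s ≤ M`: on a large disc centred far to the right `ξ` has a holomorphic logarithm, whose
real part is bounded above, and Borel–Carathéodory bounds it below. -/
theorem xi_lower_strip (hRH : RiemannHypothesis) {δ : ℝ} (hδ : 0 < δ) (M : ℝ) :
    ∃ K : ℝ, 0 < K ∧ ∀ s : ℂ, 1 / 2 + δ ≤ s.re → s.re ≤ M → Real.exp (-(K * (1 + |s.im|))) ≤ ‖xi s‖ := by
  obtain ⟨m, hm⟩ := exists_nat_ge (max 1 (M + δ))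
  have hm1 : (1:ℝ) ≤ m := (le_max_left _ _).trans hm
  have hmM : M + δ ≤ m := (le_max_right _ _).trans hm
  set X : ℝ := 2 * m + 1 with hX
  obtain ⟨c, hc, hlow⟩ := xi_lower m (by exact_mod_cast hm1)
  set R : ℝ := X - 1 / 2 - δ / 2 with hR
  by_cases hδM : M < 1 / 2 + δ
  · exact ⟨1, one_pos, fun s h1 h2 => by linarith⟩
  push Not at hδM
  have hR0 : 0 < R := by rw [hR, hX]; linarith
  obtain ⟨A, hA, hup⟩ := xi_bound (X + R)
  set B : ℝ := 1 + A * (1 + R) ^ 2 / c with hB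
  have hB0 : 0 < B := by positivity
  refine ⟨1 / c + 1 + 4 * R / δ * (B + 3), by positivity, fun s h1 h2 => ?_⟩
  set t : ℝ := s.im with ht
  set s₀ : ℂ := (X : ℂ) + t * Complex.I with hs₀
  set h : ℂ → ℂ := fun w => xi (s₀ + w) with hh
  have hd : Differentiable ℂ h := differentiable_xi.comp (by fun_prop)
  have hnz : ∀ w ∈ Metric.ball (0:ℂ) R, h w ≠ 0 := by
    intro w hw
    apply xi_ne_zero hRH
    have : ‖w‖ < R := by simpa using hw
    have h3 := (abs_le.1 (Complex.abs_re_le_norm w)).1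
    simp [hs₀]; linarith
  have hl : DifferentiableOn ℂ (fun w => deriv h w / h w) (Metric.ball 0 R) :=
    (hd.deriv).differentiableOn.div hd.differentiableOn hnz
  -- A primitive `G` of the logarithmic derivative; `f = G - G 0` is the logarithm of `h / h 0`.
  obtain ⟨G, hG⟩ := hl.isExactOn_ball
  have hconst : ∀ w ∈ Metric.ball (0:ℂ) R, h w * Complex.exp (-G w) = h 0 * Complex.exp (-G 0) := by
    intro w hw
    have hder : ∀ v ∈ Metric.ball (0:ℂ) R, HasDerivAt (fun w => h w * Complex.exp (-G w)) 0 v := by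
      intro v hv
      have e := (hd v).hasDerivAt.mul ((hG v hv).neg.cexp)
      have e2 : h v * (deriv h v / h v) = deriv h v := mul_div_cancel₀ _ (hnz v hv)
      have e3 : deriv h v * Complex.exp (-G v) + h v * (Complex.exp (-G v) * -(deriv h v / h v)) = 0 := by
        linear_combination (-Complex.exp (-G v)) * e2
      exact e.congr_deriv e3
    exact (convex_ball (0:ℂ) R).is_const_of_fderivWithin_eq_zero (𝕜 := ℂ)
      (fun v hv => (hder v hv).differentiableAt.differentiableWithinAt)
      (fun v hv => by
        rw [fderivWithin_of_isOpen Metric.isOpen_ball hv]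
        exact (hder v hv).hasFDerivAt.fderiv.trans (by ext; simp)) hw (Metric.mem_ball_self hR0)
  set f : ℂ → ℂ := fun w => G w - G 0 with hf
  have hhf : ∀ w ∈ Metric.ball (0:ℂ) R, h w = h 0 * Complex.exp (f w) := by
    intro w hw
    have := hconst w hw
    calc h w = h w * Complex.exp (-G w) * Complex.exp (G w) := by
          rw [mul_assoc, ← Complex.exp_add]; simp
      _ = h 0 * (Complex.exp (-G 0) * Complex.exp (G w)) := by rw [this]; ring
      _ = _ := by rw [← Complex.exp_add, hf]; congr 2; ring
  have h0low : c * Real.exp (-|t|) ≤ ‖h 0‖ := by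
    have := hlow t
    simpa [hh, hs₀, hX] using this
  have h0pos : 0 < ‖h 0‖ := lt_of_lt_of_le (by positivity) h0low
  have hfre : ∀ w ∈ Metric.ball (0:ℂ) R, (f w).re ≤ B + 3 * |t| := by
    intro w hw
    have hwR : ‖w‖ < R := by simpa using hw
    have e1 : ‖h w‖ = ‖h 0‖ * Real.exp (f w).re := by
      rw [hhf w hw, norm_mul, Complex.norm_exp]
    have e2 : ‖h w‖ ≤ A * (1 + R) ^ 2 * Real.exp (2 * |t|) := by
      have hre : |(s₀ + w).re| ≤ X + R := by
        have := Complex.abs_re_le_norm w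
        have e : (s₀ + w).re = X + w.re := by simp [hs₀]
        rw [e]
        refine (abs_add_le _ _).trans ?_
        rw [abs_of_pos (show 0 < X by rw [hX]; linarith)]
        linarith
      have him : |(s₀ + w).im| ≤ |t| + R := by
        have := Complex.abs_im_le_norm w
        have e : (s₀ + w).im = t + w.im := by simp [hs₀]
        rw [e]
        refine (abs_add_le _ _).trans ?_
        linarith
      refine (hup _ hre).trans ?_
      have h5 : 1 + |(s₀ + w).im| ≤ (1 + R) * Real.exp |t| := by
        have := Real.add_one_le_exp |t|
        have := abs_nonneg t
        nlinarith
      calc A * (1 + |(s₀ + w).im|) ^ 2 ≤ A * ((1 + R) * Real.exp |t|) ^ 2 := by gcongr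
        _ = _ := by rw [mul_pow, ← Real.exp_nat_mul]; push_cast; ring
    have e3 : Real.exp (f w).re ≤ Real.exp (B + 3 * |t|) := by
      have : ‖h 0‖ * Real.exp (f w).re ≤ ‖h 0‖ * Real.exp (B + 3 * |t|) := by
        rw [← e1]
        refine e2.trans ?_
        calc A * (1 + R) ^ 2 * Real.exp (2 * |t|)
            = c * Real.exp (-|t|) * ((A * (1 + R) ^ 2 / c) * Real.exp (3 * |t|)) := by
              rw [show c * Real.exp (-|t|) * ((A * (1 + R) ^ 2 / c) * Real.exp (3 * |t|))
                = A * (1 + R) ^ 2 * (Real.exp (-|t|) * Real.exp (3 * |t|)) by field_simp, ← Real.exp_add]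
              congr 2; ring
          _ ≤ ‖h 0‖ * (Real.exp B * Real.exp (3 * |t|)) := by
              gcongr
              have := Real.add_one_le_exp B
              rw [hB] at this ⊢; linarith
          _ = _ := by rw [← Real.exp_add]
      exact le_of_mul_le_mul_left this h0pos
    exact Real.exp_le_exp.1 e3
  have hfd : DifferentiableOn ℂ f (Metric.ball 0 R) := fun w hw =>
    ((hG w hw).differentiableAt.sub_const _).differentiableWithinAt
  set w : ℂ := ((s.re - X : ℝ) : ℂ) with hw
  have hwn : ‖w‖ = X - s.re := by
    rw [hw, Complex.norm_real, Real.norm_eq_abs, abs_of_neg (by rw [hX]; linarith)]; ring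
  have hwb : w ∈ Metric.ball (0:ℂ) R := by
    rw [mem_ball_zero_iff, hwn]; linarith
  have hM0 : 0 < B + 3 * |t| := by positivity
  have bc := Complex.borelCaratheodory_zero hM0 hfd (fun v hv => hfre v hv) hR0 hwb (by simp [hf])
  have hsw : h w = xi s := by
    rw [hh]; simp only; congr 1
    apply Complex.ext <;> simp [hs₀, hw, ht]
  have bc2 : ‖f w‖ ≤ 4 * R / δ * (B + 3 * |t|) := by
    refine bc.trans ?_
    calc 2 * (B + 3 * |t|) * ‖w‖ / (R - ‖w‖) ≤ 2 * (B + 3 * |t|) * R / (δ / 2) := by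
          gcongr
          · rw [hwn]; linarith
          · rw [hwn]; linarith
      _ = _ := by field_simp; ring
  rw [← hsw, hhf w hwb, norm_mul, Complex.norm_exp]
  have hfl : -(4 * R / δ * (B + 3 * |t|)) ≤ (f w).re := by
    have := (abs_le.1 (Complex.abs_re_le_norm (f w))).1
    linarith
  have hcl : Real.exp (-(1 / c)) ≤ c := by
    have := Real.add_one_le_exp (1 / c)
    rw [Real.exp_neg, inv_le_comm₀ (exp_pos _) hc]
    rw [← one_div]; linarith
  calc Real.exp (-((1 / c + 1 + 4 * R / δ * (B + 3)) * (1 + |t|)))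
      ≤ Real.exp (-(1 / c) + -|t| + -(4 * R / δ * (B + 3 * |t|))) := by
        apply Real.exp_le_exp.2
        have k0 := abs_nonneg t
        have k1 : 0 ≤ 1 / c * |t| := by positivity
        have k2 : 0 ≤ 4 * R / δ * (B * |t|) := by positivity
        have k3 : 0 ≤ 4 * R / δ := by positivity
        nlinarith
    _ = Real.exp (-(1 / c)) * Real.exp (-|t|) * Real.exp (-(4 * R / δ * (B + 3 * |t|))) := by
        rw [Real.exp_add, Real.exp_add]
    _ ≤ (c * Real.exp (-|t|)) * Real.exp (f w).re := by gcongr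
    _ ≤ _ := by gcongr

/-- Under the Riemann Hypothesis `|ξ(s)| ≤ |ξ(s + 2 a)|` for `Re s ≥ 1/2` and `a > 0`. The quotient
`ξ(s) / ξ(s + 2 a)` is holomorphic on `Re s ≥ 1/2 - a`; on the line `Re s = 1/2 - a` it has modulus
`1`, since `s` and `s + 2 a` are reflections of one another in the critical line, and far to the right
it has modulus at most `1`. The Phragmén–Lindelöf principle fills in the strip. -/
theorem xi_shift_le (hRH : RiemannHypothesis) {a : ℝ} (ha : 0 < a) {s : ℂ} (hs : 1 / 2 ≤ s.re) :
    ‖xi s‖ ≤ ‖xi (s + 2 * a)‖ := by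
  obtain ⟨σ₁, hσ, hright⟩ := xi_right ha
  by_cases hsσ : σ₁ ≤ s.re
  · exact hright s hsσ
  push Not at hsσ
  have hne : ∀ z : ℂ, 1 / 2 - a ≤ z.re → xi (z + 2 * a) ≠ 0 := by
    intro z hz
    apply xi_ne_zero hRH
    simp; linarith
  obtain ⟨K, hK, hlow⟩ := xi_lower_strip hRH ha (σ₁ + 2 * a)
  obtain ⟨A, hA, hup⟩ := xi_bound (σ₁ + a)
  set F : ℂ → ℂ := fun z => xi z / xi (z + 2 * a) with hF
  have hdiff : DifferentiableOn ℂ F (Complex.re ⁻¹' Icc (1 / 2 - a) σ₁) := by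
    refine differentiable_xi.differentiableOn.div (Differentiable.differentiableOn ?_) fun z hz => hne z hz.1
    exact differentiable_xi.comp (by fun_prop)
  have hcl : closure (Complex.re ⁻¹' Ioo (1 / 2 - a) σ₁) ⊆ Complex.re ⁻¹' Icc (1 / 2 - a) σ₁ :=
    closure_minimal (preimage_mono Ioo_subset_Icc_self) (isClosed_Icc.preimage Complex.continuous_re)
  have key : ‖F s‖ ≤ 1 := by
    refine PhragmenLindelof.vertical_strip (a := 1 / 2 - a) (b := σ₁) (hdiff.mono hcl).diffContOnCl ?_ ?_ ?_
      (by linarith) hsσ.le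
    · set c := π / (σ₁ - (1 / 2 - a)) / 2 with hc
      have hc0 : 0 < π / (σ₁ - (1 / 2 - a)) := div_pos pi_pos (by linarith)
      have hcp : 0 < c := by positivity
      refine ⟨c, by rw [hc]; linarith, (K + 2) * (1 + 1 / c), ?_⟩
      refine Asymptotics.IsBigO.of_bound A (eventually_inf_principal.2 (Eventually.of_forall fun z hz => ?_))
      have hz1 : 1 / 2 - a < z.re := hz.1
      have hz2 : z.re < σ₁ := hz.2
      have hre2 : (z + 2 * a).re = z.re + 2 * a := by simp
      have him2 : (z + 2 * a).im = z.im := by simp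
      have b1 := hup z (by rw [abs_le]; constructor <;> linarith)
      have b2 := hlow (z + 2 * a) (by rw [hre2]; linarith) (by rw [hre2]; linarith)
      rw [him2] at b2
      have k0 := abs_nonneg z.im
      rw [hF]; simp only
      rw [norm_div, div_le_iff₀ (norm_pos_iff.2 (hne z hz1.le)), Real.norm_of_nonneg (exp_pos _).le]
      have b3 : 1 + |z.im| ≤ Real.exp |z.im| := by linarith [Real.add_one_le_exp |z.im|]
      have b4 : (K + 2) * (1 + |z.im|) ≤ (K + 2) * (1 + 1 / c) * Real.exp (c * |z.im|) := by
        have := Real.add_one_le_exp (c * |z.im|)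
        have : 1 + |z.im| ≤ (1 + 1 / c) * Real.exp (c * |z.im|) := by
          calc 1 + |z.im| ≤ (1 + 1 / c) * (c * |z.im| + 1) := by
                have : (1 + 1 / c) * (c * |z.im| + 1) = 1 + |z.im| + (c * |z.im| + 1 / c) := by field_simp; ring
                rw [this]
                have : 0 ≤ c * |z.im| + 1 / c := by positivity
                linarith
            _ ≤ _ := by gcongr
        rw [mul_assoc]; gcongr
      calc ‖xi z‖ ≤ A * (Real.exp |z.im|) ^ 2 := b1.trans (by gcongr)
        _ = A * Real.exp (2 * |z.im|) := by rw [← Real.exp_nat_mul]; push_cast; rfl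
        _ ≤ A * (Real.exp ((K + 2) * (1 + |z.im|)) * Real.exp (-(K * (1 + |z.im|)))) := by
            rw [← Real.exp_add]; gcongr; nlinarith
        _ ≤ A * (Real.exp ((K + 2) * (1 + 1 / c) * Real.exp (c * |z.im|)) * ‖xi (z + 2 * a)‖) := by gcongr
        _ = _ := by ring
    · intro z hz
      have : z + 2 * a = starRingEnd ℂ (1 - z) := by
        apply Complex.ext <;> simp [hz]
        ring
      rw [hF]; simp only
      rw [this, xi_conj, xi_one_sub, norm_div, RCLike.norm_conj]
      exact div_self_le_one _
    · intro z hz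
      rw [hF]; simp only
      rw [norm_div]
      exact div_le_one_of_le₀ (hright z hz.ge) (norm_nonneg _)
  rw [hF] at key; simp only at key
  rwa [norm_div, div_le_one (norm_pos_iff.2 (hne s (by linarith)))] at key

/-- Under the Riemann Hypothesis `Re (ξ'/ξ) ≥ 0` for `Re s > 1/2`: this is the infinitesimal form of
`xi_shift_le`, and it makes the Hadamard product of `ξ` unnecessary. -/
theorem xi_logDeriv_re_nonneg (hRH : RiemannHypothesis) {s : ℂ} (hs : 1 / 2 < s.re) :
    0 ≤ (deriv xi s / xi s).re := by
  have hne := xi_ne_zero hRH hs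
  set u : ℝ → ℂ := fun r => xi (s + r) / xi s with hu
  have h1 : HasDerivAt u (deriv xi s / xi s) 0 := by
    have e0 : HasDerivAt (fun r : ℝ => s + (r : ℂ)) 1 0 := by
      simpa using (Complex.ofRealCLM.hasDerivAt (x := (0:ℝ))).const_add s
    have e1 : HasDerivAt xi (deriv xi s) (s + ((0:ℝ):ℂ)) := by
      simpa using (differentiable_xi s).hasDerivAt
    have := (e1.comp (0:ℝ) e0).div_const (xi s)
    simpa using this
  have hre : HasDerivAt (fun r => (u r).re) (deriv xi s / xi s).re 0 :=
    (Complex.reCLM.hasFDerivAt.comp_hasDerivAt (0:ℝ) h1)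
  have him : HasDerivAt (fun r => (u r).im) (deriv xi s / xi s).im 0 :=
    (Complex.imCLM.hasFDerivAt.comp_hasDerivAt (0:ℝ) h1)
  -- `h2` is the derivative of `‖u r‖ ^ 2`, equal to `1` at `r = 0` and at least `1` for `r > 0`.
  have h2 := (hre.mul hre).add (him.mul him)
  have hu0 : u 0 = 1 := by simp [hu, hne]
  simp only [hu0, Complex.one_re, Complex.one_im] at h2
  have h3 := h2.tendsto_slope_zero_right
  have hge : 0 ≤ (deriv xi s / xi s).re * 1 + 1 * (deriv xi s / xi s).re +
      ((deriv xi s / xi s).im * 0 + 0 * (deriv xi s / xi s).im) := by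
    refine ge_of_tendsto h3 ?_
    filter_upwards [self_mem_nhdsWithin] with r hr
    have hr0 : (0:ℝ) < r := hr
    have := xi_shift_le hRH (a := r / 2) (by positivity) hs.le
    have e : s + 2 * ((r / 2 : ℝ) : ℂ) = s + r := by push_cast; ring
    rw [e] at this
    have h4 : 1 ≤ ‖u r‖ := by
      rw [hu]; simp only
      rw [norm_div, le_div_iff₀ (norm_pos_iff.2 hne)]; simpa using this
    have h5 : 1 ≤ (u r).re * (u r).re + (u r).im * (u r).im := by
      rw [← Complex.normSq_apply, Complex.normSq_eq_norm_sq]; nlinarith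
    simp [hu0]
    exact mul_nonneg (inv_pos.2 hr0).le (by linarith)
  linarith

/-! ### The archimedean terms: digamma and ½ log (1 - x⁻²) -/

lemma hasDerivAt_log_Gamma {x : ℝ} (hx : 0 < x) :
    HasDerivAt (Real.log ∘ Real.Gamma) (Complex.digamma x).re x := by
  have hne : ∀ m : ℕ, (x : ℂ) ≠ -m := by
    intro m h
    have := congrArg Complex.re h
    simp at this
    have : (0:ℝ) ≤ m := Nat.cast_nonneg m
    linarith
  have h1 := (Complex.differentiableAt_Gamma (x:ℂ) hne).hasDerivAt.real_of_complex
  have h2 : (fun y : ℝ => (Complex.Gamma y).re) = Real.Gamma := by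
    ext y; rw [Complex.Gamma_ofReal]; simp
  rw [h2] at h1
  have h3 := h1.log (Real.Gamma_pos_of_pos hx).ne'
  have e : (Complex.digamma x).re = (deriv Complex.Gamma ↑x).re / Real.Gamma x := by
    rw [Complex.digamma_def, logDeriv_apply, Complex.Gamma_ofReal, Complex.div_ofReal_re]
  rw [e]; exact h3

lemma digamma_re_add_one {x : ℝ} (hx : 0 < x) :
    (Complex.digamma ((x + 1 : ℝ) : ℂ)).re = (Complex.digamma x).re + 1 / x := by
  have hne : ∀ m : ℕ, (x : ℂ) ≠ -m := by
    intro m h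
    have := congrArg Complex.re h
    simp at this
    have : (0:ℝ) ≤ m := Nat.cast_nonneg m
    linarith
  have := Complex.digamma_apply_add_one x hne
  push_cast
  rw [this, Complex.add_re, ← Complex.ofReal_inv, Complex.ofReal_re, one_div]

lemma log_Gamma_add_one {x : ℝ} (hx : 0 < x) :
    Real.log (Real.Gamma (x + 1)) - Real.log (Real.Gamma x) = Real.log x := by
  rw [Real.Gamma_add_one hx.ne', Real.log_mul hx.ne' (Real.Gamma_pos_of_pos hx).ne']
  ring

/-- This and the next lemma compare the convex function `log Γ` with its chord on `[x, x + 1]`, whose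
slope is `log x`. -/
lemma digamma_le_log {x : ℝ} (hx : 0 < x) : (Complex.digamma x).re ≤ Real.log x := by
  have := Real.convexOn_log_Gamma.le_slope_of_hasDerivAt (x := x) (y := x + 1) hx
    (by simp; linarith) (by linarith) (hasDerivAt_log_Gamma hx)
  rw [slope_def_field] at this
  simpa [log_Gamma_add_one hx] using this

lemma log_le_digamma {x : ℝ} (hx : 0 < x) : Real.log x ≤ (Complex.digamma ((x + 1 : ℝ) : ℂ)).re := by
  have := Real.convexOn_log_Gamma.slope_le_of_hasDerivAt (x := x) (y := x + 1) hx
    (by simp; linarith) (by linarith) (hasDerivAt_log_Gamma (by linarith))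
  rw [slope_def_field] at this
  simpa [log_Gamma_add_one hx] using this

lemma digamma_add_nat {x : ℝ} (hx : 0 < x) (N : ℕ) :
    (Complex.digamma ((x + N : ℝ) : ℂ)).re =
      (Complex.digamma x).re + ∑ n ∈ Finset.range N, 1 / ((n:ℝ) + x) := by
  induction N with
  | zero => simp
  | succ N ih =>
    rw [Finset.sum_range_succ, ← add_assoc, ← ih]
    have := digamma_re_add_one (x := x + N) (by positivity)
    rw [show ((N:ℝ) + x) = x + N by ring, ← this]
    push_cast; ring_nf

lemma tendsto_log_add_sub (a b : ℝ) :
    Tendsto (fun N : ℕ => Real.log (a + N) - Real.log (b + N)) atTop (𝓝 0) := by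
  have h (a : ℝ) : Tendsto (fun N : ℕ => Real.log (a + N) - Real.log N) atTop (𝓝 0) := by
    have := (Real.tendsto_log_comp_add_sub_log a).comp tendsto_natCast_atTop_atTop
    refine this.congr fun N => ?_
    simp [add_comm]
  simpa using (h a).sub (h b)

/-- The series `∑ (1 / (n + 1) - 1 / (n + x)) = digamma x + γ`. -/
lemma hasSum_digamma {x : ℝ} (hx : 1 ≤ x) :
    HasSum (fun n : ℕ => 1 / ((n:ℝ) + 1) - 1 / ((n:ℝ) + x))
      ((Complex.digamma x).re + Real.eulerMascheroniConstant) := by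
  have hx0 : 0 < x := by linarith
  rw [hasSum_iff_tendsto_nat_of_nonneg]
  · have key (N : ℕ) : ∑ n ∈ Finset.range N, (1 / ((n:ℝ) + 1) - 1 / ((n:ℝ) + x)) =
        (Complex.digamma x).re + Real.eulerMascheroniConstant +
          ((Complex.digamma ((1 + N : ℝ) : ℂ)).re - (Complex.digamma ((x + N : ℝ) : ℂ)).re) := by
      rw [Finset.sum_sub_distrib, digamma_add_nat hx0, digamma_add_nat one_pos]
      simp [Complex.digamma_one]
      ring
    simp_rw [key]
    rw [show (𝓝 ((Complex.digamma x).re + Real.eulerMascheroniConstant)) =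
      𝓝 ((Complex.digamma x).re + Real.eulerMascheroniConstant + 0) by simp]
    refine Tendsto.const_add _ ?_
    refine tendsto_of_tendsto_of_tendsto_of_le_of_le' (tendsto_log_add_sub 0 x)
      (tendsto_log_add_sub 1 (x - 1)) ?_ ?_
    · filter_upwards [eventually_gt_atTop 0] with N hN
      have hN' : (0:ℝ) < N := by exact_mod_cast hN
      have h1 := log_le_digamma (x := (N:ℝ)) hN'
      have h2 := digamma_le_log (x := x + N) (by linarith)
      rw [show (1:ℝ) + N = N + 1 by ring, zero_add]
      linarith
    · filter_upwards [eventually_gt_atTop 0] with N hN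
      have hN' : (0:ℝ) < N := by exact_mod_cast hN
      have h1 := log_le_digamma (x := x - 1 + N) (by linarith)
      have h2 := digamma_le_log (x := 1 + N) (by linarith)
      rw [show x - 1 + (N:ℝ) + 1 = x + N by ring] at h1
      linarith
  · intro n
    have : 1 / ((n:ℝ) + x) ≤ 1 / ((n:ℝ) + 1) := by gcongr
    linarith

/-- The contribution `-½ log (1 - x⁻²)` of the trivial zeros `-2, -4, …` of `ζ` to the explicit
formula for `ψ`. -/
noncomputable def lam (x : ℝ) : ℝ := -(1 / 2) * Real.log (1 - x ^ (-2 : ℝ))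

lemma rpow_neg_two_mem {x : ℝ} (hx : 1 < x) : 0 < x ^ (-2:ℝ) ∧ x ^ (-2:ℝ) < 1 :=
  ⟨by positivity, Real.rpow_lt_one_of_one_lt_of_neg hx (by norm_num)⟩

lemma lam_nonneg {x : ℝ} (hx : 1 < x) : 0 ≤ lam x := by
  have h := rpow_neg_two_mem hx
  have := Real.log_nonpos (x := 1 - x ^ (-2:ℝ)) (by linarith) (by linarith)
  unfold lam; linarith

lemma lam_anti {x y : ℝ} (hx : 1 < x) (hxy : x ≤ y) : lam y ≤ lam x := by
  have h := rpow_neg_two_mem hx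
  have h2 := rpow_neg_two_mem (hx.trans_le hxy)
  have h3 : y ^ (-2:ℝ) ≤ x ^ (-2:ℝ) :=
    Real.rpow_le_rpow_of_nonpos (by linarith) hxy (by norm_num)
  have := Real.log_le_log (x := 1 - x ^ (-2:ℝ)) (y := 1 - y ^ (-2:ℝ)) (by linarith) (by linarith)
  unfold lam; linarith

lemma hasSum_lam {x : ℝ} (hx : 1 < x) :
    HasSum (fun n : ℕ => (x ^ (-2:ℝ)) ^ (n + 1) / (2 * ((n:ℝ) + 1))) (lam x) := by
  have h := rpow_neg_two_mem hx
  have := (Real.hasSum_pow_div_log_of_abs_lt_one (x := x ^ (-2:ℝ))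
    (by rw [abs_of_pos h.1]; exact h.2)).mul_left (1/2)
  have e : lam x = 1 / 2 * -Real.log (1 - x ^ (-2:ℝ)) := by unfold lam; ring
  rw [e]
  refine this.congr_fun fun n => ?_
  field_simp

lemma measurable_lam : Measurable lam := by unfold lam; fun_prop

/-- The Mellin transform of `lam` is `(digamma (1 + s/2) + γ) / (2 s)`: integrate the power series of
`lam` in `x⁻²` term by term. -/
lemma lam_integral {s : ℝ} (hs : 0 < s) :
    IntegrableOn (fun x => lam x * x ^ (-s - 1)) (Ioi 1) ∧
    s * ∫ x in Ioi (1:ℝ), lam x * x ^ (-s - 1) =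
      ((Complex.digamma ((1 + s / 2 : ℝ) : ℂ)).re + Real.eulerMascheroniConstant) / 2 := by
  set F : ℕ → ℝ → ℝ := fun n x => (x ^ (-2:ℝ)) ^ (n + 1) / (2 * ((n:ℝ) + 1)) * x ^ (-s - 1) with hF
  have hF' (n : ℕ) {x : ℝ} (hx : x ∈ Ioi (1:ℝ)) :
      F n x = 1 / (2 * ((n:ℝ) + 1)) * x ^ (-(2 * ((n:ℝ) + 1) + s) - 1) := by
    have hx0 : 0 < x := by have := mem_Ioi.1 hx; linarith
    simp only [hF]
    rw [← Real.rpow_natCast, ← Real.rpow_mul hx0.le,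
      show (-(2 * ((n:ℝ) + 1) + s) - 1) = (-2 * ((n + 1 : ℕ):ℝ)) + (-s - 1) by push_cast; ring,
      Real.rpow_add hx0]
    ring
  have hneg (n : ℕ) : (-(2 * ((n:ℝ) + 1) + s) - 1) < -1 := by
    have : (0:ℝ) ≤ n := Nat.cast_nonneg n
    linarith
  have hint (n : ℕ) : IntegrableOn (F n) (Ioi 1) := by
    refine IntegrableOn.congr_fun ((integrableOn_Ioi_rpow_of_lt (hneg n) one_pos).const_mul _)
      (fun x hx => (hF' n hx).symm) measurableSet_Ioi
  have hval (n : ℕ) : ∫ x in Ioi (1:ℝ), F n x = 1 / (2 * ((n:ℝ) + 1) * (2 * ((n:ℝ) + 1) + s)) := by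
    rw [setIntegral_congr_fun measurableSet_Ioi (fun x hx => hF' n hx), integral_const_mul,
      integral_Ioi_rpow_of_lt (hneg n) one_pos]
    have : (0:ℝ) < 2 * ((n:ℝ) + 1) + s := by positivity
    simp only [Real.one_rpow]
    rw [show (-(2 * ((n:ℝ) + 1) + s) - 1 + 1) = -(2 * ((n:ℝ) + 1) + s) by ring, neg_div_neg_eq]
    field_simp
  have hnorm (n : ℕ) : ∫ x in Ioi (1:ℝ), ‖F n x‖ = 1 / (2 * ((n:ℝ) + 1) * (2 * ((n:ℝ) + 1) + s)) := by
    rw [← hval n]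
    refine setIntegral_congr_fun measurableSet_Ioi fun x hx => ?_
    have hx0 : 0 < x := by have := mem_Ioi.1 hx; linarith
    exact Real.norm_of_nonneg (by simp only [hF]; positivity)
  have hsum : HasSum (fun n : ℕ => 1 / (2 * ((n:ℝ) + 1) * (2 * ((n:ℝ) + 1) + s)))
      (((Complex.digamma ((1 + s / 2 : ℝ) : ℂ)).re + Real.eulerMascheroniConstant) / 2 / s) := by
    have := (hasSum_digamma (x := 1 + s / 2) (by linarith)).div_const (2 * s)
    rw [div_div]
    refine this.congr_fun fun n => ?_
    have hn : (0:ℝ) ≤ n := Nat.cast_nonneg n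
    have h1 : (0:ℝ) < (n:ℝ) + (1 + s / 2) := by linarith
    have h2 : (0:ℝ) < 2 * ((n:ℝ) + 1) + s := by linarith
    rw [div_sub_div _ _ (by positivity) h1.ne', div_div, div_eq_div_iff (by positivity) (by positivity)]
    ring
  have H := hasSum_integral_of_summable_integral_norm (μ := volume.restrict (Ioi (1:ℝ))) hint
    (by simp_rw [hnorm]; exact hsum.summable)
  simp_rw [hval] at H
  have e := H.unique hsum
  have e2 : ∫ x in Ioi (1:ℝ), ∑' n, F n x = ∫ x in Ioi (1:ℝ), lam x * x ^ (-s - 1) := by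
    refine setIntegral_congr_fun measurableSet_Ioi fun x hx => ?_
    exact ((hasSum_lam hx).mul_right _).tsum_eq
  rw [e2] at e
  constructor
  · apply Integrable.of_integral_ne_zero
    rw [e]
    have : 0 < ∑' n : ℕ, 1 / (2 * ((n:ℝ) + 1) * (2 * ((n:ℝ) + 1) + s)) :=
      hsum.summable.tsum_pos (fun n => by positivity) 0 (by positivity)
    rw [hsum.tsum_eq] at this
    exact this.ne'
  · rw [e]; field_simp

/-! ### The Mellin transform of ψ(x) - x -/

/-- The error term `ψ(x) - x` of the prime number theorem. -/
noncomputable def psiErr (x : ℝ) : ℝ := Chebyshev.psi x - x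

/-- The error term `ψ(x) - x` without the contribution of the trivial zeros; by the classical explicit
formula it is `-∑ x^ρ / ρ - log 2π`, a fact which is not used. -/
noncomputable def psiW (x : ℝ) : ℝ := psiErr x - lam x

/-- The constant in the Mellin transform of `psiW`, collected from the Gamma factor and the pole
of `ζ`. -/
noncomputable def kap : ℝ := 1 + Real.log Real.pi / 2 + Real.eulerMascheroniConstant / 2

/-- The logarithmic derivative `ξ'/ξ` on the real line. It is real there; taking the real part makes
it a real-valued function. -/
noncomputable def xiL (s : ℝ) : ℝ := (deriv xi s / xi s).re

lemma psi_eq_sum_one (x : ℝ) :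
    Chebyshev.psi x = ∑ n ∈ Finset.Icc 1 ⌊x⌋₊, ArithmeticFunction.vonMangoldt n := by
  rw [Chebyshev.psi_eq_sum_Icc]
  symm
  refine Finset.sum_subset (fun n hn => ?_) (fun n h1 h2 => ?_)
  · simp at hn ⊢; omega
  · simp at h1 h2
    have : n = 0 := by omega
    simp [this]

lemma measurable_psiErr : Measurable psiErr :=
  Chebyshev.psi_mono.measurable.sub measurable_id

lemma measurable_psiW : Measurable psiW := measurable_psiErr.sub measurable_lam

lemma abs_psiErr_le {x : ℝ} (hx : 0 ≤ x) : |psiErr x| ≤ 7 * x := by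
  have h1 := Chebyshev.psi_le_const_mul_self hx
  have h2 := Chebyshev.psi_nonneg x
  have h3 : Real.log 4 ≤ 3 := by
    have := Real.log_le_sub_one_of_pos (x := 4) (by norm_num); linarith
  have : (Real.log 4 + 4) * x ≤ 7 * x := by gcongr; linarith
  unfold psiErr
  rw [abs_le]; constructor <;> linarith

lemma psi_mellin {s : ℝ} (hs : 1 < s) :
    IntegrableOn (fun x => Chebyshev.psi x * x ^ (-s - 1)) (Ioi 1) ∧
    (-deriv riemannZeta s / riemannZeta s) =
      ((s * ∫ x in Ioi (1:ℝ), Chebyshev.psi x * x ^ (-s - 1) : ℝ) : ℂ) := by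
  constructor
  · refine Integrable.mono' (g := fun x : ℝ => 7 * x ^ (-s))
      ((integrableOn_Ioi_rpow_of_lt (by linarith) one_pos).const_mul 7)
      ((Chebyshev.psi_mono.measurable.mul (by fun_prop)).aestronglyMeasurable) ?_
    refine (ae_restrict_iff' measurableSet_Ioi).2 (ae_of_all _ fun x hx => ?_)
    have hx0 : 0 < x := by have := mem_Ioi.1 hx; linarith
    have h2 := Chebyshev.psi_nonneg x
    have h1 : Chebyshev.psi x ≤ 7 * x := by
      have h1 := Chebyshev.psi_le_const_mul_self hx0.le
      have h3 : Real.log 4 ≤ 3 := by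
        have := Real.log_le_sub_one_of_pos (x := 4) (by norm_num); linarith
      have : (Real.log 4 + 4) * x ≤ 7 * x := by gcongr; linarith
      linarith
    rw [Real.norm_of_nonneg (by positivity), show (-s) = 1 + (-s - 1) by ring,
      Real.rpow_add hx0, Real.rpow_one, ← mul_assoc]
    rw [show 1 + (-s - 1) - 1 = -s - 1 by ring]
    gcongr
  · rw [← ArithmeticFunction.LSeries_vonMangoldt_eq_deriv_riemannZeta_div (by simpa using hs)]
    have := LSeries_eq_mul_integral_of_nonneg (fun n => ArithmeticFunction.vonMangoldt n) (r := 1)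
      zero_le_one (s := s) (by simpa using hs) ?_ (fun n => ArithmeticFunction.vonMangoldt_nonneg)
    · rw [this]
      push_cast
      congr 1
      refine Eq.trans ?_ integral_ofReal
      refine setIntegral_congr_fun measurableSet_Ioi fun x hx => ?_
      have hx0 : 0 < x := by have := mem_Ioi.1 hx; linarith
      rw [psi_eq_sum_one]
      have e : ((x ^ (-s - 1) : ℝ) : ℂ) = (x:ℂ) ^ (-((s:ℂ) + 1)) := by
        rw [Complex.ofReal_cpow hx0.le]
        push_cast
        ring_nf
      rw [← e, ← Complex.ofReal_sum, ← Complex.ofReal_mul]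
      rfl
    · refine Asymptotics.IsBigO.of_bound (Real.log 4 + 4) (Eventually.of_forall fun n => ?_)
      have := psi_eq_sum_one n
      rw [Nat.floor_natCast] at this
      rw [← this, Real.rpow_one, Real.norm_of_nonneg (Chebyshev.psi_nonneg _), Real.norm_natCast]
      exact Chebyshev.psi_le_const_mul_self (Nat.cast_nonneg n)

lemma psiErr_mellin {s : ℝ} (hs : 1 < s) :
    IntegrableOn (fun x => psiErr x * x ^ (-s - 1)) (Ioi 1) ∧
    s * ∫ x in Ioi (1:ℝ), psiErr x * x ^ (-s - 1) =
      (-deriv riemannZeta s / riemannZeta s).re - 1 - 1 / (s - 1) := by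
  obtain ⟨h1, h2⟩ := psi_mellin hs
  have h3 : IntegrableOn (fun x : ℝ => x ^ (-s)) (Ioi 1) :=
    integrableOn_Ioi_rpow_of_lt (by linarith) one_pos
  have h4 : EqOn (fun x => psiErr x * x ^ (-s - 1))
      (fun x => Chebyshev.psi x * x ^ (-s - 1) - x ^ (-s)) (Ioi 1) := by
    intro x hx
    have hx0 : 0 < x := by have := mem_Ioi.1 hx; linarith
    simp only [psiErr]
    rw [sub_mul, show (-s) = 1 + (-s - 1) by ring, Real.rpow_add hx0, Real.rpow_one,
      show 1 + (-s - 1) - 1 = -s - 1 by ring]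
  refine ⟨(h1.sub h3).congr_fun (fun x hx => (h4 hx).symm) measurableSet_Ioi, ?_⟩
  rw [setIntegral_congr_fun measurableSet_Ioi h4, integral_sub h1 h3,
    integral_Ioi_rpow_of_lt (by linarith) one_pos, h2, Complex.ofReal_re, Real.one_rpow, mul_sub]
  have : s - 1 ≠ 0 := by linarith
  have : -s + 1 ≠ 0 := by intro h; apply this; linarith
  field_simp
  ring

/-- `ξ'/ξ` from the factorisation `ξ(s) = s (s - 1) π^(-s/2) Γ(s/2) ζ(s)`. -/
lemma xiL_eq {s : ℝ} (hs : 1 < s) :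
    xiL s = 1 / s + 1 / (s - 1) - Real.log Real.pi / 2 +
      (Complex.digamma ((s / 2 : ℝ) : ℂ)).re / 2 + (deriv riemannZeta s / riemannZeta s).re := by
  have hre : 1 < (s:ℂ).re := by simpa using hs
  have hs0 : (s:ℂ) ≠ 0 := by intro h; rw [h] at hre; simp at hre; linarith
  have hs1 : (s:ℂ) - 1 ≠ 0 := by
    intro h; rw [sub_eq_zero.1 h] at hre; simp at hre
  have hev : xi =ᶠ[𝓝 (s:ℂ)] fun z => (z * (z - 1)) *
      (((Real.pi:ℂ) ^ (-z / 2) * (Complex.Gamma ∘ fun z => z / 2) z) * riemannZeta z) := by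
    have : {z : ℂ | 1 < z.re} ∈ 𝓝 (s:ℂ) :=
      (isOpen_lt continuous_const Complex.continuous_re).mem_nhds hre
    filter_upwards [this] with z hz
    have hz' : 1 < z.re := hz
    rw [xi_eq (by linarith) (by rintro rfl; simp at hz'), Complex.Gammaℝ_def]
    rfl
  have hpi : (Real.pi:ℂ) ≠ 0 := by exact_mod_cast Real.pi_ne_zero
  have hne : ∀ m : ℕ, (s:ℂ) / 2 ≠ -m := by
    intro m h
    have := congrArg Complex.re h
    simp at this
    have : (0:ℝ) ≤ m := Nat.cast_nonneg m
    linarith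
  have hG := Complex.differentiableAt_Gamma ((s:ℂ)/2) hne
  have hG0 : Complex.Gamma ((s:ℂ)/2) ≠ 0 := Complex.Gamma_ne_zero hne
  have hhalf : HasDerivAt (fun z : ℂ => z / 2) (1/2) (s:ℂ) := (hasDerivAt_id _).div_const 2
  have hGd : DifferentiableAt ℂ (Complex.Gamma ∘ fun z => z / 2) (s:ℂ) :=
    DifferentiableAt.comp _ hG hhalf.differentiableAt
  have hP : HasDerivAt (fun z : ℂ => (Real.pi:ℂ) ^ (-z / 2))
      ((Real.pi:ℂ) ^ (-(s:ℂ) / 2) * Complex.log Real.pi * (-1 / 2)) (s:ℂ) :=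
    HasDerivAt.const_cpow ((hasDerivAt_id _).neg.div_const 2) (Or.inl hpi)
  have hP0 : (Real.pi:ℂ) ^ (-(s:ℂ) / 2) ≠ 0 := by simp [Complex.cpow_eq_zero_iff, hpi]
  have hZ := differentiableAt_riemannZeta (s := (s:ℂ)) (sub_ne_zero.1 hs1)
  have hZ0 := riemannZeta_ne_zero_of_one_lt_re hre
  have key : deriv xi s / xi s = 1 / (s:ℂ) + 1 / (s - 1) + (-(1/2) * Complex.log Real.pi +
      Complex.digamma ((s:ℂ)/2) * (1/2) + deriv riemannZeta s / riemannZeta s) := by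
    rw [hev.deriv_eq, hev.eq_of_nhds, ← logDeriv_apply (f := fun z : ℂ => (z * (z - 1)) *
      (((Real.pi:ℂ) ^ (-z / 2) * (Complex.Gamma ∘ fun z => z / 2) z) * riemannZeta z))]
    rw [logDeriv_mul (f := fun z : ℂ => z * (z - 1)) (g := fun z : ℂ =>
        ((Real.pi:ℂ) ^ (-z / 2) * (Complex.Gamma ∘ fun z => z / 2) z) * riemannZeta z) _ (mul_ne_zero hs0 hs1)
      (mul_ne_zero (mul_ne_zero hP0 hG0) hZ0) (by fun_prop)
      ((hP.differentiableAt.mul hGd).mul hZ),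
      logDeriv_mul (f := fun z : ℂ => z) (g := fun z : ℂ => z - 1) _ hs0 hs1 (by fun_prop) (by fun_prop),
      logDeriv_mul (f := fun z : ℂ => (Real.pi:ℂ) ^ (-z / 2) * (Complex.Gamma ∘ fun z => z / 2) z)
        (g := riemannZeta) _ (mul_ne_zero hP0 hG0) hZ0 (hP.differentiableAt.mul hGd) hZ,
      logDeriv_mul (f := fun z : ℂ => (Real.pi:ℂ) ^ (-z / 2)) (g := Complex.Gamma ∘ fun z => z / 2)
        _ hP0 hG0 hP.differentiableAt hGd,
      logDeriv_comp (f := Complex.Gamma) (g := fun z : ℂ => z / 2) hG hhalf.differentiableAt, hhalf.deriv, logDeriv_apply (fun z : ℂ => _ ^ _),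
      hP.deriv, ← Complex.digamma_def, logDeriv_apply riemannZeta, logDeriv_apply (fun z : ℂ => z),
      logDeriv_apply (fun z : ℂ => z - 1)]
    have : deriv (fun z : ℂ => z - 1) s = 1 := ((hasDerivAt_id _).sub_const 1).deriv
    rw [this]
    have : deriv (fun z : ℂ => z) s = 1 := (hasDerivAt_id _).deriv
    rw [this]
    congr 3
    field_simp
  unfold xiL
  rw [key, ← Complex.ofReal_log Real.pi_pos.le]
  have e1 : (1 / (s:ℂ) + 1 / (s - 1)) = ((1 / s + 1 / (s - 1) : ℝ) : ℂ) := by push_cast; rfl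
  have e2 : (-(1/2) * (Real.log Real.pi : ℂ)) = ((-(1/2) * Real.log Real.pi : ℝ) : ℂ) := by
    push_cast; rfl
  have e3 : Complex.digamma ((s:ℂ)/2) * (1/2) = ((1/2 : ℝ) : ℂ) * Complex.digamma ((s / 2 : ℝ) : ℂ) := by
    push_cast; ring
  rw [e1, e2, e3]
  simp only [Complex.add_re, Complex.ofReal_re, Complex.re_ofReal_mul]
  ring

/-- Up to a constant, `-ξ'/ξ` is `s` times the Mellin transform of `psiW`. -/
lemma psiW_mellin {s : ℝ} (hs : 1 < s) :
    IntegrableOn (fun x => psiW x * x ^ (-s - 1)) (Ioi 1) ∧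
    s * ∫ x in Ioi (1:ℝ), psiW x * x ^ (-s - 1) = -xiL s - kap := by
  obtain ⟨h1, h2⟩ := psiErr_mellin hs
  obtain ⟨h3, h4⟩ := lam_integral (s := s) (by linarith)
  have e : (fun x => psiW x * x ^ (-s - 1)) =
      fun x => psiErr x * x ^ (-s - 1) - lam x * x ^ (-s - 1) := by
    ext x; simp only [psiW]; ring
  rw [e]
  refine ⟨h1.sub h3, ?_⟩
  rw [integral_sub h1 h3, mul_sub, h2, h4, xiL_eq hs]
  have h5 := digamma_re_add_one (x := s / 2) (by linarith)
  rw [add_comm] at h5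
  rw [h5, kap, neg_div, Complex.neg_re]
  have : s ≠ 0 := by linarith
  field_simp
  ring

/-! ### An explicit formula without zeros -/

/-- The Mellin transform of a primitive, by Fubini. -/
lemma integral_primitive_mul_rpow {f : ℝ → ℝ} (hf : IntegrableOn f (Ioi 1)) {c : ℝ} (hc : 0 < c) :
    ∫ x in Ioi (1:ℝ), (∫ t in Ioc 1 x, f t) * x ^ (-c - 1) =
      (∫ t in Ioi (1:ℝ), f t * t ^ (-c)) / c := by
  set μ := volume.restrict (Ioi (1:ℝ)) with hμ
  have hg : Integrable (fun x : ℝ => x ^ (-c - 1)) μ :=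
    integrableOn_Ioi_rpow_of_lt (by linarith) one_pos
  have hS : MeasurableSet {p : ℝ × ℝ | p.2 ≤ p.1} := measurableSet_le measurable_snd measurable_fst
  have hI : Integrable (Function.uncurry fun x t =>
      {p : ℝ × ℝ | p.2 ≤ p.1}.indicator (fun p => p.1 ^ (-c - 1) * f p.2) (x, t)) (μ.prod μ) :=
    (hg.mul_prod hf).indicator hS
  have hsw := integral_integral_swap hI
  have e1 : ∫ x in Ioi (1:ℝ), (∫ t in Ioc 1 x, f t) * x ^ (-c - 1) =
      ∫ x, ∫ t, {p : ℝ × ℝ | p.2 ≤ p.1}.indicator (fun p => p.1 ^ (-c - 1) * f p.2) (x, t) ∂μ ∂μ := by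
    refine setIntegral_congr_fun measurableSet_Ioi fun x hx => ?_
    rw [mul_comm, ← integral_const_mul]
    have : ∀ t, {p : ℝ × ℝ | p.2 ≤ p.1}.indicator (fun p => p.1 ^ (-c - 1) * f p.2) (x, t) =
        (Iic x).indicator (fun t => x ^ (-c - 1) * f t) t := by
      intro t; simp [indicator]
    simp_rw [this]
    rw [integral_indicator measurableSet_Iic, hμ, Measure.restrict_restrict measurableSet_Iic,
      inter_comm, Ioi_inter_Iic]
  have e2 : ∫ t, ∫ x, {p : ℝ × ℝ | p.2 ≤ p.1}.indicator (fun p => p.1 ^ (-c - 1) * f p.2) (x, t) ∂μ ∂μ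
      = ∫ t in Ioi (1:ℝ), f t * t ^ (-c) / c := by
    refine setIntegral_congr_fun measurableSet_Ioi fun t ht => ?_
    have ht' : 1 < t := ht
    have : ∀ x, {p : ℝ × ℝ | p.2 ≤ p.1}.indicator (fun p => p.1 ^ (-c - 1) * f p.2) (x, t) =
        (Ici t).indicator (fun x => x ^ (-c - 1) * f t) x := by
      intro t; simp [indicator]
    simp_rw [this]
    rw [integral_indicator measurableSet_Ici, hμ, Measure.restrict_restrict measurableSet_Ici,
      inter_eq_left.2 (show Ici t ⊆ Ioi 1 from fun x hx => lt_of_lt_of_le ht' hx), integral_mul_const, integral_Ici_eq_integral_Ioi,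
      integral_Ioi_rpow_of_lt (by linarith) (by linarith)]
    rw [show -c - 1 + 1 = -c by ring, neg_div_neg_eq]
    ring
  rw [e1, hsw, e2, integral_div]

lemma exp_image_Ioi_zero : Real.exp '' Ioi 0 = Ioi 1 := by
  ext y; constructor
  · rintro ⟨x, hx, rfl⟩; simpa using hx
  · intro hy
    have hy' : 1 < y := hy
    exact ⟨Real.log y, Real.log_pos hy', Real.exp_log (by linarith)⟩

/-- The Mellin transform of `x ^ a * G (log x)` is a Laplace transform of `G`. -/
lemma integral_comp_log (G : ℝ → ℝ) (a s : ℝ) :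
    ∫ x in Ioi (1:ℝ), x ^ a * G (Real.log x) * x ^ (-s - 1) =
      ∫ u in Ioi (0:ℝ), G u * Real.exp (-(s - a) * u) := by
  rw [← exp_image_Ioi_zero, integral_image_eq_integral_abs_deriv_smul measurableSet_Ioi
    (fun x _ => (Real.hasDerivAt_exp x).hasDerivWithinAt) Real.exp_injective.injOn]
  refine setIntegral_congr_fun measurableSet_Ioi fun u _ => ?_
  simp only [Real.log_exp, smul_eq_mul, abs_of_pos (Real.exp_pos u), ← Real.exp_mul]
  rw [show Real.exp u * (Real.exp (u * a) * G u * Real.exp (u * (-s - 1))) =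
    G u * (Real.exp u * (Real.exp (u * a) * Real.exp (u * (-s - 1)))) by ring,
    ← Real.exp_add, ← Real.exp_add]
  ring_nf

lemma deriv_xi_real (x : ℝ) : (deriv xi x).im = 0 ∧ (xi x).im = 0 := by
  have h (y : ℝ) : (xi y).im = 0 := by
    have := xi_conj (y:ℂ)
    rw [Complex.conj_ofReal] at this
    exact Complex.conj_eq_iff_im.1 this.symm
  refine ⟨?_, h x⟩
  have h1 := (differentiable_xi (x:ℂ)).hasDerivAt.comp_ofReal
  have h2 := (Complex.imCLM.hasFDerivAt.comp_hasDerivAt x h1)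
  have h3 : (⇑Complex.imCLM ∘ fun y : ℝ => xi y) = fun _ => 0 := by
    ext y; simp [h y]
  rw [h3] at h2
  have := h2.unique (hasDerivAt_const x (0:ℝ))
  simpa using this

/-- The Laplace representation of `schwarz_transform` for `ξ'/ξ`, taken on the half plane
`Re s ≥ b/2` with `b > 1`, strictly inside `Re s > 1/2` so that no boundary values are needed. -/
lemma xi_schwarz (hRH : RiemannHypothesis) {b : ℝ} (hb : 1 < b) :
    ∃ G : ℝ → ℝ, Continuous G ∧ (∀ u, |G u| ≤ G 0) ∧ ∀ s : ℝ, b < s →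
      ∫ u in Ioi (0:ℝ), G u * Real.exp (-(s - b / 2) * u) =
        -xiL s / (s * (s - b)) + xiL b * (2 * s - b) / (b * s * (s - b)) := by
  -- With `s = 1/2 + ε + w = b/2 + w`, the point `a = b/2` of `schwarz_transform` is `s = b`.
  set ε := (b - 1) / 2 with hε
  have hε0 : 0 < ε := by rw [hε]; linarith
  have hdiff : DifferentiableOn ℂ (fun s => deriv xi s / xi s) {s | 1 / 2 < s.re} := by
    refine DifferentiableOn.div ?_ differentiable_xi.differentiableOn
      (fun s hs => xi_ne_zero hRH hs)
    exact (differentiable_xi.contDiff (n := 2)).differentiable_deriv_two.differentiableOn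
  have hQd : DifferentiableOn ℂ (fun w : ℂ => deriv xi (1 / 2 + w) / xi (1 / 2 + w)) {w | 0 < w.re} :=
    hdiff.comp (f := fun w : ℂ => 1 / 2 + w) (by fun_prop) (fun w hw => by
      have : 0 < w.re := hw
      simp; linarith)
  set Q : ℂ → ℂ := fun w : ℂ => deriv xi (1 / 2 + w) / xi (1 / 2 + w) with hQ
  have hqd : DifferentiableOn ℂ (fun w : ℂ => Q (w + ε)) {w | -ε < w.re} :=
    hQd.comp (f := fun w : ℂ => w + ε) (by fun_prop) (fun w hw => by
      have : -ε < w.re := hw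
      simp; linarith)
  have hQpos : ∀ w : ℂ, 0 < w.re → 0 ≤ (Q w).re := fun w hw =>
    xi_logDeriv_re_nonneg hRH (by simp; linarith)
  have hval (w : ℝ) : (Q ((w:ℂ) + ε)) = deriv xi ((b / 2 + w : ℝ) : ℂ) / xi ((b / 2 + w : ℝ) : ℂ) := by
    have : 1 / 2 + ((w:ℂ) + ε) = ((b / 2 + w : ℝ) : ℂ) := by
      rw [hε]; push_cast; ring
    simp only [hQ]; rw [this]
  obtain ⟨G, hG1, hG2, hG3⟩ := schwarz_transform (q := fun w => Q (w + ε)) hε0 hqd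
    (C := ‖Q 1‖ * (1 + ε) ^ 2 / ε) (by positivity) (fun w hw => by
      have h1 := herglotz_growth hQd hQpos (w := w + ε) (by simp; linarith)
      refine h1.trans ?_
      have h2 : ‖w + (ε:ℂ)‖ + 1 ≤ (1 + ε) * (1 + ‖w‖) := by
        have : ‖w + (ε:ℂ)‖ ≤ ‖w‖ + ε := by
          refine (norm_add_le _ _).trans ?_
          simp [abs_of_pos hε0]
        nlinarith [norm_nonneg w]
      have h3 : ε ≤ (w + (ε:ℂ)).re := by simp; linarith
      calc ‖Q 1‖ * (‖w + (ε:ℂ)‖ + 1) ^ 2 / (w + (ε:ℂ)).re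
          ≤ ‖Q 1‖ * ((1 + ε) * (1 + ‖w‖)) ^ 2 / ε := by gcongr
        _ = _ := by ring)
    (fun x hx => by
      rw [hval x, Complex.div_im, (deriv_xi_real _).1, (deriv_xi_real _).2]; simp)
    (fun w hw => hQpos _ (by simp; linarith)) (a := b / 2) (by linarith)
  refine ⟨G, hG1, hG2, fun s hs => ?_⟩
  rw [hG3 (s - b / 2) (by linarith) (by intro h; linarith), hval, hval]
  rw [show b / 2 + (s - b / 2) = s by ring, show b / 2 + b / 2 = b by ring]
  have h1 : s - b ≠ 0 := by linarith
  have h2 : s ≠ 0 := by linarith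
  have h3 : b ≠ 0 := by linarith
  rw [show (b / 2) ^ 2 - (s - b / 2) ^ 2 = -(s * (s - b)) by ring]
  change (xiL s - (s - b / 2) / (b / 2) * xiL b) / _ = _
  field_simp
  ring

/-- The left side is `x ^ (b / 2) * G (log x)` with `G` from `xi_schwarz`, because the two have the same
Mellin transform, and `|G| ≤ G 0`; the value `G 0 = 2 ξL(b) / b` is read off at `x → 1`. This replaces
the sum over zeros of the explicit formula by a bound of the correct order. -/
theorem psiW_bound (hRH : RiemannHypothesis) {b : ℝ} (hb : 1 < b) {x : ℝ} (hx : 1 < x) :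
    |x ^ b * (∫ t in Ioc 1 x, psiW t * t ^ (-b - 1)) + kap * (x ^ b - 1) / b +
      xiL b * (1 + x ^ b) / b| ≤ x ^ (b / 2) * (2 * xiL b / b) := by
  obtain ⟨G, hGc, hGb, hG⟩ := xi_schwarz hRH hb
  have hW := (psiW_mellin hb).1
  set f : ℝ → ℝ := fun t => psiW t * t ^ (-b - 1) with hf
  set h : ℝ → ℝ := fun x => x ^ b * (∫ t in Ioc 1 x, f t) + kap * (x ^ b - 1) / b +
      xiL b * (1 + x ^ b) / b with hh
  set f' := (Ioi (1:ℝ)).indicator f with hf'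
  have hf'i : Integrable f' := (integrable_indicator_iff measurableSet_Ioi).2 hW
  have hJc : Continuous (fun x => ∫ t in (1:ℝ)..x, f' t) :=
    intervalIntegral.continuous_primitive (fun _ _ => hf'i.intervalIntegrable) 1
  have hJ (x : ℝ) (hx : 1 ≤ x) : ∫ t in Ioc 1 x, f t = ∫ t in (1:ℝ)..x, f' t := by
    rw [intervalIntegral.integral_of_le hx]
    refine setIntegral_congr_fun measurableSet_Ioc fun t ht => ?_
    rw [hf', indicator_of_mem (show t ∈ Ioi 1 from ht.1)]
  set h' : ℝ → ℝ := fun x => x ^ b * (∫ t in (1:ℝ)..x, f' t) + kap * (x ^ b - 1) / b +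
      xiL b * (1 + x ^ b) / b with hh'
  have hhh (x : ℝ) (hx : 1 ≤ x) : h x = h' x := by simp only [hh, hh', hJ x hx]
  have hpc (c : ℝ) : ContinuousOn (fun x : ℝ => x ^ c) (Ici 1) := fun x hx =>
    (Real.continuousAt_rpow_const x c (Or.inl (by have := mem_Ici.1 hx; linarith))).continuousWithinAt
  have hh'c : ContinuousOn h' (Ici 1) := by
    have := hpc b
    have := hJc.continuousOn (s := Ici 1)
    fun_prop
  have hlog : ContinuousOn Real.log (Ici 1) :=
    Real.continuousOn_log.mono fun x hx => by
      have := mem_Ici.1 hx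
      simp; linarith
  have hGlc : ContinuousOn (fun x => x ^ (b/2) * G (Real.log x)) (Ici 1) :=
    (hpc _).mul (hGc.comp_continuousOn hlog)
  have hDc : ContinuousOn (fun x => h' x - x ^ (b/2) * G (Real.log x)) (Ici 1) := hh'c.sub hGlc
  have hJb (x : ℝ) (hx : 1 ≤ x) : |∫ t in (1:ℝ)..x, f' t| ≤ ∫ t, |f' t| := by
    rw [intervalIntegral.integral_of_le hx]
    refine (abs_integral_le_integral_abs).trans ?_
    exact setIntegral_le_integral hf'i.abs (ae_of_all _ fun _ => abs_nonneg _)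
  have key : ∀ x, 1 < x → h' x - x ^ (b/2) * G (Real.log x) = 0 := by
    refine mellin_unique (hDc.mono Ioi_subset_Ici_self) (c := b) (s₀ := b)
      (K := (∫ t, |f' t|) + |kap| / b + |xiL b| * 2 / b + G 0) (fun x hx => ?_) (fun s hs => ?_)
    · have hx0 : 0 < x := by linarith
      have hb1 : 1 ≤ x ^ b := Real.one_le_rpow hx.le (by linarith)
      have h1 : |x ^ b * ∫ t in (1:ℝ)..x, f' t| ≤ (∫ t, |f' t|) * x ^ b := by
        rw [abs_mul, abs_of_nonneg (by positivity), mul_comm]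
        gcongr; exact hJb x hx.le
      have h2 : |kap * (x ^ b - 1) / b| ≤ |kap| / b * x ^ b := by
        rw [abs_div, abs_mul, abs_of_nonneg (show 0 ≤ x ^ b - 1 by linarith),
          abs_of_pos (show 0 < b by linarith), div_mul_eq_mul_div]
        gcongr; linarith
      have h3 : |xiL b * (1 + x ^ b) / b| ≤ |xiL b| * 2 / b * x ^ b := by
        rw [abs_div, abs_mul, abs_of_nonneg (show 0 ≤ 1 + x ^ b by linarith),
          abs_of_pos (show 0 < b by linarith), div_mul_eq_mul_div, mul_assoc]
        gcongr; linarith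
      have h4 : |x ^ (b/2) * G (Real.log x)| ≤ G 0 * x ^ b := by
        rw [abs_mul, abs_of_nonneg (by positivity), mul_comm]
        have := hGb (Real.log x)
        have h5 : x ^ (b/2) ≤ x ^ b := Real.rpow_le_rpow_of_exponent_le hx.le (by linarith)
        have h0 : 0 ≤ G 0 := (abs_nonneg _).trans (hGb 0)
        gcongr
      have e1 := abs_sub (h' x) (x ^ (b/2) * G (Real.log x))
      have e2 : |h' x| ≤ |x ^ b * ∫ t in (1:ℝ)..x, f' t| + |kap * (x ^ b - 1) / b| +
        |xiL b * (1 + x ^ b) / b| := by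
        simp only [hh']
        exact abs_add_three _ _ _
      linarith
    · have hs0 : 0 < s := by linarith
      have hs1 : 0 < s - b := by linarith
      have p1 : IntegrableOn (fun x : ℝ => x ^ (-(s - b) - 1)) (Ioi 1) :=
        integrableOn_Ioi_rpow_of_lt (by linarith) one_pos
      have p2 : IntegrableOn (fun x : ℝ => x ^ (-s - 1)) (Ioi 1) :=
        integrableOn_Ioi_rpow_of_lt (by linarith) one_pos
      have v1 : ∫ x in Ioi (1:ℝ), x ^ (-(s - b) - 1) = 1 / (s - b) := by
        rw [integral_Ioi_rpow_of_lt (by linarith) one_pos, Real.one_rpow,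
          show -(s - b) - 1 + 1 = -(s - b) by ring, neg_div_neg_eq]
      have v2 : ∫ x in Ioi (1:ℝ), x ^ (-s - 1) = 1 / s := by
        rw [integral_Ioi_rpow_of_lt (by linarith) one_pos, Real.one_rpow,
          show -s - 1 + 1 = -s by ring, neg_div_neg_eq]
      have p0 : IntegrableOn (fun x : ℝ => (∫ t in (1:ℝ)..x, f' t) * x ^ (-(s - b) - 1)) (Ioi 1) := by
        refine Integrable.bdd_mul (c := ∫ t, |f' t|) p1 hJc.aestronglyMeasurable ?_
        exact (ae_restrict_iff' measurableSet_Ioi).2 (ae_of_all _ fun x hx => hJb x (le_of_lt hx))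
      have v0 : ∫ x in Ioi (1:ℝ), (∫ t in (1:ℝ)..x, f' t) * x ^ (-(s - b) - 1) =
          (-xiL s - kap) / (s * (s - b)) := by
        have := integral_primitive_mul_rpow hW hs1
        rw [setIntegral_congr_fun measurableSet_Ioi (fun x hx => by
          rw [← hJ x (le_of_lt hx)]), this, ← (psiW_mellin (hb.trans hs)).2]
        have : ∫ t in Ioi (1:ℝ), f t * t ^ (-(s - b)) = ∫ t in Ioi (1:ℝ), psiW t * t ^ (-s - 1) := by
          refine setIntegral_congr_fun measurableSet_Ioi fun t ht => ?_
          have ht0 : 0 < t := by have := mem_Ioi.1 ht; linarith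
          simp only [hf]
          rw [mul_assoc, ← Real.rpow_add ht0]
          ring_nf
        rw [this]
        field_simp
      have p3 : IntegrableOn (fun x => x ^ (b/2) * G (Real.log x) * x ^ (-s - 1)) (Ioi 1) := by
        refine Integrable.mono' (g := fun x => G 0 * x ^ (-(s - b) - 1)) (p1.const_mul _) ?_ ?_
        · refine ContinuousOn.aestronglyMeasurable ?_ measurableSet_Ioi
          exact (hGlc.mul (hpc _)).mono Ioi_subset_Ici_self
        · refine (ae_restrict_iff' measurableSet_Ioi).2 (ae_of_all _ fun x hx => ?_)
          have hx1 : 1 < x := hx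
          have hx0 : 0 < x := by linarith
          rw [norm_mul, norm_mul, Real.norm_of_nonneg (by positivity : 0 ≤ x ^ (b/2)),
            Real.norm_of_nonneg (by positivity : 0 ≤ x ^ (-s-1)), Real.norm_eq_abs]
          have := hGb (Real.log x)
          calc x ^ (b/2) * |G (Real.log x)| * x ^ (-s - 1) ≤ x ^ b * G 0 * x ^ (-s - 1) := by
                gcongr
                · exact hx1.le
                · linarith
            _ = G 0 * x ^ (-(s - b) - 1) := by
                rw [show -(s - b) - 1 = b + (-s - 1) by ring, Real.rpow_add hx0]; ring
      have v3 := integral_comp_log G (b/2) s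
      rw [hG s hs] at v3
      have e : ∀ x ∈ Ioi (1:ℝ), (h' x - x ^ (b/2) * G (Real.log x)) * x ^ (-s - 1) =
          (∫ t in (1:ℝ)..x, f' t) * x ^ (-(s - b) - 1) + (kap + xiL b) / b * x ^ (-(s - b) - 1) +
          (xiL b - kap) / b * x ^ (-s - 1) - x ^ (b/2) * G (Real.log x) * x ^ (-s - 1) := by
        intro x hx
        have hx0 : 0 < x := by have := mem_Ioi.1 hx; linarith
        simp only [hh']
        rw [show -(s - b) - 1 = b + (-s - 1) by ring, Real.rpow_add hx0]
        ring
      have p01 : IntegrableOn (fun x : ℝ => (∫ t in (1:ℝ)..x, f' t) * x ^ (-(s - b) - 1) +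
          (kap + xiL b) / b * x ^ (-(s - b) - 1)) (Ioi 1) := p0.add (p1.const_mul _)
      have p012 : IntegrableOn (fun x : ℝ => (∫ t in (1:ℝ)..x, f' t) * x ^ (-(s - b) - 1) +
          (kap + xiL b) / b * x ^ (-(s - b) - 1) + (xiL b - kap) / b * x ^ (-s - 1)) (Ioi 1) :=
        p01.add (p2.const_mul _)
      rw [setIntegral_congr_fun measurableSet_Ioi e, integral_sub p012 p3,
        integral_add p01 (p2.const_mul _), integral_add p0 (p1.const_mul _),
        integral_const_mul, integral_const_mul, v0, v1, v2, v3]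
      have : b ≠ 0 := by linarith
      field_simp
      ring
  have hG0 : G 0 = 2 * xiL b / b := by
    have t1 : Tendsto (fun x => h' x - x ^ (b/2) * G (Real.log x)) (𝓝[>] 1)
        (𝓝 (h' 1 - 1 ^ (b/2) * G (Real.log 1))) :=
      ((hDc 1 self_mem_Ici).mono Ioi_subset_Ici_self).tendsto
    have t2 : Tendsto (fun x => h' x - x ^ (b/2) * G (Real.log x)) (𝓝[>] 1) (𝓝 0) := by
      refine tendsto_const_nhds.congr' ?_
      filter_upwards [self_mem_nhdsWithin] with x hx
      exact (key x hx).symm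
    have := tendsto_nhds_unique t1 t2
    simp only [hh', intervalIntegral.integral_same, Real.log_one, Real.one_rpow] at this
    have e : G 0 = xiL b * (1 + 1) / b := by
      rw [sub_self, mul_zero, mul_zero, zero_div] at this
      linarith
    rw [e]; ring
  change |h x| ≤ _
  rw [hhh x hx.le, sub_eq_zero.1 (key x hx), abs_mul, abs_of_nonneg (by positivity), ← hG0]
  gcongr
  exact hGb _

/-! ### Bounds for the tail integral of (ψ(t) - t) / t² -/

/-- The constant `ξ'/ξ(1) = 1 + (γ - log 4π) / 2`, classically `∑ 1 / ρ` over the nontrivial zeros. -/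
noncomputable def bet : ℝ := 1 + (Real.eulerMascheroniConstant - Real.log (4 * Real.pi)) / 2

lemma xiL_one : xiL 1 = bet := by
  have h : HasDerivAt xi (completedRiemannZeta₀ 1) 1 := by
    have h0 := (differentiable_completedZeta₀ 1).hasDerivAt
    have h1 : HasDerivAt (fun s : ℂ => s * (s - 1)) 1 1 := by
      have := (hasDerivAt_id (1:ℂ)).mul ((hasDerivAt_id (1:ℂ)).sub_const 1)
      exact this.congr_deriv (by simp)
    have := (h1.mul h0).add_const 1
    exact this.congr_deriv (by simp)
  unfold xiL
  rw [Complex.ofReal_one, h.deriv, xi_one, div_one, completedRiemannZeta₀_one]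
  have : (4 * (Real.pi:ℂ)) = ((4 * Real.pi : ℝ) : ℂ) := by push_cast; rfl
  rw [this, ← Complex.ofReal_log (by positivity)]
  have : ((Real.eulerMascheroniConstant : ℂ) - (Real.log (4 * Real.pi) : ℂ)) / 2 + 1 = (bet : ℂ) := by
    unfold bet; push_cast; ring
  rw [this, Complex.ofReal_re]

lemma bet_nonneg (hRH : RiemannHypothesis) : 0 ≤ bet := by
  rw [← xiL_one]
  exact xi_logDeriv_re_nonneg hRH (by norm_num)

lemma kap_sub_bet : kap - bet = Real.log (2 * Real.pi) := by
  unfold kap bet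
  have hp := Real.pi_pos.ne'
  rw [Real.log_mul (by norm_num) hp, Real.log_mul (by norm_num) hp,
    show (4:ℝ) = 2 ^ 2 by norm_num, Real.log_pow]
  push_cast; ring

/-- The limit `b → 1` of `psiW_bound`. -/
lemma psiW_bound_one (hRH : RiemannHypothesis) {x : ℝ} (hx : 1 < x) :
    |x * (∫ t in Ioc 1 x, psiW t * t ^ (-1 - 1 : ℝ)) + kap * (x - 1) +
      bet * (1 + x)| ≤ Real.sqrt x * (2 * bet) := by
  have hx0 : 0 < x := by linarith
  have c1 : ContinuousAt xiL 1 := by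
    unfold xiL
    have h1 : ContinuousAt (fun s : ℂ => deriv xi s / xi s) ((1:ℝ):ℂ) := by
      refine ContinuousAt.div ?_ differentiable_xi.continuous.continuousAt (by simp [xi_one])
      exact (differentiable_xi.contDiff (n := 2)).differentiable_deriv_two.continuous.continuousAt
    have h2 := ContinuousAt.comp (f := fun s : ℝ => (s:ℂ)) (x := (1:ℝ)) h1
      Complex.continuous_ofReal.continuousAt
    exact Complex.continuous_re.continuousAt.comp h2
  have tb : Tendsto (fun b : ℝ => b) (𝓝[>] 1) (𝓝 1) := tendsto_nhdsWithin_of_tendsto_nhds tendsto_id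
  have tL : Tendsto xiL (𝓝[>] 1) (𝓝 bet) := by
    rw [← xiL_one]; exact c1.tendsto.comp tb
  have tx (c : ℝ) : Tendsto (fun b : ℝ => x ^ (c * b)) (𝓝[>] 1) (𝓝 (x ^ c)) := by
    have : ContinuousAt (fun b : ℝ => x ^ (c * b)) 1 :=
      (Real.continuousAt_const_rpow hx0.ne').comp (by fun_prop)
    have h := this.tendsto.comp tb
    rw [mul_one] at h
    exact h
  have tI : Tendsto (fun b : ℝ => ∫ t in Ioc 1 x, psiW t * t ^ (-b - 1)) (𝓝[>] 1)
      (𝓝 (∫ t in Ioc 1 x, psiW t * t ^ (-1 - 1 : ℝ))) := by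
    refine tendsto_integral_filter_of_dominated_convergence
      (fun t => x * ‖psiW t * t ^ (-2 - 1 : ℝ)‖) ?_ ?_ ?_ ?_
    · exact Eventually.of_forall fun b =>
        (measurable_psiW.mul (by fun_prop)).aestronglyMeasurable
    · filter_upwards [self_mem_nhdsWithin] with b hb
      refine (ae_restrict_iff' measurableSet_Ioc).2 (ae_of_all _ fun t ht => ?_)
      have ht0 : 0 < t := by linarith [ht.1]
      have hb' : 1 < b := hb
      rw [norm_mul, norm_mul, Real.norm_of_nonneg (by positivity : 0 ≤ t ^ (-b-1)),
        Real.norm_of_nonneg (by positivity : 0 ≤ t ^ (-2-1:ℝ))]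
      have : t ^ (-b - 1) ≤ x * t ^ (-2 - 1 : ℝ) := by
        calc t ^ (-b - 1) ≤ t ^ (1 + (-2 - 1) : ℝ) :=
              Real.rpow_le_rpow_of_exponent_le ht.1.le (by linarith)
          _ = t * t ^ (-2 - 1 : ℝ) := by rw [Real.rpow_add ht0, Real.rpow_one]
          _ ≤ _ := by gcongr; exact ht.2
      calc ‖psiW t‖ * t ^ (-b - 1) ≤ ‖psiW t‖ * (x * t ^ (-2 - 1 : ℝ)) := by gcongr
        _ = _ := by ring
    · exact (((psiW_mellin (s := 2) (by norm_num)).1.mono_set Ioc_subset_Ioi_self).norm).const_mul x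
    · refine (ae_restrict_iff' measurableSet_Ioc).2 (ae_of_all _ fun t ht => ?_)
      have ht0 : 0 < t := by linarith [ht.1]
      refine Tendsto.const_mul _ ?_
      have : ContinuousAt (fun b : ℝ => t ^ (-b - 1)) 1 :=
        (Real.continuousAt_const_rpow ht0.ne').comp (by fun_prop)
      exact this.tendsto.comp tb
  have tx1 : Tendsto (fun b : ℝ => x ^ b) (𝓝[>] 1) (𝓝 x) := by simpa using tx 1
  have tx2 : Tendsto (fun b : ℝ => x ^ (b / 2)) (𝓝[>] 1) (𝓝 (Real.sqrt x)) := by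
    rw [Real.sqrt_eq_rpow]
    refine (tx (1/2)).congr fun b => by ring_nf
  have T1 := (((tx1.mul tI).add (((tx1.sub_const 1).const_mul kap).div tb one_ne_zero)).add
    ((tL.mul (tx1.const_add 1)).div tb one_ne_zero)).abs
  have T2 := tx2.mul ((tL.const_mul 2).div tb one_ne_zero)
  rw [div_one, div_one] at T1
  rw [div_one] at T2
  refine le_of_tendsto_of_tendsto T1 T2 ?_
  filter_upwards [self_mem_nhdsWithin] with b hb
  exact psiW_bound hRH hb hx

lemma lam_int_one : IntegrableOn (fun x => lam x * x ^ (-1 - 1 : ℝ)) (Ioi 1) :=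
  (lam_integral (s := 1) one_pos).1

/-- The tail integral `∫_x^∞ (ψ(t) - t) t⁻² dt`, written through the integral over `(1, x]` and a
constant, so that its convergence need not be known in advance: `tailI_sub` identifies differences,
and under the Riemann Hypothesis `tailI_bounds` shows that it tends to `0`. -/
noncomputable def tailI (x : ℝ) : ℝ :=
  -((∫ t in Ioc 1 x, psiErr t * t ^ (-1 - 1 : ℝ)) +
    (kap - (∫ t in Ioi (1:ℝ), lam t * t ^ (-1 - 1 : ℝ)) + bet))

lemma psiErr_int (x : ℝ) : IntegrableOn (fun t => psiErr t * t ^ (-1 - 1 : ℝ)) (Ioc 1 x) := by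
  refine Measure.integrableOn_of_bounded (M := 7) (by simp)
    (measurable_psiErr.mul (by fun_prop)).aestronglyMeasurable ?_
  refine (ae_restrict_iff' measurableSet_Ioc).2 (ae_of_all _ fun t ht => ?_)
  have ht0 : 0 < t := by linarith [ht.1]
  rw [norm_mul, Real.norm_of_nonneg (by positivity : 0 ≤ t ^ (-1-1:ℝ)), Real.norm_eq_abs]
  have h1 := abs_psiErr_le ht0.le
  have h2 : t ^ (-1 - 1 : ℝ) ≤ t ^ (-1 : ℝ) :=
    Real.rpow_le_rpow_of_exponent_le ht.1.le (by norm_num)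
  calc |psiErr t| * t ^ (-1 - 1 : ℝ) ≤ 7 * t * t ^ (-1:ℝ) := by gcongr
    _ = 7 := by rw [Real.rpow_neg_one]; field_simp

lemma tailI_sub {x y : ℝ} (hx : 1 ≤ x) (hxy : x ≤ y) :
    tailI x - tailI y = ∫ t in Ioc x y, psiErr t * t ^ (-1 - 1 : ℝ) := by
  have : ∫ t in Ioc 1 y, psiErr t * t ^ (-1 - 1 : ℝ) =
      (∫ t in Ioc 1 x, psiErr t * t ^ (-1 - 1 : ℝ)) + ∫ t in Ioc x y, psiErr t * t ^ (-1 - 1 : ℝ) := by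
    rw [← Ioc_union_Ioc_eq_Ioc hx hxy, setIntegral_union (by
      rw [Set.disjoint_left]; intro t h1 h2; exact absurd h2.1 (not_lt.2 h1.2)) measurableSet_Ioc
      ((psiErr_int y).mono_set (Ioc_subset_Ioc_right hxy))
      ((psiErr_int y).mono_set (Ioc_subset_Ioc_left hx))]
  unfold tailI
  rw [this]; ring

lemma lam_two_le : lam 2 ≤ 1 := by
  unfold lam
  have h : (1 - (2:ℝ) ^ (-2:ℝ)) = 3 / 4 := by
    rw [Real.rpow_neg (by norm_num), show (2:ℝ) = ((2:ℕ):ℝ) by norm_num, Real.rpow_natCast]; norm_num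
  rw [h]
  have := Real.one_sub_inv_le_log_of_pos (x := 3/4) (by norm_num)
  norm_num at this ⊢
  linarith

lemma log_two_pi_ge : 1 ≤ Real.log (2 * Real.pi) := by
  rw [Real.le_log_iff_exp_le (by positivity)]
  have := Real.exp_one_lt_d9
  have := Real.pi_gt_three
  linarith

/-- The Riemann Hypothesis bounds the tail integral by `2 bet / √x`, up to `log 2π / x`. The term
`log 2π = kap - bet` and the integral of `lam` over `(x, ∞)`, which lies in `[0, 1 / x]`, enter with
opposite signs, so the upper bound carries no term of order `1 / x`. -/
theorem tailI_bounds (hRH : RiemannHypothesis) {x : ℝ} (hx : 2 ≤ x) :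
    tailI x ≤ 2 * bet / Real.sqrt x ∧
      -(2 * bet / Real.sqrt x) - Real.log (2 * Real.pi) / x ≤ tailI x := by
  have hx1 : 1 < x := by linarith
  have hx0 : 0 < x := by linarith
  have hb := psiW_bound_one hRH hx1
  have hlamI := lam_int_one
  have e1 : ∫ t in Ioc 1 x, psiW t * t ^ (-1 - 1 : ℝ) =
      (∫ t in Ioc 1 x, psiErr t * t ^ (-1 - 1 : ℝ)) - ∫ t in Ioc 1 x, lam t * t ^ (-1 - 1 : ℝ) := by
    rw [← integral_sub (psiErr_int x) (hlamI.mono_set Ioc_subset_Ioi_self)]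
    refine integral_congr_ae (ae_of_all _ fun t => ?_)
    simp only [psiW]; ring
  have e2 : ∫ t in Ioi (1:ℝ), lam t * t ^ (-1 - 1 : ℝ) =
      (∫ t in Ioc 1 x, lam t * t ^ (-1 - 1 : ℝ)) + ∫ t in Ioi x, lam t * t ^ (-1 - 1 : ℝ) := by
    rw [← Ioc_union_Ioi_eq_Ioi hx1.le, setIntegral_union (by
      rw [Set.disjoint_left]; intro t h1 h2; exact absurd h2 (not_lt.2 h1.2)) measurableSet_Ioi
      (hlamI.mono_set Ioc_subset_Ioi_self) (hlamI.mono_set (Ioi_subset_Ioi hx1.le))]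
  have e3 : 0 ≤ ∫ t in Ioi x, lam t * t ^ (-1 - 1 : ℝ) := by
    refine setIntegral_nonneg measurableSet_Ioi fun t ht => ?_
    have ht' : x < t := ht
    have := lam_nonneg (hx1.trans ht')
    have : 0 < t := by linarith
    positivity
  have e4 : x * ∫ t in Ioi x, lam t * t ^ (-1 - 1 : ℝ) ≤ 1 := by
    have : ∫ t in Ioi x, lam t * t ^ (-1 - 1 : ℝ) ≤ ∫ t in Ioi x, t ^ (-1 - 1 : ℝ) := by
      refine setIntegral_mono_on (hlamI.mono_set (Ioi_subset_Ioi hx1.le))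
        (integrableOn_Ioi_rpow_of_lt (by norm_num) hx0) measurableSet_Ioi fun t ht => ?_
      have ht' : x < t := ht
      have h1 : lam t ≤ 1 := (lam_anti (by norm_num) (by linarith)).trans lam_two_le
      have : 0 < t := by linarith
      have : 0 < t ^ (-1 - 1 : ℝ) := by positivity
      nlinarith
    rw [integral_Ioi_rpow_of_lt (by norm_num) hx0] at this
    norm_num [Real.rpow_neg_one] at this
    calc x * ∫ t in Ioi x, lam t * t ^ (-1 - 1 : ℝ) ≤ x * x⁻¹ := by
          gcongr; norm_num; exact this
      _ = 1 := by field_simp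
  have hk := kap_sub_bet
  have hl := log_two_pi_ge
  rw [e1] at hb
  have hs := Real.sq_sqrt hx0.le
  have hs0 : 0 < Real.sqrt x := Real.sqrt_pos.2 hx0
  -- The left side is the quantity bounded in `psiW_bound_one`.
  have e5 : x * ((∫ t in Ioc 1 x, psiErr t * t ^ (-1 - 1 : ℝ)) - ∫ t in Ioc 1 x, lam t * t ^ (-1 - 1 : ℝ)) +
      kap * (x - 1) + bet * (1 + x) = -(x * tailI x) +
      x * (∫ t in Ioi x, lam t * t ^ (-1 - 1 : ℝ)) - Real.log (2 * Real.pi) := by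
    unfold tailI
    rw [e2, ← hk]; ring
  rw [e5, abs_le] at hb
  obtain ⟨h1, h2⟩ := hb
  have f1 : x * (2 * bet / Real.sqrt x) = Real.sqrt x * (2 * bet) := by
    field_simp; rw [hs]; ring
  constructor
  · refine le_of_mul_le_mul_left ?_ hx0
    rw [f1]; linarith
  · refine le_of_mul_le_mul_left ?_ hx0
    rw [mul_sub, mul_neg, f1, mul_div_cancel₀ _ hx0.ne']
    have := mul_nonneg hx0.le e3
    linarith

/-! ### Partial summation -/

/-- The truncation at `x` of `∑ Λ(n) / (n log n) = log ζ(1)`. The term `n = 1` is `0 / 0 = 0`. -/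
noncomputable def mertA (x : ℝ) : ℝ :=
  ∑ n ∈ Finset.Icc 1 ⌊x⌋₊, ArithmeticFunction.vonMangoldt n / (n * Real.log n)

/-- The weight `1 / log t + 1 / log² t`, for which `(1 / (t log t))' = -wgt t / t²`. -/
noncomputable def wgt (t : ℝ) : ℝ := 1 / Real.log t + 1 / Real.log t ^ 2

/-- The derivative of `wgt` on `(1, ∞)`. -/
noncomputable def wgt' (t : ℝ) : ℝ := -(1 / (t * Real.log t ^ 2)) - 2 / (t * Real.log t ^ 3)

lemma hasDerivAt_wgt {t : ℝ} (ht : 1 < t) : HasDerivAt wgt (wgt' t) t := by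
  have hl : 0 < Real.log t := Real.log_pos ht
  have ht0 : t ≠ 0 := by linarith
  have h := Real.hasDerivAt_log ht0
  have := ((hasDerivAt_const t (1:ℝ)).div h hl.ne').add
    ((hasDerivAt_const t (1:ℝ)).div (h.pow 2) (pow_pos hl 2).ne')
  refine this.congr_deriv ?_
  unfold wgt'
  simp
  field_simp
  ring

lemma wgt'_nonpos {t : ℝ} (ht : 1 < t) : wgt' t ≤ 0 := by
  have hl : 0 < Real.log t := Real.log_pos ht
  unfold wgt'
  have : 0 < 1 / (t * Real.log t ^ 2) := by positivity
  have : 0 < 2 / (t * Real.log t ^ 3) := by positivity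
  linarith

lemma wgt_pos {t : ℝ} (ht : 1 < t) : 0 < wgt t := by
  have hl : 0 < Real.log t := Real.log_pos ht
  unfold wgt; positivity

lemma continuousOn_wgt' : ContinuousOn wgt' (Ioi 1) := by
  have : ContinuousOn Real.log (Ioi 1) := Real.continuousOn_log.mono fun x hx => by
    have : 1 < x := hx
    simp; linarith
  unfold wgt'
  refine ContinuousOn.sub (ContinuousOn.neg (ContinuousOn.div (by fun_prop) (by fun_prop) ?_))
    (ContinuousOn.div (by fun_prop) (by fun_prop) ?_) <;>
  · intro x hx
    have h1 : 1 < x := hx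
    have := Real.log_pos h1
    positivity

/-- One-sided continuity of `ψ`: it gives the primitive of `(ψ(t) - t) / t²` a right derivative
at every point, which is what integration by parts needs. -/
lemma psi_right_continuous {t : ℝ} (ht : 0 ≤ t) : ContinuousWithinAt Chebyshev.psi (Ioi t) t := by
  have : Chebyshev.psi =ᶠ[𝓝[>] t] fun _ => Chebyshev.psi t := by
    have h : Ioo t (⌊t⌋₊ + 1) ∈ 𝓝[>] t := Ioo_mem_nhdsGT (Nat.lt_floor_add_one t)
    filter_upwards [h] with u hu
    have : ⌊u⌋₊ = ⌊t⌋₊ := by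
      rw [Nat.floor_eq_iff (ht.trans hu.1.le)]
      exact ⟨(Nat.floor_le ht).trans hu.1.le, hu.2⟩
    rw [psi_eq_sum_one, psi_eq_sum_one, this]
  exact (tendsto_const_nhds.congr' this.symm)

/-- A second mean value theorem: since `wgt` is positive and decreasing, a bound `M` for the
integrals of `(ψ(t) - t) / t²` over `[x, t]` costs only a factor `wgt x` once the weight is inserted. -/
lemma psiErr_parts {x y M : ℝ} (hx : 1 < x) (hxy : x ≤ y)
    (hM : ∀ t ∈ Icc x y, |∫ u in x..t, psiErr u * u ^ (-1 - 1 : ℝ)| ≤ M) :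
    |∫ t in x..y, wgt t * (psiErr t * t ^ (-1 - 1 : ℝ))| ≤ M * wgt x := by
  have hy : 1 < y := hx.trans_le hxy
  have hInt (t : ℝ) (ht : x ≤ t) : IntervalIntegrable (fun u => psiErr u * u ^ (-1 - 1 : ℝ)) volume x t := by
    rw [intervalIntegrable_iff_integrableOn_Ioc_of_le ht]
    exact (psiErr_int t).mono_set (Ioc_subset_Ioc_left hx.le)
  have hI : Icc x y ⊆ Ioi 1 := fun t ht => hx.trans_le ht.1
  have hw' : IntervalIntegrable wgt' volume x y :=
    (continuousOn_wgt'.mono (by rwa [uIcc_of_le hxy])).intervalIntegrable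
  have hV : ContinuousOn (fun t => ∫ u in x..t, psiErr u * u ^ (-1 - 1 : ℝ)) (uIcc x y) := by
    refine intervalIntegral.continuousOn_primitive_interval ?_
    rw [uIcc_of_le hxy, integrableOn_Icc_iff_integrableOn_Ioc]
    exact (psiErr_int y).mono_set (Ioc_subset_Ioc_left hx.le)
  have hparts := intervalIntegral.integral_mul_deriv_eq_deriv_mul_of_hasDeriv_right
    (u := wgt) (v := fun t => ∫ u in x..t, psiErr u * u ^ (-1 - 1 : ℝ)) (u' := wgt')
    (v' := fun t => psiErr t * t ^ (-1 - 1 : ℝ)) (a := x) (b := y)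
    (by
      rw [uIcc_of_le hxy]
      exact fun t ht => (hasDerivAt_wgt (hI ht)).continuousAt.continuousWithinAt) hV
    (by
      rw [min_eq_left hxy, max_eq_right hxy]
      exact fun t ht => (hasDerivAt_wgt (hx.trans ht.1)).hasDerivWithinAt)
    (by
      rw [min_eq_left hxy, max_eq_right hxy]
      intro t ht
      have ht0 : 0 < t := by linarith [ht.1]
      refine (intervalIntegral.integral_hasDerivWithinAt_right (s := Ici t) (t := Ioi t)
        (hInt t ht.1.le) ?_ ?_).mono Ioi_subset_Ici_self
      · exact (measurable_psiErr.mul (by fun_prop)).stronglyMeasurable.stronglyMeasurableAtFilter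
      · refine ContinuousWithinAt.mul ((psi_right_continuous ht0.le).sub continuousWithinAt_id) ?_
        exact (Real.continuousAt_rpow_const t _ (Or.inl ht0.ne')).continuousWithinAt)
    hw' (hInt y hxy)
  have hFTC : ∫ t in x..y, wgt' t = wgt y - wgt x :=
    intervalIntegral.integral_eq_sub_of_hasDerivAt (fun t ht => hasDerivAt_wgt (by
      rw [uIcc_of_le hxy] at ht; exact hI ht)) hw'
  have hb : |∫ t in x..y, wgt' t * ∫ u in x..t, psiErr u * u ^ (-1 - 1 : ℝ)| ≤ M * (wgt x - wgt y) := by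
    have : M * (wgt x - wgt y) = ∫ t in x..y, (-wgt' t) * M := by
      rw [intervalIntegral.integral_mul_const, intervalIntegral.integral_neg, hFTC]; ring
    rw [this, ← Real.norm_eq_abs]
    refine intervalIntegral.norm_integral_le_of_norm_le hxy ?_ (hw'.neg.mul_const M)
    refine ae_of_all _ fun t ht => ?_
    have ht1 : 1 < t := hx.trans ht.1
    rw [norm_mul, Real.norm_eq_abs, Real.norm_eq_abs, abs_of_nonpos (wgt'_nonpos ht1)]
    have := hM t ⟨ht.1.le, ht.2⟩
    have := wgt'_nonpos ht1
    gcongr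
    linarith
  rw [hparts, intervalIntegral.integral_same, mul_zero, sub_zero]
  have h1 : |wgt y * ∫ u in x..y, psiErr u * u ^ (-1 - 1 : ℝ)| ≤ wgt y * M := by
    rw [abs_mul, abs_of_pos (wgt_pos hy)]
    have := wgt_pos hy
    gcongr
    exact hM y ⟨hxy, le_rfl⟩
  calc _ ≤ _ := abs_sub _ _
    _ ≤ wgt y * M + M * (wgt x - wgt y) := add_le_add h1 hb
    _ = _ := by ring

/-- Abel summation of `Λ(n) · 1 / (n log n)`. Writing `ψ(t) = t + psiErr t`, the part `t` contributes
the difference of `log log`. -/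
lemma mertA_sub {x y : ℝ} (hx : 1 < x) (hxy : x ≤ y) :
    mertA y - mertA x = psiErr y / (y * Real.log y) - psiErr x / (x * Real.log x) +
      (Real.log (Real.log y) - Real.log (Real.log x)) +
      ∫ t in x..y, wgt t * (psiErr t * t ^ (-1 - 1 : ℝ)) := by
  have hy : 1 < y := hx.trans_le hxy
  have hI : Icc x y ⊆ Ioi 1 := fun t ht => hx.trans_le ht.1
  have hlogc : ContinuousOn Real.log (Ioi 1) := Real.continuousOn_log.mono fun x hx => by
    have : 1 < x := hx
    simp; linarith
  have hwc : ContinuousOn wgt (Ioi 1) := fun t ht => (hasDerivAt_wgt ht).continuousAt.continuousWithinAt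
  have hg (t : ℝ) (ht : 1 < t) : HasDerivAt (fun t => 1 / (t * Real.log t)) (-(wgt t * t ^ (-1 - 1 : ℝ))) t := by
    have hl : 0 < Real.log t := Real.log_pos ht
    have ht0 : 0 < t := by linarith
    have := (hasDerivAt_const t (1:ℝ)).div ((hasDerivAt_id t).mul (Real.hasDerivAt_log ht0.ne'))
      (mul_pos ht0 hl).ne'
    refine this.congr_deriv ?_
    unfold wgt
    rw [show (-1 - 1 : ℝ) = -((2:ℕ):ℝ) by norm_num, Real.rpow_neg ht0.le, Real.rpow_natCast]
    simp
    field_simp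
    ring
  have hdc : ContinuousOn (fun t : ℝ => -(wgt t * t ^ (-1 - 1 : ℝ))) (Ioi 1) := by
    refine (hwc.mul fun t ht => ?_).neg
    have : 1 < t := ht
    exact (Real.continuousAt_rpow_const t _ (Or.inl (by linarith))).continuousWithinAt
  have hder : ∀ t ∈ Icc x y, deriv (fun t => 1 / (t * Real.log t)) t = -(wgt t * t ^ (-1 - 1 : ℝ)) :=
    fun t ht => (hg t (hI ht)).deriv
  have habel := sum_mul_eq_sub_sub_integral_mul (f := fun t : ℝ => 1 / (t * Real.log t))
    (fun n => ArithmeticFunction.vonMangoldt n) (a := x) (b := y) (by linarith) hxy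
    (fun t ht => (hg t (hI ht)).differentiableAt)
    (((hdc.mono hI).integrableOn_compact isCompact_Icc).congr_fun (fun t ht => (hder t ht).symm)
      measurableSet_Icc)
  simp only [← Chebyshev.psi_eq_sum_Icc] at habel
  have hsum : mertA y - mertA x = ∑ k ∈ Finset.Ioc ⌊x⌋₊ ⌊y⌋₊,
      1 / ((k:ℝ) * Real.log k) * ArithmeticFunction.vonMangoldt k := by
    unfold mertA
    have hfl : ⌊x⌋₊ ≤ ⌊y⌋₊ := Nat.floor_le_floor hxy
    have : Finset.Icc 1 ⌊y⌋₊ = Finset.Icc 1 ⌊x⌋₊ ∪ Finset.Ioc ⌊x⌋₊ ⌊y⌋₊ := by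
      ext n; simp; omega
    rw [this, Finset.sum_union (by
      rw [Finset.disjoint_left]; intro n h1 h2; simp at h1 h2; omega), add_sub_cancel_left]
    refine Finset.sum_congr rfl fun n _ => ?_
    ring
  rw [hsum, habel]
  have hEI : IntervalIntegrable (fun t => wgt t * (psiErr t * t ^ (-1 - 1 : ℝ))) volume x y := by
    refine IntervalIntegrable.continuousOn_mul ?_ (hwc.mono (by rwa [uIcc_of_le hxy]))
    rw [intervalIntegrable_iff_integrableOn_Ioc_of_le hxy]
    exact (psiErr_int y).mono_set (Ioc_subset_Ioc_left hx.le)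
  have hwI : IntervalIntegrable (fun t => wgt t * t⁻¹) volume x y := by
    refine ContinuousOn.intervalIntegrable ?_
    rw [uIcc_of_le hxy]
    refine (hwc.mono hI).mul (ContinuousOn.inv₀ continuousOn_id fun t ht => ?_)
    have : 1 < t := hI ht
    simp; linarith
  have e1 : ∫ t in Ioc x y, deriv (fun t => 1 / (t * Real.log t)) t * Chebyshev.psi t =
      -((∫ t in x..y, wgt t * (psiErr t * t ^ (-1 - 1 : ℝ))) + ∫ t in x..y, wgt t * t⁻¹) := by
    rw [← intervalIntegral.integral_add hEI hwI, ← intervalIntegral.integral_neg,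
      intervalIntegral.integral_of_le hxy]
    refine setIntegral_congr_fun measurableSet_Ioc fun t ht => ?_
    have ht0 : 0 < t := by linarith [ht.1]
    rw [hder t (Ioc_subset_Icc_self ht), show t⁻¹ = t * t ^ (-1 - 1 : ℝ) by
      rw [show (-1 - 1 : ℝ) = -((2:ℕ):ℝ) by norm_num, Real.rpow_neg ht0.le, Real.rpow_natCast]
      field_simp]
    unfold psiErr
    ring
  have e2 : ∫ t in x..y, wgt t * t⁻¹ = (Real.log (Real.log y) - 1 / Real.log y) -
      (Real.log (Real.log x) - 1 / Real.log x) := by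
    refine intervalIntegral.integral_eq_sub_of_hasDerivAt
      (f := fun t => Real.log (Real.log t) - 1 / Real.log t) (fun t ht => ?_) hwI
    rw [uIcc_of_le hxy] at ht
    have ht1 : 1 < t := hI ht
    have hl : 0 < Real.log t := Real.log_pos ht1
    have h := Real.hasDerivAt_log (show t ≠ 0 by linarith)
    refine ((h.log hl.ne').sub ((hasDerivAt_const t (1:ℝ)).div h hl.ne')).congr_deriv ?_
    unfold wgt
    simp
    field_simp
    ring
  rw [e1, e2]
  have hlx := Real.log_pos hx
  have hly := Real.log_pos hy
  unfold psiErr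
  field_simp
  ring

/-- A bound for `|tailI x - tailI t|`, `t ≥ x ≥ 2`: the sum of the distances of the bounds of
`tailI_bounds` from `0`. -/
noncomputable def errM (x : ℝ) : ℝ := 4 * bet / Real.sqrt x + Real.log (2 * Real.pi) / x

/-- Mertens' theorem in Cauchy form, with the error controlled by the tail integral of
`(ψ(t) - t) / t²` alone; the boundary term `psiErr x / (x log x)` is kept exact, since its sign
matters in the comparison with `θ`. -/
lemma mertA_cauchy (hRH : RiemannHypothesis) {x y : ℝ} (hx : 2 ≤ x) (hxy : x ≤ y) :
    |(mertA y - Real.log (Real.log y) - psiErr y / (y * Real.log y)) -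
      (mertA x - Real.log (Real.log x) - psiErr x / (x * Real.log x))| ≤ errM x * wgt x := by
  have h := psiErr_parts (x := x) (y := y) (M := errM x) (by linarith) hxy (fun t ht => by
    rw [intervalIntegral.integral_of_le ht.1, ← tailI_sub (by linarith) ht.1]
    obtain ⟨a1, a2⟩ := tailI_bounds hRH hx
    obtain ⟨b1, b2⟩ := tailI_bounds hRH (hx.trans ht.1)
    have hb := bet_nonneg hRH
    have hl := log_two_pi_ge
    have hx0 : 0 < x := by linarith
    have hs : 0 < Real.sqrt x := Real.sqrt_pos.2 hx0
    have c1 : 2 * bet / Real.sqrt t ≤ 2 * bet / Real.sqrt x := by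
      gcongr; exact ht.1
    have c2 : Real.log (2 * Real.pi) / t ≤ Real.log (2 * Real.pi) / x := by
      gcongr; exact ht.1
    have c3 : errM x = 2 * (2 * bet / Real.sqrt x) + Real.log (2 * Real.pi) / x := by
      unfold errM; ring
    rw [abs_le, c3]
    constructor <;> linarith)
  have := mertA_sub (x := x) (y := y) (by linarith) hxy
  have e : (mertA y - Real.log (Real.log y) - psiErr y / (y * Real.log y)) -
      (mertA x - Real.log (Real.log x) - psiErr x / (x * Real.log x)) =
      ∫ t in x..y, wgt t * (psiErr t * t ^ (-1 - 1 : ℝ)) := by linarith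
  rw [e]; exact h

/-! ### The Mertens constant -/

/-- If `f → 0` then the means `d ∫ f(t) t^(-d-1) dt` tend to `0` as `d → 0+`. -/
lemma abelian_limit {f : ℝ → ℝ} {L : ℝ} (hf : Tendsto f atTop (𝓝 0))
    (hint : ∀ᶠ d in 𝓝[>] (0:ℝ), IntegrableOn (fun t => f t * t ^ (-d - 1)) (Ioi 1))
    (hL : Tendsto (fun d => d * ∫ t in Ioi (1:ℝ), f t * t ^ (-d - 1)) (𝓝[>] 0) (𝓝 L)) : L = 0 := by
  have hpos : ∀ᶠ d in 𝓝[>] (0:ℝ), 0 < d := eventually_mem_nhdsWithin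
  obtain ⟨d0, hd0, hd0p⟩ := (hint.and hpos).exists
  refine abs_eq_zero.1 (le_antisymm (le_of_forall_pos_le_add fun ε hε => ?_) (abs_nonneg _))
  rw [zero_add]
  obtain ⟨X, hX⟩ := eventually_atTop.1 (hf.eventually (Metric.ball_mem_nhds 0 hε))
  set Y := max X 1
  have hY : 1 ≤ Y := le_max_right _ _
  set K := ∫ t in Ioi (1:ℝ), |f t * t ^ (-d0 - 1)|
  have key : ∀ᶠ d in 𝓝[>] (0:ℝ), |d * ∫ t in Ioi (1:ℝ), f t * t ^ (-d - 1)| ≤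
      d * (Y ^ (d0 + 1) * K) + ε := by
    filter_upwards [hint, hpos] with d hd hdp
    have i1 : IntegrableOn (fun t : ℝ => t ^ (-d - 1)) (Ioi 1) :=
      integrableOn_Ioi_rpow_of_lt (by linarith) one_pos
    have i2 : ∫ t in Ioi (1:ℝ), t ^ (-d - 1) = 1 / d := by
      rw [integral_Ioi_rpow_of_lt (by linarith) one_pos]
      simp
    have hb : |∫ t in Ioi (1:ℝ), f t * t ^ (-d - 1)| ≤ Y ^ (d0 + 1) * K + ε * (1 / d) := by
      rw [← i2, ← integral_const_mul, ← integral_const_mul,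
        ← integral_add (hd0.abs.const_mul _) (i1.const_mul _)]
      refine (abs_integral_le_integral_abs).trans (setIntegral_mono_on hd.abs
        ((hd0.abs.const_mul _).add (i1.const_mul _)) measurableSet_Ioi fun t ht => ?_)
      have ht1 : 1 < t := ht
      have p1 : 0 < t ^ (-d - 1) := Real.rpow_pos_of_pos (by linarith) _
      have p0 : 0 < t ^ (-d0 - 1) := Real.rpow_pos_of_pos (by linarith) _
      rw [abs_mul, abs_mul, abs_of_pos p1, abs_of_pos p0]
      rcases le_total t Y with h | h
      · have a1 : t ^ (-d - 1) ≤ 1 := Real.rpow_le_one_of_one_le_of_nonpos ht1.le (by linarith)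
        have a2 : 1 ≤ Y ^ (d0 + 1) * t ^ (-d0 - 1) := by
          rw [show -d0 - 1 = -(d0 + 1) by ring, Real.rpow_neg (by linarith), ← div_eq_mul_inv,
            one_le_div (Real.rpow_pos_of_pos (by linarith) _)]
          exact Real.rpow_le_rpow (by linarith) h (by linarith)
        have : |f t| * t ^ (-d - 1) ≤ |f t| * (Y ^ (d0 + 1) * t ^ (-d0 - 1)) := by
          gcongr; linarith
        nlinarith [mul_pos hε p1]
      · have := hX t ((le_max_left _ _).trans h)
        rw [dist_zero_right, Real.norm_eq_abs] at this
        have : |f t| * t ^ (-d - 1) ≤ ε * t ^ (-d - 1) := by gcongr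
        have : 0 ≤ Y ^ (d0 + 1) * (|f t| * t ^ (-d0 - 1)) := by positivity
        linarith
    rw [abs_mul, abs_of_pos hdp]
    calc _ ≤ d * (Y ^ (d0 + 1) * K + ε * (1 / d)) := by gcongr
      _ = _ := by field_simp
  have lim : Tendsto (fun d : ℝ => d * (Y ^ (d0 + 1) * K) + ε) (𝓝[>] 0) (𝓝 ε) := by
    have : Tendsto (fun d : ℝ => d * (Y ^ (d0 + 1) * K) + ε) (𝓝 0) (𝓝 (0 * (Y ^ (d0 + 1) * K) + ε)) :=
      Continuous.tendsto (by fun_prop) 0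
    rw [zero_mul, zero_add] at this
    exact this.mono_left nhdsWithin_le_nhds
  exact le_of_tendsto_of_tendsto hL.abs lim key

/-- This is `Γ'(1) = -γ`. -/
lemma integral_log_exp_neg : ∫ v in Ioi (0:ℝ), Real.log v * Real.exp (-v) =
    -Real.eulerMascheroniConstant := by
  have h1 := Complex.hasDerivAt_GammaIntegral (s := 1) (by simp)
  have h2 : HasDerivAt Complex.Gamma (-(Real.eulerMascheroniConstant : ℂ)) 1 :=
    Complex.hasDerivAt_Gamma_one
  have h3 : Complex.Gamma =ᶠ[𝓝 1] Complex.GammaIntegral := by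
    have : {s : ℂ | 0 < s.re} ∈ 𝓝 (1:ℂ) :=
      (isOpen_lt continuous_const Complex.continuous_re).mem_nhds (by simp)
    filter_upwards [this] with s hs using Complex.Gamma_eq_integral hs
  have h4 := (h1.congr_of_eventuallyEq h3).unique h2
  have h5 : ∫ t : ℝ in Ioi 0, (t:ℂ) ^ ((1:ℂ) - 1) * (Real.log t * Real.exp (-t)) =
      ((∫ v in Ioi (0:ℝ), Real.log v * Real.exp (-v) : ℝ) : ℂ) := by
    rw [← integral_complex_ofReal]
    refine setIntegral_congr_fun measurableSet_Ioi fun v _ => ?_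
    simp
  rw [h5] at h4
  exact_mod_cast h4

/-- The substitution `t = exp (v / d)` turns the left side into `∫ log (v / d) exp (-v) dv`. -/
lemma loglog_mellin {d : ℝ} (hd : 0 < d) :
    d * ∫ t in Ioi (1:ℝ), Real.log (Real.log t) * t ^ (-d - 1) =
      -Real.eulerMascheroniConstant - Real.log d := by
  have h := integral_comp_log Real.log 0 d
  simp only [Real.rpow_zero, one_mul, sub_zero] at h
  rw [h]
  have h2 := integral_comp_mul_left_Ioi (fun v => Real.log (v / d) * Real.exp (-v)) 0 hd
  rw [mul_zero, smul_eq_mul] at h2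
  have e1 : ∫ x in Ioi (0:ℝ), Real.log (d * x / d) * Real.exp (-(d * x)) =
      ∫ u in Ioi (0:ℝ), Real.log u * Real.exp (-d * u) := by
    refine setIntegral_congr_fun measurableSet_Ioi fun u _ => ?_
    simp only [mul_div_cancel_left₀ _ hd.ne', neg_mul]
  rw [e1] at h2
  rw [h2, ← mul_assoc, mul_inv_cancel₀ hd.ne', one_mul]
  have i1 : IntegrableOn (fun v : ℝ => Real.log v * Real.exp (-v)) (Ioi 0) := by
    refine Integrable.of_integral_ne_zero ?_
    rw [integral_log_exp_neg]
    have := Real.one_half_lt_eulerMascheroniConstant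
    linarith
  have i2 : IntegrableOn (fun v : ℝ => Real.exp (-v)) (Ioi 0) := by
    simpa using integrableOn_exp_neg_Ioi 0
  have e2 : ∫ x in Ioi (0:ℝ), Real.log (x / d) * Real.exp (-x) =
      ∫ x in Ioi (0:ℝ), (Real.log x * Real.exp (-x) - Real.log d * Real.exp (-x)) := by
    refine setIntegral_congr_fun measurableSet_Ioi fun u hu => ?_
    have : (0:ℝ) < u := hu
    rw [Real.log_div this.ne' hd.ne']; ring
  rw [e2, integral_sub i1 (i2.const_mul _), integral_log_exp_neg, integral_const_mul,
    integral_exp_neg_Ioi_zero, mul_one]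

/-- Comparison with the harmonic series through `Λ(k) ≤ log k`; only a growth bound is needed. -/
lemma mertA_nat_le (n : ℕ) :
    ∑ k ∈ Finset.Icc 1 n, ArithmeticFunction.vonMangoldt k / (k * Real.log k) ≤ 1 + Real.log n := by
  refine le_trans ?_ (harmonic_le_one_add_log n)
  rw [harmonic_eq_sum_Icc]
  push_cast
  refine Finset.sum_le_sum fun k hk => ?_
  have hk1 : 1 ≤ k := (Finset.mem_Icc.1 hk).1
  have hk0 : (0:ℝ) < k := by exact_mod_cast hk1
  rcases hk1.eq_or_lt with rfl | h
  · simp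
  · have hl : 0 < Real.log k := Real.log_pos (by exact_mod_cast h)
    rw [div_le_iff₀ (mul_pos hk0 hl), ← mul_assoc, inv_mul_cancel₀ hk0.ne', one_mul]
    exact ArithmeticFunction.vonMangoldt_le_log

/-- The left side is the Dirichlet series `∑ Λ(n) / (n^(1+d) log n)` after partial summation. -/
lemma mertA_mellin {d : ℝ} (hd : 0 < d) :
    d * ∫ t in Ioi (1:ℝ), mertA t * t ^ (-d - 1) =
      Real.log (riemannZeta ((1 + d : ℝ) : ℂ)).re := by
  set f : ℕ → ℝ := fun k => ArithmeticFunction.vonMangoldt k / (k * Real.log k) with hf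
  have hf0 : ∀ n, 0 ≤ f n := fun n => by
    have := ArithmeticFunction.vonMangoldt_nonneg (n := n)
    have := Real.log_natCast_nonneg n
    simp only [hf]; positivity
  have hO : (fun n ↦ ∑ k ∈ Finset.Icc 1 n, f k) =O[atTop] fun n : ℕ ↦ (n : ℝ) ^ (d/2) := by
    have h1 : (fun x : ℝ => 1 + Real.log x) =O[atTop] fun x : ℝ => x ^ (d/2) := by
      refine Asymptotics.IsBigO.add ?_ (isLittleO_log_rpow_atTop (by linarith)).isBigO
      refine Asymptotics.IsBigO.of_bound 1 ?_
      filter_upwards [eventually_ge_atTop 1] with x hx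
      rw [norm_one, one_mul, Real.norm_eq_abs]
      exact (Real.one_le_rpow hx (by linarith)).trans (le_abs_self _)
    refine Asymptotics.IsBigO.trans (Asymptotics.IsBigO.of_bound 1 ?_)
      (h1.comp_tendsto tendsto_natCast_atTop_atTop)
    refine Eventually.of_forall fun n => ?_
    rw [one_mul, Real.norm_of_nonneg (Finset.sum_nonneg fun k _ => hf0 k)]
    exact (mertA_nat_le n).trans (le_abs_self _)
  have h := LSeries_eq_mul_integral_of_nonneg f (r := d/2) (s := (d:ℂ)) (by linarith)
    (by simp; linarith) hO hf0
  have e1 : ∫ t in Set.Ioi (1 : ℝ), (∑ k ∈ Finset.Icc 1 ⌊t⌋₊, (f k : ℂ)) * t ^ (-((d:ℂ) + 1)) =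
      ((∫ t in Ioi (1:ℝ), mertA t * t ^ (-d - 1) : ℝ) : ℂ) := by
    rw [← integral_complex_ofReal]
    refine setIntegral_congr_fun measurableSet_Ioi fun t ht => ?_
    have : (0:ℝ) ≤ t := zero_le_one.trans (le_of_lt ht)
    simp only [mertA, hf]
    push_cast
    rw [Complex.ofReal_cpow this]
    push_cast
    ring_nf
  have e2 : LSeries (fun n ↦ (f n : ℂ)) d = ((∑' n, f n / (n:ℝ) ^ d : ℝ) : ℂ) := by
    rw [LSeries_def₀ (by simp [hf]), Complex.ofReal_tsum]
    refine tsum_congr fun n => ?_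
    push_cast
    rw [Complex.ofReal_cpow (Nat.cast_nonneg n)]
    simp
  rw [e1, e2] at h
  have h' : ∑' n, f n / (n:ℝ) ^ d = d * ∫ t in Ioi (1:ℝ), mertA t * t ^ (-d - 1) := by
    exact_mod_cast h
  rw [← h', log_riemannZeta_eq (by linarith)]
  refine tsum_congr fun n => ?_
  rcases Nat.eq_zero_or_pos n with rfl | hn
  · simp [hf]
  · have : (0:ℝ) < n := by exact_mod_cast hn
    simp only [hf]
    rw [Real.rpow_add this, Real.rpow_one, div_div]
    ring_nf

lemma tendsto_wgt : Tendsto wgt atTop (𝓝 0) := by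
  have h := Real.tendsto_log_atTop.const_div_atTop (1:ℝ)
  have h2 := ((tendsto_pow_atTop (α := ℝ) two_ne_zero).comp Real.tendsto_log_atTop).const_div_atTop (1:ℝ)
  change Tendsto (fun t => 1 / Real.log t + 1 / Real.log t ^ 2) atTop (𝓝 0)
  simpa using h.add h2

lemma tendsto_errM : Tendsto errM atTop (𝓝 0) := by
  have h := Real.tendsto_sqrt_atTop.const_div_atTop (4 * bet)
  have h2 := tendsto_id.const_div_atTop (Real.log (2 * Real.pi))
  change Tendsto (fun x => 4 * bet / Real.sqrt x + Real.log (2 * Real.pi) / x) atTop (𝓝 0)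
  simpa using h.add h2

lemma tendsto_psiErr_div : Tendsto (fun x => psiErr x / (x * Real.log x)) atTop (𝓝 0) := by
  refine squeeze_zero_norm' ?_ (Real.tendsto_log_atTop.const_div_atTop (7:ℝ))
  filter_upwards [eventually_gt_atTop 1] with x hx
  have hl := Real.log_pos hx
  have hx0 : 0 < x := by linarith
  rw [Real.norm_eq_abs, abs_div, abs_of_pos (mul_pos hx0 hl), div_le_div_iff₀ (mul_pos hx0 hl) hl]
  nlinarith [abs_psiErr_le hx0.le]

/-- Mertens' constant is `γ`. The limit exists by `mertA_cauchy`; its value is read off from the means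
`d ∫ · t^(-d-1) dt` as `d → 0+`, for which `mertA` gives `log ζ(1 + d) = -log d + o(1)`, `log log`
gives `-γ - log d`, and the boundary term gives `o(1)`. -/
lemma mertA_limit (hRH : RiemannHypothesis) :
    Tendsto (fun x => mertA x - Real.log (Real.log x) - psiErr x / (x * Real.log x)) atTop
      (𝓝 Real.eulerMascheroniConstant) := by
  have hb : Tendsto (fun x => errM x * wgt x) atTop (𝓝 0) := by
    simpa using tendsto_errM.mul tendsto_wgt
  obtain ⟨B, hB⟩ := cauchySeq_tendsto_of_complete (u := fun x : ℝ =>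
    mertA x - Real.log (Real.log x) - psiErr x / (x * Real.log x)) (by
      refine Metric.cauchySeq_iff'.2 fun ε hε => ?_
      obtain ⟨N, h1, h2⟩ := ((hb.eventually (gt_mem_nhds hε)).and (eventually_ge_atTop 2)).exists
      exact ⟨N, fun n hn => (mertA_cauchy hRH h2 hn).trans_lt h1⟩)
  suffices Real.eulerMascheroniConstant - B = 0 by
    rwa [sub_eq_zero.1 this]
  have hz : Tendsto (fun d : ℝ => Real.log (riemannZeta ((1 + d : ℝ) : ℂ)).re + Real.log d)
      (𝓝[>] 0) (𝓝 0) := by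
    have h := (Asymptotics.isLittleO_one_iff ℝ).1 log_riemannZeta_add_log_sub_isLittleO_ofReal
    have h2 : Tendsto (fun d : ℝ => 1 + d) (𝓝[>] 0) (𝓝[>] 1) := by
      refine tendsto_nhdsWithin_iff.2 ⟨?_, ?_⟩
      · have : Tendsto (fun d : ℝ => 1 + d) (𝓝 0) (𝓝 (1 + 0)) := Continuous.tendsto (by fun_prop) 0
        rw [add_zero] at this
        exact this.mono_left nhdsWithin_le_nhds
      · filter_upwards [eventually_mem_nhdsWithin] with d hd
        have : (0:ℝ) < d := hd
        simpa using this
    simpa [Function.comp_def] using h.comp h2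
  have hpos : ∀ᶠ d in 𝓝[>] (0:ℝ), 0 < d := eventually_mem_nhdsWithin
  have hlog : Tendsto Real.log (𝓝[>] 0) atBot := Real.tendsto_log_nhdsGT_zero
  have hloglt := hlog.eventually (eventually_lt_atBot (-1))
  have hzlt := hz.eventually (lt_mem_nhds (show (-1:ℝ) < 0 by norm_num))
  -- A non-integrable function has integral `0`, so integrability follows from the nonzero values
  -- which the two transforms take for small `d`.
  have hints : ∀ᶠ d in 𝓝[>] (0:ℝ), IntegrableOn (fun t => mertA t * t ^ (-d - 1)) (Ioi 1) ∧
      IntegrableOn (fun t => Real.log (Real.log t) * t ^ (-d - 1)) (Ioi 1) ∧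
      IntegrableOn (fun t => B * t ^ (-d - 1)) (Ioi 1) := by
    filter_upwards [hpos, hloglt, hzlt] with d hd hl hzl
    refine ⟨Integrable.of_integral_ne_zero fun h0 => ?_,
      Integrable.of_integral_ne_zero fun h0 => ?_,
      (integrableOn_Ioi_rpow_of_lt (by linarith) one_pos).const_mul _⟩
    · have := mertA_mellin hd
      rw [h0, mul_zero] at this
      linarith
    · have := loglog_mellin hd
      rw [h0, mul_zero] at this
      have := Real.eulerMascheroniConstant_lt_two_thirds
      linarith
  refine abelian_limit (f := fun t => mertA t - Real.log (Real.log t) - B) ?_ ?_ ?_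
  · have := (hB.add tendsto_psiErr_div).sub_const B
    simpa using this
  · filter_upwards [hints] with d hd
    refine ((hd.1.sub hd.2.1).sub hd.2.2).congr_fun (fun t _ => ?_) measurableSet_Ioi
    simp only [Pi.sub_apply]
    ring
  · have hlim := (hz.add_const (Real.eulerMascheroniConstant - B))
    rw [zero_add] at hlim
    refine hlim.congr' ?_
    filter_upwards [hints, hpos] with d hd hdp
    have e : ∫ t in Ioi (1:ℝ), (mertA t - Real.log (Real.log t) - B) * t ^ (-d - 1) =
        ((∫ t in Ioi (1:ℝ), mertA t * t ^ (-d - 1)) -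
          ∫ t in Ioi (1:ℝ), Real.log (Real.log t) * t ^ (-d - 1)) -
          ∫ t in Ioi (1:ℝ), B * t ^ (-d - 1) := by
      have i1 : IntegrableOn (fun t => mertA t * t ^ (-d - 1) -
        Real.log (Real.log t) * t ^ (-d - 1)) (Ioi 1) := hd.1.sub hd.2.1
      rw [← integral_sub hd.1 hd.2.1, ← integral_sub i1 hd.2.2]
      refine setIntegral_congr_fun measurableSet_Ioi fun t _ => ?_
      ring
    rw [e, mul_sub, mul_sub, mertA_mellin hdp, loglog_mellin hdp, integral_const_mul,
      integral_Ioi_rpow_of_lt (by linarith) one_pos]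
    simp
    field_simp
    ring

/-- `mertA_cauchy` with `y → ∞`. -/
lemma mertA_lower (hRH : RiemannHypothesis) {x : ℝ} (hx : 2 ≤ x) :
    Real.eulerMascheroniConstant + Real.log (Real.log x) + psiErr x / (x * Real.log x) -
      errM x * wgt x ≤ mertA x := by
  have h := ((mertA_limit hRH).sub_const
    (mertA x - Real.log (Real.log x) - psiErr x / (x * Real.log x))).abs
  have := le_of_tendsto h (b := errM x * wgt x) (by
    filter_upwards [eventually_ge_atTop x] with y hy using mertA_cauchy hRH hx hy)
  have := (abs_le.1 this).2
  linarith

/-! ### Numerical bounds and large primorials -/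

lemma bet_le : bet ≤ 0.06838 := by
  have hg := Real.eulerMascheroniConstant_lt_two_thirds
  -- `2 ^ 73 ≤ (4 π) ^ 20` bounds `log 4π` from below by a rational multiple of `log 2`.
  have hl : 73 * Real.log 2 ≤ 20 * Real.log (4 * Real.pi) := by
    have h : (2:ℝ) ^ 73 ≤ (4 * Real.pi) ^ 20 := by
      have h1 : (12.56:ℝ) ≤ 4 * Real.pi := by linarith [Real.pi_gt_d2]
      calc (2:ℝ) ^ 73 ≤ 12.56 ^ 20 := by norm_num
        _ ≤ _ := by gcongr
    have := Real.log_le_log (by positivity) h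
    rw [Real.log_pow, Real.log_pow] at this
    exact_mod_cast this
  have := Real.log_two_gt_d9
  unfold bet
  linarith

lemma log_two_pi_le : Real.log (2 * Real.pi) ≤ 1.8485 := by
  have hl : 3 * Real.log (2 * Real.pi) ≤ 8 * Real.log 2 := by
    have h : (2 * Real.pi) ^ 3 ≤ (2:ℝ) ^ 8 := by
      have h1 : 2 * Real.pi ≤ (6.2832:ℝ) := by linarith [Real.pi_lt_d4]
      calc (2 * Real.pi) ^ 3 ≤ 6.2832 ^ 3 := by gcongr
        _ ≤ _ := by norm_num
    have := Real.log_le_log (by positivity) h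
    rw [Real.log_pow, Real.log_pow] at this
    exact_mod_cast this
  have := Real.log_two_lt_d9
  linarith

lemma psi_three : Chebyshev.psi 3 = Real.log 6 := by
  rw [show (3:ℝ) = (3:ℕ) by norm_num, Chebyshev.psi_eq_log_lcmUpto]
  have : Nat.lcmUpto 3 = 6 := by decide
  rw [this]; norm_num

lemma psi_four : Chebyshev.psi 4 = Real.log 12 := by
  rw [show (4:ℝ) = (4:ℕ) by norm_num, Chebyshev.psi_eq_log_lcmUpto]
  have : Nat.lcmUpto 4 = 12 := by decide
  rw [this]; norm_num

lemma psi_five : Chebyshev.psi 5 = Real.log 60 := by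
  rw [show (5:ℝ) = (5:ℕ) by norm_num, Chebyshev.psi_eq_log_lcmUpto]
  have : Nat.lcmUpto 5 = 60 := by decide
  rw [this]; norm_num

lemma cbrt_ge {x a : ℝ} (ha : 0 ≤ a) (h : a ^ 3 ≤ x) : a ≤ x ^ (3:ℝ)⁻¹ := by
  have := Real.rpow_le_rpow (by positivity) h (show (0:ℝ) ≤ (3:ℝ)⁻¹ by norm_num)
  rwa [← Real.rpow_natCast, ← Real.rpow_mul ha, show ((3:ℕ):ℝ) * (3:ℝ)⁻¹ = 1 by norm_num,
    Real.rpow_one] at this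

/-- The contribution of the prime squares and cubes, of size about `√x`, exceeds `x log x` times the
error in `mertA_lower`, of size about `4 bet √x` with `4 bet < 0.28`. Up to `√x = 8.4` the values of
`ψ` at `5` and `3` suffice; beyond that, Chebyshev's lower bound for `ψ(√x)` does. -/
lemma psi_sub_theta_large {x : ℝ} (hx : 29 ≤ x) :
    (1 + 1 / Real.log x) * (4 * bet * Real.sqrt x + Real.log (2 * Real.pi)) <
      Chebyshev.psi x - Chebyshev.theta x := by
  have hx0 : 0 < x := by linarith
  have h0 := Chebyshev.psi_sub_theta_ge_psi_add_psi_add_psi hx0.le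
  have h7 := Chebyshev.psi_nonneg (x ^ (7:ℝ)⁻¹)
  have hsq : x ^ (2:ℝ)⁻¹ = Real.sqrt x := by rw [Real.sqrt_eq_rpow, one_div]
  rw [hsq] at h0
  set y := Real.sqrt x with hy
  have hyy : y * y = x := Real.mul_self_sqrt hx0.le
  have hy5 : 5 ≤ y := Real.le_sqrt_of_sq_le (by linarith)
  have hb := bet_le
  have hL := log_two_pi_le
  have l1 := Real.log_two_lt_d9
  have l2 := Real.log_two_gt_d9
  -- `0.27352 = 4 * 0.06838`
  have hE : 4 * bet * y + Real.log (2 * Real.pi) ≤ 0.27352 * y + 1.8485 := by nlinarith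
  have hlx : 0 < Real.log x := Real.log_pos (by linarith)
  have main (c : ℝ) (hc : 1 / Real.log x ≤ c) (hlt : (1 + c) * (0.27352 * y + 1.8485) <
      Chebyshev.psi y + Chebyshev.psi (x ^ (3:ℝ)⁻¹)) :
      (1 + 1 / Real.log x) * (4 * bet * y + Real.log (2 * Real.pi)) <
      Chebyshev.psi x - Chebyshev.theta x := by
    have hp : 0 < 1 / Real.log x := by positivity
    calc _ ≤ (1 + 1 / Real.log x) * (0.27352 * y + 1.8485) := by gcongr
      _ ≤ (1 + c) * (0.27352 * y + 1.8485) := by gcongr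
      _ < _ := hlt
      _ ≤ _ := by linarith
  rcases le_total y 8.4 with h | h
  -- `0.3608` is just above `1 / (4 log 2)`.
  · refine main 0.3608 ?_ ?_
    · have : 4 * Real.log 2 ≤ Real.log x := by
        have := Real.log_le_log (by norm_num) (show (2:ℝ) ^ 4 ≤ x by linarith)
        rw [Real.log_pow] at this
        exact_mod_cast this
      rw [div_le_iff₀ hlx]; linarith
    · have a1 := Chebyshev.psi_mono hy5
      have a2 := Chebyshev.psi_mono (cbrt_ge (x := x) (a := 3) (by norm_num) (by linarith))
      rw [psi_five] at a1
      rw [psi_three] at a2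
      have a3 : 25 * Real.log 2 ≤ 3 * (Real.log 60 + Real.log 6) := by
        rw [← Real.log_mul (by norm_num) (by norm_num)]
        have := Real.log_le_log (by norm_num) (show (2:ℝ) ^ 25 ≤ (60 * 6) ^ 3 by norm_num)
        rw [Real.log_pow, Real.log_pow] at this
        exact_mod_cast this
      linarith
  · have hx64 : 64 ≤ x := by nlinarith
    -- `0.2405` is just above `1 / (6 log 2)`.
    refine main 0.2405 ?_ ?_
    · have : 6 * Real.log 2 ≤ Real.log x := by
        have := Real.log_le_log (by norm_num) (show (2:ℝ) ^ 6 ≤ x by linarith)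
        rw [Real.log_pow] at this
        exact_mod_cast this
      rw [div_le_iff₀ hlx]; linarith
    · have a1 := Chebyshev.psi_ge' (x := y) (by linarith)
      have a2 := Chebyshev.psi_mono (cbrt_ge (x := x) (a := 4) (by norm_num) (by linarith))
      rw [psi_four] at a2
      -- the tangent line of `log` at `12`
      have a3 : Real.log (y + 2) ≤ Real.log 12 + ((y + 2) / 12 - 1) := by
        have := Real.log_le_sub_one_of_pos (show 0 < (y + 2) / 12 by linarith)
        rw [Real.log_div (by linarith) (by norm_num)] at this
        linarith
      nlinarith

/-- For a prime power, `Λ(p^k) / (p^k log p^k) = 1 / (k p^k)`. The prime powers up to `X` are grouped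
by their prime, and each group is completed to the full series of `-log (1 - 1/p)`. -/
lemma mertA_le (X : ℕ) : mertA X ≤
    ∑ p ∈ Finset.range (X + 1) with p.Prime, -Real.log (1 - 1 / (p:ℝ)) := by
  unfold mertA
  rw [Nat.floor_natCast]
  have h1 : ∑ n ∈ Finset.Icc 1 X, ArithmeticFunction.vonMangoldt n / (n * Real.log n) =
      ∑ n ∈ Finset.Icc 1 X with IsPrimePow n,
        ArithmeticFunction.vonMangoldt n / (n * Real.log n) := by
    rw [Finset.sum_filter]
    refine Finset.sum_congr rfl fun n _ => ?_
    split_ifs with h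
    · rfl
    · rw [ArithmeticFunction.vonMangoldt_eq_zero_iff.2 h, zero_div]
  rw [h1, ← Finset.sum_fiberwise_of_maps_to (g := Nat.minFac)
    (t := (Finset.range (X + 1)).filter Nat.Prime)]
  swap
  · intro n hn
    simp only [Finset.mem_filter, Finset.mem_Icc, Finset.mem_range] at hn ⊢
    exact ⟨by have := Nat.minFac_le hn.1.1; omega, Nat.minFac_prime hn.2.ne_one⟩
  refine Finset.sum_le_sum fun p hp => ?_
  have hpp : p.Prime := (Finset.mem_filter.1 hp).2
  have hp1 : (1:ℝ) < p := by exact_mod_cast hpp.one_lt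
  have hlp : 0 < Real.log p := Real.log_pos hp1
  have hx : |1 / (p:ℝ)| < 1 := by
    rw [abs_of_pos (by positivity), div_lt_one (by linarith)]; exact hp1
  have hs := Real.hasSum_pow_div_log_of_abs_lt_one hx
  refine le_trans ?_ (sum_le_hasSum (Finset.range X) (fun k _ => by positivity) hs)
  have hsub : ((Finset.Icc 1 X).filter IsPrimePow).filter (fun n => n.minFac = p) ⊆
      (Finset.range X).image (fun k => p ^ (k + 1)) := by
    intro n hn
    simp only [Finset.mem_filter, Finset.mem_Icc, Finset.mem_image, Finset.mem_range] at hn ⊢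
    obtain ⟨⟨⟨h1, h2⟩, h3⟩, h4⟩ := hn
    obtain ⟨q, k, hq, hk, rfl⟩ := (isPrimePow_nat_iff n).1 h3
    have hqp : q = p := by rw [← h4, hq.pow_minFac hk.ne']
    subst hqp
    refine ⟨k - 1, ?_, by rw [Nat.sub_add_cancel hk]⟩
    have := Nat.lt_pow_self hq.one_lt (n := k)
    omega
  refine (Finset.sum_le_sum_of_subset_of_nonneg hsub fun n _ _ => ?_).trans ?_
  · have := ArithmeticFunction.vonMangoldt_nonneg (n := n)
    have := Real.log_natCast_nonneg n
    positivity
  rw [Finset.sum_image (fun a _ b _ hab => by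
    have := Nat.pow_right_injective hpp.two_le hab
    omega)]
  refine Finset.sum_le_sum fun k _ => le_of_eq ?_
  rw [ArithmeticFunction.vonMangoldt_apply_pow (Nat.succ_ne_zero k),
    ArithmeticFunction.vonMangoldt_apply_prime hpp]
  push_cast
  rw [Real.log_pow]
  push_cast
  rw [one_div, inv_pow]
  field_simp

lemma theta_large {x : ℝ} (hx : 29 ≤ x) : 1 < Chebyshev.theta x := by
  have h := Chebyshev.theta_mono (show (3:ℝ) ≤ x by linarith)
  have h3 : Chebyshev.theta 3 = Real.log 6 := by
    rw [Chebyshev.theta_eq_log_primorial, show (3:ℝ) = (3:ℕ) by norm_num, Nat.floor_natCast]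
    have : primorial 3 = 6 := by decide
    rw [this]; norm_num
  have : 2 * Real.log 2 ≤ Real.log 6 := by
    have := Real.log_le_log (by norm_num) (show (2:ℝ) ^ 2 ≤ 6 by norm_num)
    rw [Real.log_pow] at this
    exact_mod_cast this
  have := Real.log_two_gt_d9
  linarith

/-- The main inequality: in `mertA_lower` the boundary term is
`(ψ(x) - θ(x)) / (x log x) + (θ(x) - x) / (x log x)`; the first summand beats the error, and the
second, added to `log log x`, bounds `log log θ(x)` from above. -/
lemma loglog_theta_lt (hRH : RiemannHypothesis) {x : ℝ} (hx : 29 ≤ x) :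
    Real.eulerMascheroniConstant + Real.log (Real.log (Chebyshev.theta x)) < mertA x := by
  have hx0 : 0 < x := by linarith
  have hl : 0 < Real.log x := Real.log_pos (by linarith)
  have hs : 0 < Real.sqrt x := Real.sqrt_pos.2 hx0
  have hss : Real.sqrt x * Real.sqrt x = x := Real.mul_self_sqrt hx0.le
  have ht := theta_large hx
  have hlt : 0 < Real.log (Chebyshev.theta x) := Real.log_pos ht
  have h1 := mertA_lower hRH (show 2 ≤ x by linarith)
  have h2 : errM x * wgt x = ((1 + 1 / Real.log x) *
      (4 * bet * Real.sqrt x + Real.log (2 * Real.pi))) / (x * Real.log x) := by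
    unfold errM wgt
    have : 4 * bet / Real.sqrt x = 4 * bet * Real.sqrt x / x := by
      rw [div_eq_div_iff hs.ne' hx0.ne', mul_assoc (4 * bet) (Real.sqrt x), hss]
    rw [this]
    field_simp
  have h3 : errM x * wgt x <
      (Chebyshev.psi x - Chebyshev.theta x) / (x * Real.log x) := by
    rw [h2]
    exact div_lt_div_of_pos_right (psi_sub_theta_large hx) (by positivity)
  -- concavity of the logarithm, applied twice
  have h4 : Real.log (Chebyshev.theta x) ≤ Real.log x + (Chebyshev.theta x - x) / x := by
    have := Real.log_le_sub_one_of_pos (show 0 < Chebyshev.theta x / x by positivity)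
    rw [Real.log_div (by linarith) hx0.ne'] at this
    have e : (Chebyshev.theta x - x) / x = Chebyshev.theta x / x - 1 := by field_simp
    linarith
  have h5 : Real.log (Real.log (Chebyshev.theta x)) ≤
      Real.log (Real.log x) + (Chebyshev.theta x - x) / (x * Real.log x) := by
    have := Real.log_le_sub_one_of_pos
      (show 0 < Real.log (Chebyshev.theta x) / Real.log x by positivity)
    rw [Real.log_div hlt.ne' hl.ne'] at this
    have e : Real.log (Chebyshev.theta x) / Real.log x - 1 ≤
        (Chebyshev.theta x - x) / (x * Real.log x) := by
      rw [← div_div, ← sub_nonneg, show (Chebyshev.theta x - x) / x / Real.log x -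
        (Real.log (Chebyshev.theta x) / Real.log x - 1) = (Real.log x +
          (Chebyshev.theta x - x) / x - Real.log (Chebyshev.theta x)) / Real.log x by
        field_simp; ring]
      exact div_nonneg (by linarith) hl.le
    linarith
  have h6 : (Chebyshev.psi x - Chebyshev.theta x) / (x * Real.log x) =
      psiErr x / (x * Real.log x) - (Chebyshev.theta x - x) / (x * Real.log x) := by
    unfold psiErr; ring
  linarith

/-! ### Primorials and the first nine cases -/

lemma primes_le_nth (k : ℕ) :
    (Finset.range (Nat.nth Nat.Prime k + 1)).filter Nat.Prime =
      (Finset.range (k + 1)).image (Nat.nth Nat.Prime) := by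
  ext p
  simp only [Finset.mem_filter, Finset.mem_range, Finset.mem_image, Nat.lt_succ_iff]
  constructor
  · rintro ⟨h1, h2⟩
    refine ⟨Nat.count Nat.Prime p, ?_, Nat.nth_count h2⟩
    rwa [← Nat.nth_le_nth Nat.infinite_setOfPred_prime, Nat.nth_count h2]
  · rintro ⟨i, h1, rfl⟩
    exact ⟨(Nat.nth_le_nth Nat.infinite_setOfPred_prime).2 h1,
      Nat.nth_mem_of_infinite Nat.infinite_setOfPred_prime i⟩

/-- `Nat.nth` counts from `0`, so the product of the first `k + 1` primes ends with `Nat.nth Prime k`. -/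
lemma primorialOfFirstPrimes_succ (k : ℕ) :
    primorialOfFirstPrimes (k + 1) = primorial (Nat.nth Nat.Prime k) := by
  unfold primorialOfFirstPrimes primorial
  rw [primes_le_nth, Finset.prod_image
    fun a _ b _ h => Nat.nth_injective Nat.infinite_setOfPred_prime h]

lemma ratio_eq (k : ℕ) :
    (primorialOfFirstPrimes k : ℝ) / (Nat.totient (primorialOfFirstPrimes k) : ℝ) =
      ∏ i ∈ Finset.range k, (1 - 1 / (Nat.nth Nat.Prime i : ℝ))⁻¹ := by
  have hinj : Set.InjOn (Nat.nth Nat.Prime) (Finset.range k : Set ℕ) :=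
    fun a _ b _ h => Nat.nth_injective Nat.infinite_setOfPred_prime h
  have hpr : ∀ i, (Nat.nth Nat.Prime i).Prime :=
    Nat.nth_mem_of_infinite Nat.infinite_setOfPred_prime
  have hN : primorialOfFirstPrimes k =
      ∏ p ∈ (Finset.range k).image (Nat.nth Nat.Prime), p := by
    rw [Finset.prod_image hinj]; rfl
  have hpf : (primorialOfFirstPrimes k).primeFactors =
      (Finset.range k).image (Nat.nth Nat.Prime) := by
    rw [hN]
    refine Nat.primeFactors_prod fun p hp => ?_
    obtain ⟨i, _, rfl⟩ := Finset.mem_image.1 hp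
    exact hpr i
  have hpos : (0:ℝ) < primorialOfFirstPrimes k := by
    exact_mod_cast Finset.prod_pos fun i _ => (hpr i).pos
  have ht : (Nat.totient (primorialOfFirstPrimes k) : ℝ) = primorialOfFirstPrimes k *
      ∏ i ∈ Finset.range k, (1 - 1 / (Nat.nth Nat.Prime i : ℝ)) := by
    have h := Nat.totient_eq_mul_prod_factors (primorialOfFirstPrimes k)
    rw [hpf, Finset.prod_image hinj] at h
    have h2 := congrArg (fun q : ℚ => (q : ℝ)) h
    push_cast at h2
    simpa only [one_div] using h2
  rw [ht, Finset.prod_inv_distrib, div_mul_eq_div_div, div_self hpos.ne', one_div]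

lemma one_sub_inv_pos {p : ℕ} (hp : p.Prime) : 0 < 1 - 1 / (p : ℝ) := by
  have : (1:ℝ) < p := by exact_mod_cast hp.one_lt
  rw [sub_pos, div_lt_one (by linarith)]; exact this

/-- `loglog_theta_lt` at `x = p`, the last prime of the product, where `θ(p)` is the logarithm of the
primorial. -/
lemma nicolas_large (hRH : RiemannHypothesis) {k : ℕ} (hk : 29 ≤ Nat.nth Nat.Prime k) :
    Real.exp Real.eulerMascheroniConstant *
      Real.log (Real.log (primorialOfFirstPrimes (k + 1) : ℝ)) <
    ∏ i ∈ Finset.range (k + 1), (1 - 1 / (Nat.nth Nat.Prime i : ℝ))⁻¹ := by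
  set X := Nat.nth Nat.Prime k
  have hX : (29:ℝ) ≤ X := by exact_mod_cast hk
  have h1 := loglog_theta_lt hRH hX
  have h2 := h1.trans_le (mertA_le X)
  have hth : Chebyshev.theta X = Real.log (primorialOfFirstPrimes (k + 1) : ℝ) := by
    rw [Chebyshev.theta_eq_log_primorial, Nat.floor_natCast, primorialOfFirstPrimes_succ]
  rw [← hth]
  have hlt : 0 < Real.log (Chebyshev.theta X) := Real.log_pos (theta_large hX)
  have hpr : ∀ i, (Nat.nth Nat.Prime i).Prime :=
    Nat.nth_mem_of_infinite Nat.infinite_setOfPred_prime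
  rw [← Real.log_lt_log_iff (by positivity)
    (Finset.prod_pos fun i _ => inv_pos.2 (one_sub_inv_pos (hpr i))),
    Real.log_mul (Real.exp_pos _).ne' hlt.ne', Real.log_exp,
    Real.log_prod fun i _ => (inv_pos.2 (one_sub_inv_pos (hpr i))).ne']
  refine h2.trans_eq ?_
  rw [primes_le_nth, Finset.sum_image
    fun a _ b _ h => Nat.nth_injective Nat.infinite_setOfPred_prime h]
  exact Finset.sum_congr rfl fun i _ => (Real.log_inv _).symm

lemma exp_gamma_le : Real.exp Real.eulerMascheroniConstant ≤ 1.948 := by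
  refine (Real.exp_le_exp.2 Real.eulerMascheroniConstant_lt_two_thirds.le).trans ?_
  refine le_of_pow_le_pow_left₀ three_ne_zero (by norm_num) ?_
  rw [← Real.exp_nat_mul, show ((3:ℕ):ℝ) * (2/3) = ((2:ℕ):ℝ) * 1 by norm_num, Real.exp_nat_mul]
  have := Real.exp_one_lt_d9
  calc Real.exp 1 ^ 2 ≤ 2.7182818286 ^ 2 := by gcongr
    _ ≤ _ := by norm_num

/-- A criterion decidable by rational arithmetic: `log N ≤ a log 2`, the logarithm of which is bounded
by the tangent line at `2 ^ m`; `log 2` and `e^γ` are replaced by decimal bounds. -/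
lemma small_bound {N : ℝ} (a m : ℕ) (hN1 : 1 < N) (hN : N ≤ 2 ^ a) {R : ℝ}
    (h0 : 0 ≤ (m:ℝ) * 0.6931471803 + a * 0.6931471803 / 2 ^ m - 1)
    (hR : 1.948 * (m * 0.6931471808 + a * 0.6931471808 / 2 ^ m - 1) < R) :
    Real.exp Real.eulerMascheroniConstant * Real.log (Real.log N) < R := by
  refine lt_of_le_of_lt ?_ hR
  have l1 := Real.log_two_lt_d9
  have l2 := Real.log_two_gt_d9
  have hl : 0 < Real.log N := Real.log_pos hN1
  have h1 : Real.log N ≤ a * Real.log 2 := by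
    rw [← Real.log_pow]; exact Real.log_le_log (by linarith) hN
  have h2 := Real.log_le_sub_one_of_pos (show 0 < Real.log N / 2 ^ m by positivity)
  rw [Real.log_div hl.ne' (by positivity), Real.log_pow] at h2
  have h3 : Real.log (Real.log N) ≤ m * 0.6931471808 + a * 0.6931471808 / 2 ^ m - 1 := by
    have h4 : Real.log N / 2 ^ m ≤ a * 0.6931471808 / 2 ^ m := by
      gcongr
      exact h1.trans (by gcongr)
    have h5 : (m:ℝ) * Real.log 2 ≤ m * 0.6931471808 := by gcongr
    linarith
  have h6 : 0 ≤ (m:ℝ) * 0.6931471808 + a * 0.6931471808 / 2 ^ m - 1 := by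
    refine h0.trans ?_
    gcongr <;> norm_num
  calc _ ≤ Real.exp Real.eulerMascheroniConstant *
        (m * 0.6931471808 + a * 0.6931471808 / 2 ^ m - 1) := by gcongr
    _ ≤ _ := by gcongr; exact exp_gamma_le

lemma nth_prime_of_count {n p : ℕ} (hp : p.Prime) (h : Nat.count Nat.Prime p = n) :
    Nat.nth Nat.Prime n = p := by
  rw [← h]; exact Nat.nth_count hp

/-- **Theorem 2(i) (Nicolas).** If the Riemann Hypothesis is true, then
`N_k / φ(N_k) > e^γ log log N_k` for all `k ≥ 1`. -/
theorem nicolas_of_riemannHypothesis (hRH : RiemannHypothesis) :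
    ∀ k : ℕ, 1 ≤ k →
      (primorialOfFirstPrimes k : ℝ) / (Nat.totient (primorialOfFirstPrimes k) : ℝ) >
        Real.exp Real.eulerMascheroniConstant *
          Real.log (Real.log (primorialOfFirstPrimes k : ℝ)) := by
  intro k hk
  rw [ratio_eq]
  have p0 : Nat.nth Nat.Prime 0 = 2 := nth_prime_of_count (by norm_num) (by decide)
  have p1 : Nat.nth Nat.Prime 1 = 3 := nth_prime_of_count (by norm_num) (by decide)
  have p2 : Nat.nth Nat.Prime 2 = 5 := nth_prime_of_count (by norm_num) (by decide)
  have p3 : Nat.nth Nat.Prime 3 = 7 := nth_prime_of_count (by norm_num) (by decide)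
  have p4 : Nat.nth Nat.Prime 4 = 11 := nth_prime_of_count (by norm_num) (by decide)
  have p5 : Nat.nth Nat.Prime 5 = 13 := nth_prime_of_count (by norm_num) (by decide)
  have p6 : Nat.nth Nat.Prime 6 = 17 := nth_prime_of_count (by norm_num) (by decide)
  have p7 : Nat.nth Nat.Prime 7 = 19 := nth_prime_of_count (by norm_num) (by decide)
  have p8 : Nat.nth Nat.Prime 8 = 23 := nth_prime_of_count (by norm_num) (by decide)
  have p9 : Nat.nth Nat.Prime 9 = 29 := nth_prime_of_count (by norm_num) (by decide)
  -- `29` is the tenth prime, so `nicolas_large` covers `k ≥ 10`.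
  rcases Nat.lt_or_ge k 10 with h | h
  · unfold primorialOfFirstPrimes
    interval_cases k
    -- `2 ^ a` bounds the primorial, and `2 ^ m` is the point at which `log` is linearised
    · refine small_bound 2 1 ?_ ?_ ?_ ?_ <;>
        norm_num [Finset.prod_range_succ, p0]
    · refine small_bound 3 1 ?_ ?_ ?_ ?_ <;>
        norm_num [Finset.prod_range_succ, p0, p1]
    · refine small_bound 8 2 ?_ ?_ ?_ ?_ <;>
        norm_num [Finset.prod_range_succ, p0, p1, p2]
    · refine small_bound 8 2 ?_ ?_ ?_ ?_ <;>
        norm_num [Finset.prod_range_succ, p0, p1, p2, p3]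
    · refine small_bound 15 3 ?_ ?_ ?_ ?_ <;>
        norm_num [Finset.prod_range_succ, p0, p1, p2, p3, p4]
    · refine small_bound 15 3 ?_ ?_ ?_ ?_ <;>
        norm_num [Finset.prod_range_succ, p0, p1, p2, p3, p4, p5]
    · refine small_bound 24 4 ?_ ?_ ?_ ?_ <;>
        norm_num [Finset.prod_range_succ, p0, p1, p2, p3, p4, p5, p6]
    · refine small_bound 24 4 ?_ ?_ ?_ ?_ <;>
        norm_num [Finset.prod_range_succ, p0, p1, p2, p3, p4, p5, p6, p7]
    · refine small_bound 28 4 ?_ ?_ ?_ ?_ <;>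
        norm_num [Finset.prod_range_succ, p0, p1, p2, p3, p4, p5, p6, p7, p8]
  · obtain ⟨j, rfl⟩ : ∃ j, k = j + 1 := ⟨k - 1, by omega⟩
    refine nicolas_large hRH ?_
    rw [← p9]
    exact (Nat.nth_le_nth Nat.infinite_setOfPred_prime).2 (by omega)
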